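/- Let a be a ribbon with n ≥ 4 nodes p_1, …, p_n in cyclic order whose levels l_i = φ(p_i), when listed in increasing order, are l_1, l_3, l_2, l_5, l_4, l_7, l_6, …, l_{n−1}, l_{n−2}, l_n (so the cyclic sequence of levels realizes the zig-zag permutation (1, 3, 2, 5, 4, 7, 6, …, n−2, n); such a ribbon is a ladder, with p_1 its value-minimal node and p_n its value-maximal node). Suppose the minimal node p_1 and the maximal node p_n are positive: ν(p_1) = ν(p_n) = +1. Then γ(a) equals the number of indices k ∈ {1, …, n/2 − 1} with ν(p_{2k}) = ν(p_{2k+1}). -/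

import Mathlib

open scoped RealInnerProductSpace

noncomputable section

abbrev E2 : Type := EuclideanSpace ℝ (Fin 2)

/-- The point (cos t, sin t) on the unit circle in ℝ². -/
def sphPt (t : ℝ) : E2 := (EuclideanSpace.equiv (Fin 2) ℝ).symm ![Real.cos t, Real.sin t]

/-- A ribbon with `n` nodes, encoded via the angle parametrization `g = φ ∘ (cos, sin)`
of a C^∞ function `φ : S¹ → ℝ` whose critical points on the circle are exactly the `n`
nondegenerate local extrema (nodes) at angles `θ 0 < θ 1 < ⋯ < θ (n-1)` in `[0, 2π)`,
with pairwise distinct critical values, together with a marking `ν` of the nodes by `±1`. -/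
structure Ribbon (n : ℕ) : Type where
  g : ℝ → ℝ
  θ : Fin n → ℝ
  ν : Fin n → ℤ
  n_even : Even n
  n_pos : 0 < n
  smooth_g : ContDiff ℝ (⊤ : ℕ∞) g
  periodic_g : Function.Periodic g (2 * Real.pi)
  theta_mem : ∀ i, θ i ∈ Set.Ico (0 : ℝ) (2 * Real.pi)
  theta_mono : StrictMono θ
  node_crit : ∀ i, deriv g (θ i) = 0
  node_nondeg : ∀ i, deriv (deriv g) (θ i) ≠ 0
  crit_only : ∀ t ∈ Set.Ico (0 : ℝ) (2 * Real.pi), deriv g t = 0 → ∃ i, t = θ i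
  values_distinct : ∀ i j, g (θ i) = g (θ j) → i = j
  nu_sign : ∀ i, ν i = 1 ∨ ν i = -1

/-- The signature σ = s₊ − s₋ of a ribbon. -/
def Ribbon.sigma {n : ℕ} (a : Ribbon n) : ℤ := ∑ i, a.ν i

/-- Critical points of `f` in the open unit disk. -/
def critPts (f : E2 → ℝ) : Set E2 :=
  {x | x ∈ Metric.ball (0 : E2) 1 ∧ fderiv ℝ f x = 0}

/-- `f : ℝ² → ℝ` is an extension of the ribbon `a`: it is C^∞, agrees with `φ` on the unit
circle, has nowhere-vanishing gradient on the circle, and at each node the radial derivative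
`⟪∇f(p), p⟫` has sign `ν p` if `p` is a local maximum of `φ` (second derivative of `g`
negative there) and sign `−ν p` if `p` is a local minimum of `φ`. -/
def IsExtension {n : ℕ} (a : Ribbon n) (f : E2 → ℝ) : Prop :=
  ContDiff ℝ (⊤ : ℕ∞) f ∧
  (∀ t : ℝ, f (sphPt t) = a.g t) ∧
  (∀ x ∈ Metric.sphere (0 : E2) 1, fderiv ℝ f x ≠ 0) ∧
  (∀ i : Fin n,
    (deriv (deriv a.g) (a.θ i) < 0 →
      0 < (a.ν i : ℝ) * ⟪gradient f (sphPt (a.θ i)), sphPt (a.θ i)⟫) ∧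
    (0 < deriv (deriv a.g) (a.θ i) →
      (a.ν i : ℝ) * ⟪gradient f (sphPt (a.θ i)), sphPt (a.θ i)⟫ < 0))

/-- The ribbon invariant γ: the infimum, over all extensions `f` of `a`, of the number of
critical points of `f` in the open unit disk (a value in `ℕ∞`). -/
def gammaR {n : ℕ} (a : Ribbon n) : ℕ∞ :=
  sInf {k : ℕ∞ | ∃ f : E2 → ℝ, IsExtension a f ∧ (critPts f).encard = k}

/-- The position-to-index map of the ladder: the levels of a ladder, listed in increasing
order, are `l 0, l 2, l 1, l 4, l 3, …, l (n−2), l (n−3), l (n−1)` (0-indexed), i.e. the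
level occupying position `j` in increasing order is that of the node `zigFin n j`. -/
def zigFin (n : ℕ) (j : Fin n) : Fin n :=
  if _h0 : (j : ℕ) = 0 then j
  else if _h1 : (j : ℕ) = n - 1 then j
  else if _h2 : (j : ℕ) % 2 = 1 then ⟨(j : ℕ) + 1, by have := j.isLt; omega⟩
  else ⟨(j : ℕ) - 1, by have := j.isLt; omega⟩


/-- Abstract ladder data. -/
structure Lad (g : ℝ → ℝ) (K : ℕ) (th : ℕ → ℝ) : Prop where
  smooth : ContDiff ℝ (⊤ : ℕ∞) g
  per : Function.Periodic g (2 * Real.pi)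
  mono : ∀ i, i < 2 * K + 1 → th i < th (i + 1)
  last : th (2 * K + 1) < th 0 + 2 * Real.pi
  up : ∀ k, k ≤ K → ∀ t ∈ Set.Ioo (th (2 * k)) (th (2 * k + 1)), 0 < deriv g t
  down : ∀ k, k < K → ∀ t ∈ Set.Ioo (th (2 * k + 1)) (th (2 * k + 2)), deriv g t < 0
  down_last : ∀ t ∈ Set.Ioo (th (2 * K + 1)) (th 0 + 2 * Real.pi), deriv g t < 0
  crit : ∀ i, i < 2 * K + 2 → deriv g (th i) = 0
  snd_even : ∀ k, k ≤ K → 0 < deriv (deriv g) (th (2 * k))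
  snd_odd : ∀ k, k ≤ K → deriv (deriv g) (th (2 * k + 1)) < 0
  lev_pair : ∀ k, k < K → g (th (2 * k + 2)) < g (th (2 * k + 1))
  lev_next : ∀ k, k + 1 < K → g (th (2 * k + 1)) < g (th (2 * k + 4))
  lev_zero : 0 < K → g (th 0) < g (th 2)
  lev_last : ∀ k, k + 1 = K → g (th (2 * k + 1)) < g (th (2 * K + 1))

lemma deriv_pos_of_ne {g : ℝ → ℝ} (hg : Differentiable ℝ g) {a b : ℝ} (hab : a < b)
    (hne : ∀ t ∈ Set.Ioo a b, deriv g t ≠ 0) (hlt : g a < g b) :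
    ∀ t ∈ Set.Ioo a b, 0 < deriv g t := by
  rcases hasDerivWithinAt_forall_lt_or_forall_gt_of_forall_ne (f := g) (s := Set.Ioo a b) (f' := deriv g)
    (convex_Ioo a b) (fun x _ => (hg x).hasDerivAt.hasDerivWithinAt) (m := 0) hne with h | h
  · exfalso
    have := strictAntiOn_of_deriv_neg (convex_Icc a b) hg.continuous.continuousOn
      (by simpa using h)
    have := this (Set.left_mem_Icc.2 hab.le) (Set.right_mem_Icc.2 hab.le) hab
    linarith
  · exact h

lemma deriv_neg_of_ne {g : ℝ → ℝ} (hg : Differentiable ℝ g) {a b : ℝ} (hab : a < b)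
    (hne : ∀ t ∈ Set.Ioo a b, deriv g t ≠ 0) (hlt : g b < g a) :
    ∀ t ∈ Set.Ioo a b, deriv g t < 0 := by
  rcases hasDerivWithinAt_forall_lt_or_forall_gt_of_forall_ne (f := g) (s := Set.Ioo a b) (f' := deriv g)
    (convex_Ioo a b) (fun x _ => (hg x).hasDerivAt.hasDerivWithinAt) (m := 0) hne with h | h
  · exact h
  · exfalso
    have := strictMonoOn_of_deriv_pos (convex_Icc a b) hg.continuous.continuousOn
      (by simpa using h)
    have := this (Set.left_mem_Icc.2 hab.le) (Set.right_mem_Icc.2 hab.le) hab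
    linarith

lemma snd_pos_of {u : ℝ → ℝ} {a b : ℝ} (hu : DifferentiableAt ℝ u a) (hab : a < b)
    (h0 : u a = 0) (hpos : ∀ t ∈ Set.Ioo a b, 0 < u t) (hne : deriv u a ≠ 0) : 0 < deriv u a := by
  refine lt_of_le_of_ne ?_ hne.symm
  have h1 := (hasDerivAt_iff_tendsto_slope.1 hu.hasDerivAt).mono_left
    (nhdsWithin_mono a (s := Set.Ioi a) (fun x hx => ne_of_gt hx))
  refine ge_of_tendsto h1 ?_
  filter_upwards [Ioo_mem_nhdsGT hab] with t ht
  rw [slope_def_field, h0]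
  have := hpos t ht
  have := ht.1
  apply div_nonneg <;> linarith

lemma snd_neg_of {u : ℝ → ℝ} {a b : ℝ} (hu : DifferentiableAt ℝ u b) (hab : a < b)
    (h0 : u b = 0) (hpos : ∀ t ∈ Set.Ioo a b, 0 < u t) (hne : deriv u b ≠ 0) : deriv u b < 0 := by
  refine lt_of_le_of_ne ?_ hne
  have h1 := (hasDerivAt_iff_tendsto_slope.1 hu.hasDerivAt).mono_left
    (nhdsWithin_mono b (s := Set.Iio b) (fun x hx => ne_of_lt hx))
  refine le_of_tendsto h1 ?_
  filter_upwards [Ioo_mem_nhdsLT hab] with t ht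
  rw [slope_def_field, h0]
  have := hpos t ht
  have := ht.2
  apply div_nonpos_of_nonneg_of_nonpos <;> linarith

lemma deriv_smooth {g : ℝ → ℝ} (hg : ContDiff ℝ (⊤ : ℕ∞) g) :
    ContDiff ℝ (⊤ : ℕ∞) (deriv g) := by
  have : ContDiff ℝ ((⊤ : ℕ∞) + 1) g := by simpa using hg
  exact (contDiff_succ_iff_deriv.1 this).2.2

lemma deriv_periodic {g : ℝ → ℝ} {c : ℝ} (h : Function.Periodic g c) :
    Function.Periodic (deriv g) c := by
  intro x
  have : (fun y => g (y + c)) = g := funext h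
  rw [← deriv_comp_add_const, this]

def thN {n : ℕ} (a : Ribbon n) (i : ℕ) : ℝ := if h : i < n then a.θ ⟨i, h⟩ else 0

lemma ribbon_lad {n K : ℕ} (hn : n = 2 * K + 2) (hK : 0 < K) (a : Ribbon n)
    (hladder : StrictMono (fun j : Fin n => a.g (a.θ (zigFin n j)))) : Lad a.g K (thN a) := by
  have hth : ∀ i (h : i < n), thN a i = a.θ ⟨i, h⟩ := fun i h => by simp [thN, h]
  have hd : Differentiable ℝ a.g := a.smooth_g.differentiable (by simp)
  have hd2 : Differentiable ℝ (deriv a.g) := (deriv_smooth a.smooth_g).differentiable (by simp)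
  have hmono : ∀ i, i < 2 * K + 1 → thN a i < thN a (i + 1) := by
    intro i hi
    rw [hth i (by omega), hth (i+1) (by omega)]
    exact a.theta_mono (by simp [Fin.lt_def])
  -- level via positions
  have hlev : ∀ i j (hi : i < n) (hj : j < n), i < j →
      a.g (a.θ (zigFin n ⟨i, hi⟩)) < a.g (a.θ (zigFin n ⟨j, hj⟩)) :=
    fun i j hi hj hij => hladder (by simpa [Fin.lt_def] using hij)
  have z0 : ∀ h : 0 < n, a.θ (zigFin n ⟨0, h⟩) = thN a 0 := by
    intro h; rw [hth 0 h]; simp [zigFin]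
  have zl : ∀ h : 2 * K + 1 < n, a.θ (zigFin n ⟨2 * K + 1, h⟩) = thN a (2 * K + 1) := by
    intro h; rw [hth _ h]; congr 1
    unfold zigFin
    rw [dif_neg (by simp), dif_pos (by simp; omega)]
  have zo : ∀ k, k < K → ∀ h : 2 * k + 1 < n,
      a.θ (zigFin n ⟨2 * k + 1, h⟩) = thN a (2 * k + 2) := by
    intro k hk h; rw [hth _ (by omega)]; congr 1
    unfold zigFin
    rw [dif_neg (by simp), dif_neg (by simp; omega), dif_pos (by simp)]
  have ze : ∀ k, k < K → ∀ h : 2 * k + 2 < n,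
      a.θ (zigFin n ⟨2 * k + 2, h⟩) = thN a (2 * k + 1) := by
    intro k hk h; rw [hth _ (by omega)]; congr 1
    unfold zigFin
    rw [dif_neg (by simp), dif_neg (by simp; omega), dif_neg (by simp)]
    simp
  have lev_pair : ∀ k, k < K → a.g (thN a (2 * k + 2)) < a.g (thN a (2 * k + 1)) := by
    intro k hk
    have := hlev (2 * k + 1) (2 * k + 2) (by omega) (by omega) (by omega)
    rwa [zo k hk, ze k hk] at this
  have lev_next : ∀ k, k + 1 < K → a.g (thN a (2 * k + 1)) < a.g (thN a (2 * k + 4)) := by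
    intro k hk
    have := hlev (2 * k + 2) (2 * (k + 1) + 1) (by omega) (by omega) (by omega)
    rwa [zo (k + 1) hk, ze k (by omega)] at this
  have lev_zero : 0 < K → a.g (thN a 0) < a.g (thN a 2) := by
    intro hk
    have := hlev 0 (2 * 0 + 1) (by omega) (by omega) (by omega)
    rwa [zo 0 hk, z0] at this
  have lev_last : ∀ k, k + 1 = K → a.g (thN a (2 * k + 1)) < a.g (thN a (2 * K + 1)) := by
    intro k hk
    have := hlev (2 * k + 2) (2 * K + 1) (by omega) (by omega) (by omega)
    rwa [zl, ze k (by omega)] at this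
  have hne : ∀ i, i < 2 * K + 1 → ∀ t ∈ Set.Ioo (thN a i) (thN a (i + 1)), deriv a.g t ≠ 0 := by
    intro i hi t ht h0
    rw [hth i (by omega), hth (i+1) (by omega)] at ht
    obtain ⟨j, rfl⟩ := a.crit_only t ⟨(a.theta_mem _).1.trans ht.1.le, ht.2.trans (a.theta_mem _).2⟩ h0
    have h1 := a.theta_mono.lt_iff_lt.1 ht.1
    have h2 := a.theta_mono.lt_iff_lt.1 ht.2
    simp only [Fin.lt_def] at h1 h2
    omega
  have hup : ∀ k, k ≤ K → a.g (thN a (2 * k)) < a.g (thN a (2 * k + 1)) := by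
    intro k hk
    have h1 : 1 ≤ k → k < K → a.g (thN a (2 * k)) < a.g (thN a (2 * k + 1)) := by
      intro h1 h2
      obtain ⟨m, rfl⟩ : ∃ m, k = m + 1 := ⟨k - 1, by omega⟩
      have e1 := lev_pair m (by omega)
      have e2 := lev_next m (by omega)
      have e3 := lev_pair (m + 1) h2
      have r1 : 2 * (m + 1) = 2 * m + 2 := by ring
      have r2 : 2 * (m + 1) + 2 = 2 * m + 4 := by ring
      rw [r2] at e3; rw [r1] at e3 ⊢
      linarith
    rcases Nat.eq_zero_or_pos k with rfl | hk0
    · have := lev_zero hK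
      have := lev_pair 0 hK
      simp only [Nat.mul_zero, Nat.zero_add] at *
      linarith
    · rcases hk.lt_or_eq with hk1 | rfl
      · exact h1 hk0 hk1
      · obtain ⟨m, rfl⟩ : ∃ m, k = m + 1 := ⟨k - 1, by omega⟩
        have e1 := lev_pair m (by omega)
        have e2 := lev_last m rfl
        have r1 : 2 * (m + 1) = 2 * m + 2 := by ring
        rw [r1] at e2 ⊢
        linarith
  have hglob : a.g (thN a 0) < a.g (thN a (2 * K + 1)) := by
    have := hlev 0 (2 * K + 1) (by omega) (by omega) (by omega)
    rwa [zl, z0] at this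
  have hlast : thN a (2 * K + 1) < thN a 0 + 2 * Real.pi := by
    rw [hth _ (by omega), hth 0 (by omega)]
    have h1 := (a.theta_mem ⟨2 * K + 1, by omega⟩).2
    have h2 := (a.theta_mem ⟨0, by omega⟩).1
    linarith
  have up : ∀ k, k ≤ K → ∀ t ∈ Set.Ioo (thN a (2 * k)) (thN a (2 * k + 1)), 0 < deriv a.g t :=
    fun k hk => deriv_pos_of_ne hd (hmono _ (by omega)) (hne _ (by omega)) (hup k hk)
  have hcrit : ∀ i, i < 2 * K + 2 → deriv a.g (thN a i) = 0 := fun i hi => by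
    rw [hth i (by omega)]; exact a.node_crit _
  have hnd : ∀ i, i < 2 * K + 2 → deriv (deriv a.g) (thN a i) ≠ 0 := fun i hi => by
    rw [hth i (by omega)]; exact a.node_nondeg _
  refine ⟨a.smooth_g, a.periodic_g, hmono, hlast, up, ?_, ?_, hcrit, ?_, ?_,
    lev_pair, lev_next, lev_zero, lev_last⟩
  · intro k hk
    exact deriv_neg_of_ne hd (hmono _ (by omega)) (hne _ (by omega)) (lev_pair k hk)
  · refine deriv_neg_of_ne hd hlast ?_ (by rw [a.periodic_g]; exact hglob)
    intro t ht h0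
    rw [hth _ (by omega), hth 0 (by omega)] at ht
    rcases lt_or_ge t (2 * Real.pi) with h | h
    · obtain ⟨j, rfl⟩ := a.crit_only t ⟨(a.theta_mem _).1.trans ht.1.le, h⟩ h0
      have h1 := a.theta_mono.lt_iff_lt.1 ht.1
      simp only [Fin.lt_def] at h1
      omega
    · have h3 := (a.theta_mem ⟨0, by omega⟩).2
      have h4 : deriv a.g (t - 2 * Real.pi) = 0 := by
        rw [← h0, (deriv_periodic a.periodic_g).sub_eq]
      obtain ⟨j, hj⟩ := a.crit_only (t - 2 * Real.pi) ⟨by linarith, by linarith [ht.2]⟩ h4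
      have h1 := a.theta_mono.lt_iff_lt.1 (show a.θ j < a.θ ⟨0, by omega⟩ by rw [← hj]; linarith [ht.2])
      simp only [Fin.lt_def] at h1
      omega
  · intro k hk
    exact snd_pos_of (hd2 _) (hmono _ (by omega)) (hcrit _ (by omega)) (up k hk) (hnd _ (by omega))
  · intro k hk
    exact snd_neg_of (hd2 _) (hmono _ (by omega)) (hcrit _ (by omega)) (up k hk) (hnd _ (by omega))

namespace Lad
variable {g : ℝ → ℝ} {K : ℕ} {th : ℕ → ℝ}

lemma lt_of_lt (h : Lad g K th) {i j : ℕ} (hij : i < j) (hj : j ≤ 2 * K + 1) : th i < th j := by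
  induction j with
  | zero => omega
  | succ j ih =>
    rcases Nat.lt_succ_iff_lt_or_eq.1 hij with h1 | rfl
    · exact (ih h1 (by omega)).trans (h.mono j (by omega))
    · exact h.mono i (by omega)

lemma le_of_le (h : Lad g K th) {i j : ℕ} (hij : i ≤ j) (hj : j ≤ 2 * K + 1) : th i ≤ th j := by
  rcases hij.lt_or_eq with h1 | rfl
  · exact (h.lt_of_lt h1 hj).le
  · exact le_rfl

lemma diff (h : Lad g K th) : Differentiable ℝ g := h.smooth.differentiable (by simp)
lemma diff2 (h : Lad g K th) : Differentiable ℝ (deriv g) :=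
  (deriv_smooth h.smooth).differentiable (by simp)

lemma monoOn (h : Lad g K th) {k : ℕ} (hk : k ≤ K) :
    StrictMonoOn g (Set.Icc (th (2 * k)) (th (2 * k + 1))) :=
  strictMonoOn_of_deriv_pos (convex_Icc _ _) h.diff.continuous.continuousOn
    (by simpa using h.up k hk)

lemma antiOn (h : Lad g K th) {k : ℕ} (hk : k < K) :
    StrictAntiOn g (Set.Icc (th (2 * k + 1)) (th (2 * k + 2))) :=
  strictAntiOn_of_deriv_neg (convex_Icc _ _) h.diff.continuous.continuousOn
    (by simpa using h.down k hk)

lemma antiOn_last (h : Lad g K th) :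
    StrictAntiOn g (Set.Icc (th (2 * K + 1)) (th 0 + 2 * Real.pi)) :=
  strictAntiOn_of_deriv_neg (convex_Icc _ _) h.diff.continuous.continuousOn
    (by simpa using h.down_last)

/-- every point of the zigzag strand lies in a segment -/
lemma exists_seg (h : Lad g K th) {t : ℝ} (h0 : th 0 ≤ t) (h1 : t ≤ th (2 * K + 1)) :
    (∃ k ≤ K, t ∈ Set.Icc (th (2 * k)) (th (2 * k + 1))) ∨
    (∃ k < K, t ∈ Set.Ioo (th (2 * k + 1)) (th (2 * k + 2))) := by
  have key : ∀ N, N ≤ K → t ≤ th (2 * N + 1) →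
    (∃ k ≤ N, t ∈ Set.Icc (th (2 * k)) (th (2 * k + 1))) ∨
    (∃ k < N, t ∈ Set.Ioo (th (2 * k + 1)) (th (2 * k + 2))) := by
    intro N
    induction N with
    | zero => intro _ ht; left; exact ⟨0, le_rfl, by simpa using h0, by simpa using ht⟩
    | succ N ih =>
      intro hN ht
      rcases le_or_gt t (th (2 * N + 1)) with h2 | h2
      · rcases ih (by omega) h2 with ⟨k, hk, hh⟩ | ⟨k, hk, hh⟩
        · left; exact ⟨k, by omega, hh⟩
        · right; exact ⟨k, by omega, hh⟩
      · rcases lt_or_ge t (th (2 * N + 2)) with h3 | h3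
        · right; exact ⟨N, by omega, h2, h3⟩
        · left; exact ⟨N + 1, le_rfl, h3, ht⟩
  rcases key K le_rfl h1 with ⟨k, hk, hh⟩ | ⟨k, hk, hh⟩
  · left; exact ⟨k, hk, hh⟩
  · right; exact ⟨k, hk, hh⟩

lemma lev_up (h : Lad g K th) {k : ℕ} (hk : k ≤ K) : g (th (2 * k)) < g (th (2 * k + 1)) := by
  have := h.mono (2 * k) (by omega)
  exact h.monoOn hk (Set.left_mem_Icc.2 this.le) (Set.right_mem_Icc.2 this.le) this

lemma odd_lt (h : Lad g K th) {k : ℕ} (hk : k < K) :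
    g (th (2 * k + 1)) < g (th (2 * k + 3)) := by
  rcases Nat.lt_or_ge (k + 1) K with h1 | h1
  · have := h.lev_next k h1
    have := h.lev_pair (k + 1) h1
    have r : 2 * (k + 1) + 2 = 2 * k + 4 := by ring
    have r2 : 2 * (k + 1) + 1 = 2 * k + 3 := by ring
    rw [r, r2] at this
    linarith
  · have e : k + 1 = K := by omega
    have := h.lev_last k e
    have r2 : 2 * K + 1 = 2 * k + 3 := by omega
    rwa [r2] at this

lemma even_lt (h : Lad g K th) {k : ℕ} (hk : k < K) :
    g (th (2 * k)) < g (th (2 * k + 2)) := by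
  rcases Nat.eq_zero_or_pos k with rfl | h1
  · exact h.lev_zero hk
  · obtain ⟨m, rfl⟩ : ∃ m, k = m + 1 := ⟨k - 1, by omega⟩
    have := h.lev_pair m (by omega)
    have := h.lev_next m (by omega)
    have r : 2 * (m + 1) + 2 = 2 * m + 4 := by ring
    have r2 : 2 * (m + 1) = 2 * m + 2 := by ring
    rw [r, r2]
    linarith

lemma odd_le (h : Lad g K th) {j k : ℕ} (hjk : j ≤ k) (hk : k ≤ K) :
    g (th (2 * j + 1)) ≤ g (th (2 * k + 1)) := by
  induction k with
  | zero => obtain rfl : j = 0 := by omega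
            exact le_rfl
  | succ k ih =>
    rcases hjk.lt_or_eq with h1 | rfl
    · exact (ih (by omega) (by omega)).trans (h.odd_lt (by omega)).le
    · exact le_rfl

lemma even_le (h : Lad g K th) {j k : ℕ} (hjk : j ≤ k) (hk : k ≤ K) :
    g (th (2 * j)) ≤ g (th (2 * k)) := by
  induction k with
  | zero => obtain rfl : j = 0 := by omega
            exact le_rfl
  | succ k ih =>
    rcases hjk.lt_or_eq with h1 | rfl
    · exact (ih (by omega) (by omega)).trans (h.even_lt (by omega)).le
    · exact le_rfl

lemma pair_lt (h : Lad g K th) {j k : ℕ} (hjk : j < k) (hk : k < K) :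
    g (th (2 * j + 1)) < g (th (2 * k + 2)) := by
  have h1 := h.lev_next j (by omega)
  have h2 := h.even_le (j := j + 2) (k := k + 1) (by omega) (by omega)
  have r : 2 * (j + 2) = 2 * j + 4 := by ring
  have r2 : 2 * (k + 1) = 2 * k + 2 := by ring
  rw [r, r2] at h2
  linarith

/-- values before `m_k` are below `M_k` -/
lemma le_odd (h : Lad g K th) {k : ℕ} (hk : k ≤ K) {t : ℝ} (h0 : th 0 ≤ t)
    (h1 : t ≤ th (2 * k + 1)) : g t ≤ g (th (2 * k + 1)) := by
  have hb : t ≤ th (2 * K + 1) := h1.trans (h.le_of_le (by omega) le_rfl)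
  rcases h.exists_seg h0 hb with ⟨j, hj, ht⟩ | ⟨j, hj, ht⟩
  · rcases le_or_gt j k with hjk | hjk
    · exact ((h.monoOn hj).monotoneOn ht (Set.right_mem_Icc.2 (ht.1.trans ht.2)) ht.2).trans
        (h.odd_le hjk hk)
    · have := h.lt_of_lt (i := 2 * k + 1) (j := 2 * j) (by omega) (by omega)
      linarith [ht.1]
  · rcases le_or_gt j k with hjk | hjk
    · exact ((h.antiOn hj).antitoneOn (Set.left_mem_Icc.2 (ht.1.trans ht.2).le)
        (Set.Ioo_subset_Icc_self ht) ht.1.le).trans (h.odd_le hjk hk)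
    · have := h.lt_of_lt (i := 2 * k + 1) (j := 2 * j + 1) (by omega) (by omega)
      linarith [ht.1]

lemma ge_even (h : Lad g K th) {k : ℕ} (hk : k ≤ K) {t : ℝ} (h0 : th (2 * k) ≤ t)
    (h1 : t ≤ th (2 * K + 1)) : g (th (2 * k)) ≤ g t := by
  have hb : th 0 ≤ t := le_trans (h.le_of_le (by omega) (by omega)) h0
  rcases h.exists_seg hb h1 with ⟨j, hj, ht⟩ | ⟨j, hj, ht⟩
  · rcases le_or_gt k j with hjk | hjk
    · exact (h.even_le hjk hj).trans ((h.monoOn hj).monotoneOn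
        (Set.left_mem_Icc.2 (ht.1.trans ht.2)) ht ht.1)
    · have := h.lt_of_lt (i := 2 * j + 1) (j := 2 * k) (by omega) (by omega)
      linarith [ht.2]
  · rcases le_or_gt k (j + 1) with hjk | hjk
    · refine (h.even_le hjk hj).trans ((h.antiOn hj).antitoneOn (Set.Ioo_subset_Icc_self ht)
        (Set.right_mem_Icc.2 (ht.1.trans ht.2).le) ht.2.le)
    · have := h.lt_of_lt (i := 2 * j + 2) (j := 2 * k) (by omega) (by omega)
      linarith [ht.2]

end Lad


lemma side_aux {h : ℝ → ℝ} (hc : Continuous h) {c x y : ℝ} {k l : ℤ}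
    (hpos : ∀ t, 0 < Real.cos (h t - c))
    (h0 : h 0 = c + x + 2 * Real.pi * k) (h1 : h 1 = c + y + 2 * Real.pi * l)
    (hx : |x| < Real.pi / 2) (hy : |y| < Real.pi / 2) : k = l := by
  rw [abs_lt] at hx hy
  have key : ∀ v : ℝ, v ∈ Set.uIcc (h 0) (h 1) → Real.cos (v - c) ≠ 0 := by
    intro v hv
    obtain ⟨t, -, rfl⟩ := intermediate_value_uIcc (hc.continuousOn (s := Set.uIcc 0 1)) hv
    exact (hpos t).ne'
  have hcos : ∀ k : ℤ, Real.cos (c + Real.pi / 2 + 2 * Real.pi * k - c) = 0 := by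
    intro k
    have : c + Real.pi / 2 + 2 * Real.pi * k - c = Real.pi / 2 + k * (2 * Real.pi) := by ring
    rw [this, Real.cos_add_int_mul_two_pi, Real.cos_pi_div_two]
  have hpi := Real.pi_pos
  rcases lt_trichotomy k l with hkl | hkl | hkl
  · exfalso
    refine key _ ?_ (hcos k)
    have : (k : ℝ) + 1 ≤ l := by exact_mod_cast hkl
    rw [Set.mem_uIcc]; left
    constructor <;> nlinarith
  · exact hkl
  · exfalso
    refine key _ ?_ (hcos l)
    have : (l : ℝ) + 1 ≤ k := by exact_mod_cast hkl
    rw [Set.mem_uIcc]; right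
    constructor <;> nlinarith

lemma circ_sub (A B : ℝ) : Complex.exp (A * Complex.I) - Complex.exp (B * Complex.I) =
    Complex.exp (((A + B) / 2 - Real.pi / 2 : ℝ) * Complex.I) * (2 * Real.sin ((B - A) / 2) : ℝ) := by
  apply Complex.ext
  · have e1 : A = (A + B) / 2 - (B - A) / 2 := by ring
    have e2 : B = (A + B) / 2 + (B - A) / 2 := by ring
    simp only [Complex.sub_re, Complex.exp_ofReal_mul_I_re, Complex.re_mul_ofReal,
      Real.cos_sub_pi_div_two]
    conv_lhs => rw [e1]
    conv_lhs => enter [2]; rw [e2]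
    rw [Real.cos_sub, Real.cos_add]; ring
  · have e1 : A = (A + B) / 2 - (B - A) / 2 := by ring
    have e2 : B = (A + B) / 2 + (B - A) / 2 := by ring
    simp only [Complex.sub_im, Complex.exp_ofReal_mul_I_im, Complex.im_mul_ofReal,
      Real.sin_sub_pi_div_two]
    conv_lhs => rw [e1]
    conv_lhs => enter [2]; rw [e2]
    rw [Real.sin_sub, Real.sin_add]; ring

lemma arg_of_exp_eq {z : ℂ} {x r : ℝ} (hr : 0 < r)
    (h : Complex.exp z = Complex.exp (x * Complex.I) * r) :
    ∃ k : ℤ, z.im = x + 2 * Real.pi * k := by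
  have : Complex.exp z = Complex.exp (x * Complex.I + Real.log r) := by
    rw [h, Complex.exp_add, ← Complex.ofReal_exp, Real.exp_log hr]
  obtain ⟨k, hk⟩ := Complex.exp_eq_exp_iff_exists_int.1 this
  refine ⟨k, ?_⟩
  rw [hk]
  simp
  ring

/-- difference of a unit vector and a different vector in the closed disc lies in a half plane -/
lemma half_plane {z w : ℂ} {c : ℝ} (hw : ‖w‖ ≤ 1) (hne : Complex.exp (c * Complex.I) - w ≠ 0)
    (hz : Complex.exp z = Complex.exp (c * Complex.I) - w) : 0 < Real.cos (z.im - c) := by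
  have h1 : Real.exp z.re * Real.cos z.im = Real.cos c - w.re := by
    have := congrArg Complex.re hz
    simpa [Complex.exp_re, Complex.exp_ofReal_mul_I_re] using this
  have h2 : Real.exp z.re * Real.sin z.im = Real.sin c - w.im := by
    have := congrArg Complex.im hz
    simpa [Complex.exp_im, Complex.exp_ofReal_mul_I_im] using this
  have h3 : w.re ^ 2 + w.im ^ 2 ≤ 1 := by
    have := Complex.sq_norm w
    rw [Complex.normSq_apply] at this
    nlinarith [norm_nonneg w]
  have h4 : 0 < (Real.cos c - w.re) ^ 2 + (Real.sin c - w.im) ^ 2 := by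
    by_contra hcon
    apply hne
    apply Complex.ext
    · rw [Complex.sub_re, Complex.exp_ofReal_mul_I_re]; simp; nlinarith [sq_nonneg (Real.cos c - w.re), sq_nonneg (Real.sin c - w.im)]
    · rw [Complex.sub_im, Complex.exp_ofReal_mul_I_im]; simp; nlinarith [sq_nonneg (Real.cos c - w.re), sq_nonneg (Real.sin c - w.im)]
  have h5 := Real.cos_sq_add_sin_sq c
  have h6 : 0 < Real.exp z.re * Real.cos (z.im - c) := by
    rw [Real.cos_sub]
    have : Real.exp z.re * (Real.cos z.im * Real.cos c + Real.sin z.im * Real.sin c) =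
      (Real.cos c - w.re) * Real.cos c + (Real.sin c - w.im) * Real.sin c := by
      rw [← h1, ← h2]; ring
    rw [this]
    nlinarith
  exact (mul_pos_iff_of_pos_left (Real.exp_pos _)).1 h6

lemma cross_complex {A B C D : ℝ} (hAB : A < B) (hBC : B < C) (hCD : C < D)
    (hDA : D < A + 2 * Real.pi) {α β : ℝ → ℂ} (hα : Continuous α) (hβ : Continuous β)
    (nα : ∀ s, ‖α s‖ ≤ 1) (nβ : ∀ s, ‖β s‖ ≤ 1)
    (α0 : α 0 = Complex.exp (A * Complex.I)) (α1 : α 1 = Complex.exp (C * Complex.I))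
    (β0 : β 0 = Complex.exp (B * Complex.I)) (β1 : β 1 = Complex.exp (D * Complex.I)) :
    ∃ s t, α s = β t := by
  by_contra! hne
  have hpi := Real.pi_pos
  let F : C(ℝ × ℝ, ℂ) := ⟨fun p => α p.1 - β p.2, by fun_prop⟩
  have hF : ∀ p, F p ≠ 0 := fun p => sub_ne_zero.2 (hne _ _)
  obtain ⟨G, ⟨-, hG⟩, -⟩ := Complex.isCoveringMapOn_exp.existsUnique_continuousMap_lifts F
    (a₀ := (0, 0)) (Complex.exp_log (hF (0, 0))) hF
  have hG' : ∀ s t, Complex.exp (G (s, t)) = α s - β t := fun s t => congrFun hG (s, t)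
  have sinpos : ∀ {x y : ℝ}, x < y → y < x + 2 * Real.pi → 0 < 2 * Real.sin ((y - x) / 2) := by
    intro x y h1 h2
    have := Real.sin_pos_of_pos_of_lt_pi (x := (y - x) / 2) (by linarith) (by linarith)
    linarith
  have swap : ∀ x y : ℝ, Complex.exp (x * Complex.I) - Complex.exp (y * Complex.I) =
    Complex.exp (((x + y) / 2 + Real.pi / 2 : ℝ) * Complex.I) * (2 * Real.sin ((x - y) / 2) : ℝ) := by
    intro x y
    rw [show ((x + y) / 2 + Real.pi / 2 : ℝ) = ((y + x) / 2 - Real.pi / 2) + Real.pi by ring]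
    rw [← neg_sub, circ_sub]
    push_cast
    rw [add_mul, Complex.exp_add, Complex.exp_pi_mul_I]
    ring
  obtain ⟨k00, h00⟩ := arg_of_exp_eq (z := G (0, 0)) (sinpos hAB (by linarith))
    (by rw [hG', α0, β0, circ_sub])
  obtain ⟨k01, h01⟩ := arg_of_exp_eq (z := G (0, 1)) (sinpos (show A < D by linarith) (by linarith))
    (by rw [hG', α0, β1, circ_sub])
  obtain ⟨k10, h10⟩ := arg_of_exp_eq (z := G (1, 0)) (sinpos hBC (by linarith))
    (by rw [hG', α1, β0, swap])
  obtain ⟨k11, h11⟩ := arg_of_exp_eq (z := G (1, 1)) (sinpos hCD (by linarith))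
    (by rw [hG', α1, β1, circ_sub])
  have e1 : k00 = k01 := by
    refine side_aux (h := fun t => (G (0, t)).im) (c := A) (x := (B - A - Real.pi) / 2)
      (y := (D - A - Real.pi) / 2) (by fun_prop) ?_ (by rw [h00]; ring) (by rw [h01]; ring) ?_ ?_
    · intro t
      exact half_plane (nβ t) (by rw [← α0]; exact hF (0, t)) (by rw [hG', α0])
    · rw [abs_lt]; constructor <;> linarith
    · rw [abs_lt]; constructor <;> linarith
  have e2 : k10 = k11 := by
    refine side_aux (h := fun t => (G (1, t)).im) (c := C) (x := (B - C + Real.pi) / 2)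
      (y := (D - C - Real.pi) / 2) (by fun_prop) ?_ (by rw [h10]; ring) (by rw [h11]; ring) ?_ ?_
    · intro t
      exact half_plane (nβ t) (by rw [← α1]; exact hF (1, t)) (by rw [hG', α1])
    · rw [abs_lt]; constructor <;> linarith
    · rw [abs_lt]; constructor <;> linarith
  have expneg : ∀ x : ℝ, Complex.exp ((x + Real.pi : ℝ) * Complex.I) = - Complex.exp (x * Complex.I) := by
    intro x
    push_cast
    rw [add_mul, Complex.exp_add, Complex.exp_pi_mul_I]; ring
  have e3 : k00 - 1 = k10 := by
    refine side_aux (h := fun t => (G (t, 0)).im) (c := B + Real.pi) (x := (A - B + Real.pi) / 2)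
      (y := (C - B - Real.pi) / 2) (by fun_prop) ?_ (by rw [h00]; push_cast; ring)
      (by rw [h10]; ring) ?_ ?_
    · intro t
      refine half_plane (w := - α t) (by simpa using nα t) ?_ ?_
      · rw [expneg, ← β0]; have := hF (t, 0); simp only [F, ContinuousMap.coe_mk] at this
        intro h; apply this; linear_combination h
      · rw [expneg, hG', β0]; ring
    · rw [abs_lt]; constructor <;> linarith
    · rw [abs_lt]; constructor <;> linarith
  have e4 : k01 - 1 = k11 - 1 := by
    refine side_aux (h := fun t => (G (t, 1)).im) (c := D + Real.pi) (x := (A - D + Real.pi) / 2)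
      (y := (C - D + Real.pi) / 2) (by fun_prop) ?_ (by rw [h01]; push_cast; ring)
      (by rw [h11]; push_cast; ring) ?_ ?_
    · intro t
      refine half_plane (w := - α t) (by simpa using nα t) ?_ ?_
      · rw [expneg, ← β1]; have := hF (t, 1); simp only [F, ContinuousMap.coe_mk] at this
        intro h; apply this; linear_combination h
      · rw [expneg, hG', β1]; ring
    · rw [abs_lt]; constructor <;> linarith
    · rw [abs_lt]; constructor <;> linarith
  omega

def toC (x : E2) : ℂ := ⟨x 0, x 1⟩

lemma toC_cont : Continuous toC := by
  have : toC = fun x : E2 => ((x 0 : ℝ) : ℂ) + (x 1 : ℝ) * Complex.I := by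
    funext x; apply Complex.ext <;> simp [toC]
  rw [this]; fun_prop

lemma toC_norm (x : E2) : ‖toC x‖ = ‖x‖ := by
  rw [EuclideanSpace.norm_eq, Complex.norm_def, Complex.normSq_apply]
  simp [toC, Fin.sum_univ_two, pow_two]

lemma toC_inj {x y : E2} (h : toC x = toC y) : x = y := by
  have h0 := congrArg Complex.re h
  have h1 := congrArg Complex.im h
  ext i
  fin_cases i
  · exact h0
  · exact h1

@[simp] lemma sphPt_zero (t : ℝ) : sphPt t 0 = Real.cos t := by simp [sphPt]
@[simp] lemma sphPt_one (t : ℝ) : sphPt t 1 = Real.sin t := by simp [sphPt]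

lemma toC_sphPt (t : ℝ) : toC (sphPt t) = Complex.exp (t * Complex.I) := by
  apply Complex.ext
  · rw [Complex.exp_ofReal_mul_I_re]; simp [toC]
  · rw [Complex.exp_ofReal_mul_I_im]; simp [toC]

lemma norm_sphPt (t : ℝ) : ‖sphPt t‖ = 1 := by
  rw [← toC_norm, toC_sphPt, Complex.norm_exp_ofReal_mul_I]

lemma cross_disk {A B C D : ℝ} (hAB : A < B) (hBC : B < C) (hCD : C < D)
    (hDA : D < A + 2 * Real.pi) (α : Path (sphPt A) (sphPt C)) (β : Path (sphPt B) (sphPt D))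
    (nα : ∀ s, ‖α s‖ ≤ 1) (nβ : ∀ s, ‖β s‖ ≤ 1) : ∃ s t, α s = β t := by
  have ext_mem : ∀ {x y : E2} (γ : Path x y) (s : ℝ), ∃ s', γ.extend s = γ s' := by
    intro x y γ s
    exact ⟨Set.projIcc 0 1 zero_le_one s, rfl⟩
  obtain ⟨s, t, h⟩ := cross_complex hAB hBC hCD hDA (α := fun s => toC (α.extend s))
    (β := fun s => toC (β.extend s)) (toC_cont.comp α.continuous_extend)
    (toC_cont.comp β.continuous_extend)
    (fun s => by obtain ⟨s', h⟩ := ext_mem α s; simp only [h, toC_norm]; exact nα _)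
    (fun s => by obtain ⟨s', h⟩ := ext_mem β s; simp only [h, toC_norm]; exact nβ _)
    (by simp [toC_sphPt]) (by simp [toC_sphPt]) (by simp [toC_sphPt]) (by simp [toC_sphPt])
  have h := toC_inj h
  obtain ⟨s', hs⟩ := ext_mem α s
  obtain ⟨t', ht⟩ := ext_mem β t
  exact ⟨s', t', by rw [← hs, ← ht, h]⟩


abbrev DD : Set E2 := Metric.closedBall (0 : E2) 1

lemma convex_DD : Convex ℝ DD := convex_closedBall _ _
lemma compact_DD : IsCompact DD := isCompact_closedBall _ _

/-- separation lemma -/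
lemma sep_lemma {f : E2 → ℝ} (hf : Continuous f) {c : ℝ} {Y : Set E2} {M Q : E2}
    (hYc : IsClosed Y) (hYK : Y ⊆ {x | x ∈ DD ∧ c ≤ f x})
    (hopen : ∀ x ∈ Y, ∀ᶠ y in nhds x, y ∈ DD → c ≤ f y → y ∈ Y)
    (hM : M ∈ Y) (hQ : Q ∉ Y) (hQD : Q ∈ DD) (hQc : c ≤ f Q) :
    ∃ ε > 0, ¬ JoinedIn {x | x ∈ DD ∧ c - ε < f x} M Q := by
  have hKc : IsClosed {x : E2 | x ∈ DD ∧ c ≤ f x} :=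
    Metric.isClosed_closedBall.inter (isClosed_le continuous_const hf)
  have hK : IsCompact {x : E2 | x ∈ DD ∧ c ≤ f x} :=
    compact_DD.of_isClosed_subset hKc (fun x hx => hx.1)
  have hYcomp : IsCompact Y := hK.of_isClosed_subset hYc hYK
  set Z : Set E2 := {x | x ∈ DD ∧ c ≤ f x ∧ x ∉ Y} with hZ
  obtain ⟨O, hO, hOY, hOs⟩ : ∃ O : Set E2, IsOpen O ∧ Y ⊆ O ∧ ∀ y ∈ O, y ∈ DD → c ≤ f y → y ∈ Y := by
    refine ⟨interior {y | y ∈ DD → c ≤ f y → y ∈ Y}, isOpen_interior, ?_, ?_⟩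
    · intro x hx
      rw [mem_interior_iff_mem_nhds]
      exact hopen x hx
    · intro y hy
      exact interior_subset hy
  have hZc : IsClosed Z := by
    have : Z = {x : E2 | x ∈ DD ∧ c ≤ f x} ∩ Oᶜ := by
      ext x; constructor
      · rintro ⟨h1, h2, h3⟩; exact ⟨⟨h1, h2⟩, fun h => h3 (hOs x h h1 h2)⟩
      · rintro ⟨⟨h1, h2⟩, h3⟩; exact ⟨h1, h2, fun h => h3 (hOY h)⟩
    rw [this]; exact hKc.inter hO.isClosed_compl
  have hdis : Disjoint Y Z := Set.disjoint_left.2 fun x hx hz => hz.2.2 hx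
  obtain ⟨A, B, hA, hB, hYA, hZB, hAB⟩ := normal_separation hYc hZc hdis
  have hR : IsCompact (DD \ (A ∪ B)) := compact_DD.diff (hA.union hB)
  have hlt : ∀ x ∈ DD \ (A ∪ B), f x < c := by
    intro x hx
    by_contra h
    push Not at h
    by_cases hxY : x ∈ Y
    · exact hx.2 (Or.inl (hYA hxY))
    · exact hx.2 (Or.inr (hZB ⟨hx.1, h, hxY⟩))
  obtain ⟨ε, hε, hεR⟩ : ∃ ε > 0, ∀ x ∈ DD \ (A ∪ B), f x ≤ c - ε := by
    rcases (DD \ (A ∪ B)).eq_empty_or_nonempty with he | hne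
    · exact ⟨1, one_pos, by rw [he]; simp⟩
    · obtain ⟨x, hx, hmax⟩ := hR.exists_isMaxOn hne hf.continuousOn
      exact ⟨c - f x, sub_pos.2 (hlt x hx), fun y hy => by have := hmax hy; simp at this; linarith⟩
  refine ⟨ε, hε, ?_⟩
  rintro ⟨γ, hγ⟩
  have hpre : IsPreconnected (Set.range γ) := (isPreconnected_range γ.continuous)
  have hsub : Set.range γ ⊆ A ∪ B := by
    rintro _ ⟨s, rfl⟩
    by_contra h
    have := hεR _ ⟨(hγ s).1, h⟩
    have := (hγ s).2
    linarith
  obtain ⟨x, -, hx⟩ := hpre A B hA hB hsub ⟨M, ⟨0, by simp⟩, hYA hM⟩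
    ⟨Q, ⟨1, by simp⟩, hZB ⟨hQD, hQc, hQ⟩⟩
  exact Set.disjoint_left.1 hAB hx.1 hx.2

/-- local property -/
def LocG {E : Type*} [NormedAddCommGroup E] [NormedSpace ℝ E] (C : Set E) (f : E → ℝ) (c : ℝ) (x : E) : Prop :=
  ∃ N ∈ nhds x, (∀ y ∈ N, ∀ z ∈ N, y ∈ C → z ∈ C → c < f y → c < f z →
      JoinedIn {x | x ∈ C ∧ c < f x} y z) ∧
    (∀ y ∈ N, y ∈ C → c ≤ f y → y ∈ closure {z | z ∈ N ∧ z ∈ C ∧ c < f z})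

lemma joined_convex {E : Type*} [NormedAddCommGroup E] [NormedSpace ℝ E] {S T : Set E} (hS : Convex ℝ S) (hST : S ⊆ T) {x y : E} (hx : x ∈ S)
    (hy : y ∈ S) : JoinedIn T x y :=
  (JoinedIn.of_segment_subset (hS.segment_subset hx hy)).mono hST

lemma locG_gt {E : Type*} [NormedAddCommGroup E] [NormedSpace ℝ E] {C : Set E} (hC : Convex ℝ C) {f : E → ℝ} (hf : Continuous f) {c : ℝ} {x : E} (h : c < f x) :
    LocG C f c x := by
  obtain ⟨r, hr, hb⟩ := Metric.eventually_nhds_iff_ball.1 (hf.continuousAt.eventually (lt_mem_nhds h))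
  refine ⟨Metric.ball x r, Metric.ball_mem_nhds x hr, ?_, ?_⟩
  · intro y hy z hz hyD hzD _ _
    exact joined_convex (S := Metric.ball x r ∩ C) (T := {x | x ∈ C ∧ c < f x}) ((convex_ball x r).inter hC)
      (fun w hw => ⟨hw.2, hb w hw.1⟩) ⟨hy, hyD⟩ ⟨hz, hzD⟩
  · intro y hy hyD _
    exact subset_closure ⟨hy, hyD, hb y hy⟩

lemma locG_flow {E : Type*} [NormedAddCommGroup E] [NormedSpace ℝ E] {C : Set E} (hC : Convex ℝ C) {f : E → ℝ} (hf : ContDiff ℝ (⊤ : ℕ∞) f) {x : E}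
    (Φ : ℝ → E → E) (X : E → E) (hX : Continuous X) (hΦ : Continuous (fun p : ℝ × E => Φ p.1 p.2))
    (h0 : ∀ y, Φ 0 y = y) (hd : ∀ s y, HasDerivAt (fun s => Φ s y) (X (Φ s y)) s)
    (hpos : 0 < fderiv ℝ f x (X x))
    (hD : ∀ᶠ p : ℝ × E in nhds (0, x), p.2 ∈ C → Φ p.1 p.2 ∈ C) :
    LocG C f (f x) x := by
  have hfc := hf.continuous
  have hXf : Continuous fun y => fderiv ℝ f y (X y) :=
    (hf.continuous_fderiv (by simp)).clm_apply hX
  have h1 : ∀ᶠ p : ℝ × E in nhds (0, x), 0 < fderiv ℝ f (Φ p.1 p.2) (X (Φ p.1 p.2)) := by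
    have : ContinuousAt (fun p : ℝ × E => fderiv ℝ f (Φ p.1 p.2) (X (Φ p.1 p.2))) (0, x) :=
      (hXf.comp hΦ).continuousAt
    exact this.eventually (lt_mem_nhds (by simpa [h0] using hpos))
  obtain ⟨r, hr, hb⟩ := Metric.eventually_nhds_iff_ball.1 (h1.and hD)
  set L := r / 2 with hL
  have hLpos : 0 < L := by positivity
  have hN : ∀ y ∈ Metric.ball x r, ∀ s ∈ Set.Icc (-L) L, ((s, y) : ℝ × E) ∈ Metric.ball ((0 : ℝ), x) r := by
    intro y hy s hs
    rw [← ball_prod_same]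
    refine ⟨?_, hy⟩
    rw [Metric.mem_ball, Real.dist_eq, sub_zero, abs_lt]
    constructor <;> linarith [hs.1, hs.2]
  have hmono : ∀ y ∈ Metric.ball x r, StrictMonoOn (fun s => f (Φ s y)) (Set.Icc 0 L) := by
    intro y hy
    have hder : ∀ s, HasDerivAt (fun s => f (Φ s y)) (fderiv ℝ f (Φ s y) (X (Φ s y))) s := by
      intro s
      exact ((hf.differentiable (by simp) _).hasFDerivAt).comp_hasDerivAt s (hd s y)
    refine strictMonoOn_of_deriv_pos (convex_Icc _ _)
      (fun s _ => (hder s).continuousAt.continuousWithinAt) ?_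
    intro s hs
    rw [interior_Icc] at hs
    rw [(hder s).deriv]
    exact (hb _ (hN y hy s ⟨by linarith [hs.1], hs.2.le⟩)).1
  have hmem : ∀ y ∈ Metric.ball x r, y ∈ C → ∀ s ∈ Set.Icc 0 L, Φ s y ∈ C := fun y hy hyD s hs =>
    (hb _ (hN y hy s ⟨by linarith [hs.1], hs.2⟩)).2 hyD
  have hxb : x ∈ Metric.ball x r := Metric.mem_ball_self hr
  have hcL : f x < f (Φ L x) := by
    have := hmono x hxb (Set.left_mem_Icc.2 hLpos.le) (Set.right_mem_Icc.2 hLpos.le) hLpos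
    simpa [h0] using this
  obtain ⟨r2, hr2, hb2⟩ := Metric.eventually_nhds_iff_ball.1
    (hfc.continuousAt.eventually (lt_mem_nhds hcL))
  have hΦL : Continuous (Φ L) := hΦ.comp (by fun_prop : Continuous fun y : E => (L, y))
  have hΦy : ∀ y, Continuous (fun s => Φ s y) := fun y => hΦ.comp (by fun_prop : Continuous fun s : ℝ => (s, y))
  set N := Metric.ball x r ∩ Φ L ⁻¹' Metric.ball (Φ L x) r2 with hNdef
  have hNo : IsOpen N := Metric.isOpen_ball.inter (Metric.isOpen_ball.preimage hΦL)
  have hxN : x ∈ N := ⟨hxb, Metric.mem_ball_self hr2⟩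
  refine ⟨N, hNo.mem_nhds hxN, ?_, ?_⟩
  · have key : ∀ y ∈ N, y ∈ C → f x < f y → JoinedIn {w | w ∈ C ∧ f x < f w} y (Φ L y) := by
      intro y hy hyD hyf
      have hpath : IsPathConnected ((fun s => Φ s y) '' Set.Icc 0 L) :=
        ((convex_Icc (0:ℝ) L).isPathConnected ⟨0, by simp [hLpos.le]⟩).image (hΦy y)
      have hj := hpath.joinedIn y ⟨0, by simp [hLpos.le], h0 y⟩ (Φ L y) ⟨L, by simp [hLpos.le], rfl⟩
      refine hj.mono ?_
      rintro _ ⟨s, hs, rfl⟩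
      refine ⟨hmem y hy.1 hyD s hs, ?_⟩
      have := (hmono y hy.1).monotoneOn (Set.left_mem_Icc.2 hLpos.le) hs hs.1
      simp only [h0] at this
      exact hyf.trans_le this
    intro y hy z hz hyD hzD hyf hzf
    refine (key y hy hyD hyf).trans (JoinedIn.trans ?_ (key z hz hzD hzf).symm)
    refine joined_convex (S := Metric.ball (Φ L x) r2 ∩ C) (T := {w | w ∈ C ∧ f x < f w}) ((convex_ball (Φ L x) r2).inter hC)
      (fun w hw => ⟨hw.2, hb2 w hw.1⟩) ⟨hy.2, hmem y hy.1 hyD L (by simp [hLpos.le])⟩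
      ⟨hz.2, hmem z hz.1 hzD L (by simp [hLpos.le])⟩
  · intro y hy hyD hyf
    have ht : Filter.Tendsto (fun s => Φ s y) (nhdsWithin 0 (Set.Ioi 0)) (nhds y) := by
      have := (hΦy y).tendsto 0
      rw [h0] at this
      exact this.mono_left nhdsWithin_le_nhds
    refine mem_closure_of_tendsto ht ?_
    have hev := ht.eventually (hNo.mem_nhds hy)
    filter_upwards [hev, Ioo_mem_nhdsGT hLpos] with s hs hs2
    refine ⟨hs, hmem y hy.1 hyD s ⟨hs2.1.le, hs2.2.le⟩, ?_⟩
    have := (hmono y hy.1) (Set.left_mem_Icc.2 hLpos.le) ⟨hs2.1.le, hs2.2.le⟩ hs2.1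
    simp only [h0] at this
    exact hyf.trans_lt this

abbrev LocGood (f : E2 → ℝ) (c : ℝ) (x : E2) : Prop := LocG DD f c x

lemma mem_DD_of_near {x : E2} (hx : x ∈ Metric.ball (0 : E2) 1) : ∀ᶠ y in nhds x, y ∈ DD := by
  filter_upwards [Metric.isOpen_ball.mem_nhds hx] with y hy using Metric.ball_subset_closedBall hy

lemma locGood_interior {f : E2 → ℝ} (hf : ContDiff ℝ (⊤ : ℕ∞) f) {x : E2}
    (hx : x ∈ Metric.ball (0 : E2) 1) (hcr : fderiv ℝ f x ≠ 0) : LocGood f (f x) x := by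
  obtain ⟨v, hv⟩ : ∃ v, 0 < fderiv ℝ f x v := by
    by_contra h
    push Not at h
    apply hcr
    ext v
    have h1 := h v
    have h2 := h (-v)
    simp at h2 ⊢
    linarith
  refine locG_flow convex_DD hf (fun s y => y + s • v) (fun _ => v) continuous_const (by fun_prop) (by simp)
    ?_ hv ?_
  · intro s y
    have := ((hasDerivAt_id s).smul_const v).const_add y
    simpa using this
  · have : ContinuousAt (fun p : ℝ × E2 => p.2 + p.1 • v) (0, x) := by fun_prop
    have h2 := this.eventually (p := fun y => y ∈ DD) (by simpa using mem_DD_of_near hx)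
    filter_upwards [h2] with p hp _ using hp

def Jr (y : E2) : E2 := !₂[- y 1, y 0]

def rotv (s : ℝ) (y : E2) : E2 := Real.cos s • y + Real.sin s • Jr y

lemma Jr_cont : Continuous Jr := by
  unfold Jr; fun_prop

lemma norm_rotv (s : ℝ) (y : E2) : ‖rotv s y‖ = ‖y‖ := by
  rw [EuclideanSpace.norm_eq, EuclideanSpace.norm_eq]
  congr 1
  simp [Fin.sum_univ_two, rotv, Jr]
  nlinarith [Real.sin_sq_add_cos_sq s]

lemma rotv_deriv (s : ℝ) (y : E2) : HasDerivAt (fun s => rotv s y) (Jr (rotv s y)) s := by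
  have h := ((Real.hasDerivAt_cos s).smul_const y).add ((Real.hasDerivAt_sin s).smul_const (Jr y))
  have e : Jr (rotv s y) = -Real.sin s • y + Real.cos s • Jr y := by
    ext i
    fin_cases i
    · simp [rotv, Jr]
    · simp [rotv, Jr]; ring
  rw [e]
  exact h

lemma sphPt_deriv (t : ℝ) : HasDerivAt sphPt (Jr (sphPt t)) t := by
  have h := rotv_deriv t (sphPt 0)
  have e : (fun s => rotv s (sphPt 0)) = sphPt := by
    funext s; ext i; fin_cases i <;> simp [rotv, Jr]
  rw [e] at h
  have e2 : rotv t (sphPt 0) = sphPt t := congrFun e t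
  rwa [e2] at h

lemma tang_deriv {f : E2 → ℝ} {g : ℝ → ℝ} (hf : ContDiff ℝ (⊤ : ℕ∞) f) (hfg : ∀ t, f (sphPt t) = g t)
    (t : ℝ) : fderiv ℝ f (sphPt t) (Jr (sphPt t)) = deriv g t := by
  have h := ((hf.differentiable (by simp) (sphPt t)).hasFDerivAt).comp_hasDerivAt t (sphPt_deriv t)
  have : f ∘ sphPt = g := funext hfg
  rw [this] at h
  exact h.deriv.symm

lemma locGood_bdry {f : E2 → ℝ} {g : ℝ → ℝ} (hf : ContDiff ℝ (⊤ : ℕ∞) f)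
    (hfg : ∀ t, f (sphPt t) = g t) {t : ℝ} (ht : deriv g t ≠ 0) : LocGood f (f (sphPt t)) (sphPt t) := by
  obtain ⟨σ, hσ⟩ : ∃ σ : ℝ, 0 < σ * deriv g t := ⟨deriv g t, mul_self_pos.2 ht⟩
  refine locG_flow convex_DD hf (fun s y => rotv (σ * s) y) (fun y => σ • Jr y) (by have := Jr_cont; fun_prop)
    ?_ ?_ ?_ ?_ ?_
  · have := Jr_cont
    unfold rotv; fun_prop
  · intro y; simp [rotv]
  · intro s y
    have h1 : HasDerivAt (fun s : ℝ => σ * s) σ s := by simpa using (hasDerivAt_id s).const_mul σ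
    exact (rotv_deriv (σ * s) y).scomp s h1
  · rw [map_smul, tang_deriv hf hfg]; exact hσ
  · refine Filter.Eventually.of_forall ?_
    intro p hp
    simp only [DD, mem_closedBall_zero_iff] at hp ⊢
    rwa [norm_rotv]

def angA (θ : ℝ) (y : E2) : ℝ := θ + Complex.arg (toC y * Complex.exp (-(θ * Complex.I)))

lemma sphPt_angA (θ : ℝ) {y : E2} (hy : ‖y‖ = 1) : sphPt (angA θ y) = y := by
  apply toC_inj
  rw [toC_sphPt]
  set w := toC y * Complex.exp (-(θ * Complex.I)) with hw
  have hn : ‖w‖ = 1 := by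
    rw [hw, norm_mul, toC_norm, hy, one_mul, ← neg_mul, ← Complex.ofReal_neg,
      Complex.norm_exp_ofReal_mul_I]
  have h := Complex.norm_mul_exp_arg_mul_I w
  rw [hn, Complex.ofReal_one, one_mul] at h
  rw [angA, ← hw]
  push_cast
  rw [add_mul, Complex.exp_add, h, hw, mul_comm, mul_assoc, ← Complex.exp_add]
  simp

lemma angA_self (θ : ℝ) : angA θ (sphPt θ) = θ := by
  rw [angA, toC_sphPt, ← Complex.exp_add]; simp

lemma angA_cont (θ : ℝ) : ContinuousAt (angA θ) (sphPt θ) := by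
  unfold angA
  refine continuousAt_const.add ?_
  refine (Complex.continuousAt_arg ?_).comp (f := fun y => toC y * Complex.exp (-(θ * Complex.I))) ?_
  · rw [toC_sphPt, ← Complex.exp_add]; simp
  · have := toC_cont; fun_prop

lemma sphPt_periodic : Function.Periodic sphPt (2 * Real.pi) := by
  intro t; ext i; fin_cases i <;> simp

lemma exists_angle (a : ℝ) {y : E2} (hy : ‖y‖ = 1) :
    ∃ t ∈ Set.Ico a (a + 2 * Real.pi), y = sphPt t := by
  obtain ⟨t, ht, h⟩ := sphPt_periodic.exists_mem_Ico Real.two_pi_pos (angA 0 y) a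
  exact ⟨t, ht, by rw [← h, sphPt_angA 0 hy]⟩

lemma sphPt_cont : Continuous sphPt :=
  continuous_iff_continuousAt.2 fun t => (sphPt_deriv t).continuousAt

lemma sphPt_mem (t : ℝ) : sphPt t ∈ DD := by simp [DD, norm_sphPt]

/-- a positive maximum is a strict local maximum in the disk -/
lemma strict_max_bdry {f : E2 → ℝ} {g : ℝ → ℝ} (hf : ContDiff ℝ (⊤ : ℕ∞) f)
    (hfg : ∀ t, f (sphPt t) = g t) {θ : ℝ} (hg : ∀ᶠ t in nhds θ, t ≠ θ → g t < g θ)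
    (hr : 0 < fderiv ℝ f (sphPt θ) (sphPt θ)) :
    ∀ᶠ y in nhds (sphPt θ), y ∈ DD → y ≠ sphPt θ → f y < f (sphPt θ) := by
  set p := sphPt θ with hp
  have hpn : ‖p‖ = 1 := norm_sphPt θ
  have hXf : Continuous fun y => fderiv ℝ f y y :=
    (hf.continuous_fderiv (by simp)).clm_apply continuous_id
  obtain ⟨ρ, hρ, hb⟩ := Metric.eventually_nhds_iff_ball.1
    (hXf.continuousAt.eventually (lt_mem_nhds hr))
  have hnc : ContinuousAt (fun y : E2 => ‖y‖⁻¹ • y) p := by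
    have h0 : ContinuousAt (fun y : E2 => ‖y‖) p := by fun_prop
    have h1 : ContinuousAt (fun y : E2 => ‖y‖⁻¹) p := h0.inv₀ (by rw [hpn]; exact one_ne_zero)
    exact h1.smul continuousAt_id
  have hnp : ‖p‖⁻¹ • p = p := by rw [hpn]; simp
  have e1 : ∀ᶠ y in nhds p, ‖y‖⁻¹ • y ∈ Metric.ball p ρ := by
    refine hnc.eventually (p := fun z => z ∈ Metric.ball p ρ) ?_
    simp only [hnp]; exact Metric.ball_mem_nhds p hρ
  have e2 : ∀ᶠ y in nhds p, angA θ (‖y‖⁻¹ • y) ≠ θ → g (angA θ (‖y‖⁻¹ • y)) < g θ := by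
    have hc : ContinuousAt (fun y : E2 => angA θ (‖y‖⁻¹ • y)) p := by
      refine ContinuousAt.comp (g := angA θ) ?_ hnc
      rw [hnp]; exact angA_cont θ
    refine hc.eventually (p := fun t => t ≠ θ → g t < g θ) ?_
    simp only [hnp]; rw [hp, angA_self]; exact hg
  have e3 : ∀ᶠ y in nhds p, y ∈ Metric.ball p ρ := Metric.ball_mem_nhds p hρ
  have e4 : ∀ᶠ y in nhds p, 0 < ‖y‖ := by
    have : ContinuousAt (fun y : E2 => ‖y‖) p := by fun_prop
    exact this.eventually (lt_mem_nhds (by simp only [hpn]; exact one_pos))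
  filter_upwards [e1, e2, e3, e4] with y h1 h2 h3 h4 hyD hyne
  have hy1 : ‖y‖ ≤ 1 := by simpa [DD] using hyD
  have hn1 : ‖‖y‖⁻¹ • y‖ = 1 := by rw [norm_smul, norm_inv, norm_norm]; field_simp
  have hinv : 1 ≤ ‖y‖⁻¹ := (one_le_inv₀ h4).2 hy1
  have hmono : StrictMonoOn (fun s : ℝ => f (s • y)) (Set.Icc 1 ‖y‖⁻¹) := by
    have hder : ∀ s : ℝ, HasDerivAt (fun s : ℝ => f (s • y)) (fderiv ℝ f (s • y) y) s := by
      intro s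
      have := (hasDerivAt_id s).smul_const y
      rw [one_smul] at this
      exact ((hf.differentiable (by simp) _).hasFDerivAt).comp_hasDerivAt s this
    refine strictMonoOn_of_deriv_pos (convex_Icc _ _)
      (fun s _ => (hder s).continuousAt.continuousWithinAt) ?_
    intro s hs
    rw [interior_Icc] at hs
    rw [(hder s).deriv]
    have hsb : s • y ∈ Metric.ball p ρ := by
      refine (convex_ball p ρ).segment_subset h3 h1 ?_
      have hpos : 0 < ‖y‖⁻¹ - 1 := by linarith [hs.1, hs.2]
      refine ⟨(‖y‖⁻¹ - s) / (‖y‖⁻¹ - 1), (s - 1) / (‖y‖⁻¹ - 1), ?_, ?_, ?_, ?_⟩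
      · exact div_nonneg (by linarith [hs.2]) hpos.le
      · exact div_nonneg (by linarith [hs.1]) hpos.le
      · rw [← add_div, div_eq_one_iff_eq hpos.ne']; ring
      · rw [smul_smul, ← add_smul]
        congr 1
        rw [div_mul_eq_mul_div, ← add_div, div_eq_iff hpos.ne']; ring
    have h5 := hb _ hsb
    rw [map_smul, smul_eq_mul] at h5
    exact pos_of_mul_pos_right h5 (by linarith [hs.1])
  have hA := sphPt_angA θ hn1
  have hval : f (‖y‖⁻¹ • y) = g (angA θ (‖y‖⁻¹ • y)) := by rw [← hfg, hA]
  have hle : f y ≤ f (‖y‖⁻¹ • y) := by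
    have := hmono.monotoneOn (Set.left_mem_Icc.2 hinv) (Set.right_mem_Icc.2 hinv) hinv
    simpa using this
  have hpv : f p = g θ := hfg θ
  by_cases hθ : angA θ (‖y‖⁻¹ • y) = θ
  · rw [hθ] at hA
    rw [hp, hA]
    have hlt : 1 < ‖y‖⁻¹ := by
      refine lt_of_le_of_ne hinv fun h => hyne ?_
      rw [hp, hA, ← h, one_smul]
    have := hmono (Set.left_mem_Icc.2 hinv) (Set.right_mem_Icc.2 hinv) hlt
    simpa using this
  · rw [hpv]
    have := h2 hθ
    rw [← hval] at this
    linarith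

lemma strict_min_bdry {f : E2 → ℝ} {g : ℝ → ℝ} (hf : ContDiff ℝ (⊤ : ℕ∞) f)
    (hfg : ∀ t, f (sphPt t) = g t) {θ : ℝ} (hg : ∀ᶠ t in nhds θ, t ≠ θ → g θ < g t)
    (hr : fderiv ℝ f (sphPt θ) (sphPt θ) < 0) :
    ∀ᶠ y in nhds (sphPt θ), y ∈ DD → y ≠ sphPt θ → f (sphPt θ) < f y := by
  have h := strict_max_bdry (f := fun x => - f x) (g := fun t => - g t) hf.neg (fun t => by simp [hfg])
    (θ := θ) (by filter_upwards [hg] with t ht h1; simpa using ht h1)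
    (by rw [fderiv_fun_neg]; simpa using hr)
  filter_upwards [h] with y hy h1 h2
  simpa using hy h1 h2

/-- strict minimum at a boundary point is good -/
lemma locGood_min_bdry {f : E2 → ℝ} {p : E2} (hp : ‖p‖ = 1)
    (h : ∀ᶠ y in nhds p, y ∈ DD → y ≠ p → f p < f y) : LocGood f (f p) p := by
  obtain ⟨r, hr, hb⟩ := Metric.eventually_nhds_iff_ball.1 h
  have hconv : Convex ℝ (DD \ {p}) := by
    have : p ∈ Set.extremePoints ℝ DD := by
      apply StrictConvexSpace.sphere_subset_extremePoints_closedBall (0 : E2) one_ne_zero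
      simpa using hp
    exact ((convex_DD.mem_extremePoints_iff_convex_sdiff).1 this).2
  have hc2 : Convex ℝ (Metric.ball p r ∩ (DD \ {p})) := (convex_ball p r).inter hconv
  refine ⟨Metric.ball p r, Metric.ball_mem_nhds p hr, ?_, ?_⟩
  · intro y hy z hz hyD hzD hyf hzf
    refine joined_convex (T := {x | x ∈ DD ∧ f p < f x}) hc2 (fun w hw => ⟨hw.2.1, hb w hw.1 hw.2.1 hw.2.2⟩)
      ⟨hy, hyD, ?_⟩ ⟨hz, hzD, ?_⟩
    · rintro rfl; exact lt_irrefl _ hyf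
    · rintro rfl; exact lt_irrefl _ hzf
  · intro y hy hyD hyf
    by_cases hyp : y = p
    · rw [hyp]
      have ht : Filter.Tendsto (fun s : ℝ => (1 - s) • p) (nhdsWithin 0 (Set.Ioi 0)) (nhds p) := by
        have : Continuous (fun s : ℝ => (1 - s) • p) := by fun_prop
        have := this.tendsto 0
        simp only [sub_zero, one_smul] at this
        exact this.mono_left nhdsWithin_le_nhds
      refine mem_closure_of_tendsto ht ?_
      filter_upwards [ht.eventually (Metric.ball_mem_nhds p hr), Ioo_mem_nhdsGT one_pos] with s hs hs2
      have hnorm : ‖(1 - s) • p‖ = 1 - s := by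
        rw [norm_smul, hp, mul_one, Real.norm_eq_abs, abs_of_pos (by linarith [hs2.2])]
      have hD : (1 - s) • p ∈ DD := by
        rw [mem_closedBall_zero_iff, hnorm]; linarith [hs2.1]
      refine ⟨hs, hD, hb _ hs hD ?_⟩
      intro h
      rw [h, hp] at hnorm
      linarith [hs2.1]
    · exact subset_closure ⟨hy, hyD, hb y hy hyD hyp⟩

/-- strict minimum at an interior point is good -/
lemma locGood_min_int {f : E2 → ℝ} {p : E2} (hp : p ∈ Metric.ball (0 : E2) 1)
    (h : ∀ᶠ y in nhds p, y ≠ p → f p < f y) : LocGood f (f p) p := by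
  obtain ⟨r, hr, hb⟩ := Metric.eventually_nhds_iff_ball.1 (h.and (mem_DD_of_near hp))
  have hrank : 1 < Module.rank ℝ E2 := by
    rw [← Module.finrank_eq_rank]; norm_num
  have hpc : IsPathConnected (Metric.ball p r \ {p}) := by
    have h1 := (isPathConnected_compl_singleton_of_one_lt_rank hrank (0 : E2)).image
      (OpenPartialHomeomorph.continuous_univBall p r)
    suffices e : Metric.ball p r \ {p} = (OpenPartialHomeomorph.univBall p r) '' {0}ᶜ by
      rw [e]; exact h1
    ext y
    constructor
    · rintro ⟨h2, h3⟩
      rw [← OpenPartialHomeomorph.univBall_target p hr] at h2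
      refine ⟨(OpenPartialHomeomorph.univBall p r).symm y, ?_,
        (OpenPartialHomeomorph.univBall p r).right_inv h2⟩
      intro h4
      apply h3
      have h5 := (OpenPartialHomeomorph.univBall p r).right_inv h2
      rw [Set.mem_singleton_iff.1 h4, OpenPartialHomeomorph.univBall_apply_zero] at h5
      exact h5.symm
    · rintro ⟨x, hx, rfl⟩
      have hs : ∀ x : E2, x ∈ (OpenPartialHomeomorph.univBall p r).source := by
        intro x; rw [OpenPartialHomeomorph.univBall_source]; trivial
      refine ⟨?_, ?_⟩
      · rw [← OpenPartialHomeomorph.univBall_target p hr]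
        exact (OpenPartialHomeomorph.univBall p r).map_source (hs x)
      · intro h
        apply hx
        refine (OpenPartialHomeomorph.univBall p r).injOn (hs x) (hs 0) ?_
        rw [OpenPartialHomeomorph.univBall_apply_zero]; exact h
  refine ⟨Metric.ball p r, Metric.ball_mem_nhds p hr, ?_, ?_⟩
  · intro y hy z hz hyD hzD hyf hzf
    refine (hpc.joinedIn y ⟨hy, ?_⟩ z ⟨hz, ?_⟩).mono ?_
    · rintro rfl; exact lt_irrefl _ hyf
    · rintro rfl; exact lt_irrefl _ hzf
    · intro w hw; exact ⟨(hb w hw.1).2, (hb w hw.1).1 hw.2⟩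
  · intro y hy hyD hyf
    by_cases hyp : y = p
    · rw [hyp]
      have : (nhdsWithin p {p}ᶜ).NeBot := inferInstance
      rw [mem_closure_iff_frequently]
      have h2 : ∃ᶠ x in nhdsWithin p {p}ᶜ, x ∈ {z | z ∈ Metric.ball p r ∧ z ∈ DD ∧ f p < f z} := by
        apply Filter.Eventually.frequently
        filter_upwards [self_mem_nhdsWithin, nhdsWithin_le_nhds (Metric.ball_mem_nhds p hr)] with z h1 h2
        exact ⟨h2, (hb z h2).2, (hb z h2).1 h1⟩
      exact h2.filter_mono nhdsWithin_le_nhds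
    · exact subset_closure ⟨hy, hyD, (hb y hy).1 hyp⟩

lemma closure_step {f : E2 → ℝ} {c : ℝ} {M x : E2} (hG : LocGood f c x)
    (hx : x ∈ closure {y | JoinedIn {x | x ∈ DD ∧ c < f x} M y}) :
    ∀ᶠ y in nhds x, y ∈ DD → c ≤ f y → y ∈ closure {y | JoinedIn {x | x ∈ DD ∧ c < f x} M y} := by
  obtain ⟨N, hN, h1, h2⟩ := hG
  obtain ⟨v, hvN, hv⟩ := mem_closure_iff_nhds.1 hx N hN
  have hvm := hv.target_mem
  filter_upwards [hN] with y hy hyD hyc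
  refine closure_mono ?_ (h2 y hy hyD hyc)
  rintro z ⟨hz, hzD, hzc⟩
  exact JoinedIn.trans hv (h1 v hvN z hz hvm.1 hzD hvm.2 hzc)

lemma saddle_exists {f : E2 → ℝ} (hf : ContDiff ℝ (⊤ : ℕ∞) f) (hfin : (critPts f).Finite)
    {M Q : E2} {lm : ℝ} (hMD : M ∈ DD) (hQD : Q ∈ DD)
    (hMmax : ∀ᶠ y in nhds M, y ∈ DD → y ≠ M → f y < f M) (hMQ : f M < f Q)
    (hlow : ∀ c < lm, JoinedIn {x | x ∈ DD ∧ c < f x} M Q)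
    (hbd : ∀ x, ‖x‖ = 1 → lm ≤ f x → f x < f M → LocGood f (f x) x) :
    ∃ q ∈ critPts f, lm ≤ f q ∧ f q ≤ f M ∧ ¬ IsLocalMax f q ∧ ¬ IsLocalMin f q := by
  have hfc := hf.continuous
  set S : Set ℝ := {c | JoinedIn {x | x ∈ DD ∧ c < f x} M Q} with hS
  have hSb : ∀ c ∈ S, c ≤ f M := fun c hc => (JoinedIn.source_mem hc).2.le
  have hbdd : BddAbove S := ⟨f M, hSb⟩
  have hne : S.Nonempty := ⟨lm - 1, hlow _ (by linarith)⟩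
  set cs := sSup S with hcs
  have hcM : cs ≤ f M := csSup_le hne hSb
  have hmc : lm ≤ cs := by
    refine le_of_forall_lt fun c hc => ?_
    have h1 : (c + lm) / 2 ∈ S := hlow _ (by linarith)
    have := le_csSup hbdd h1
    linarith
  have hjoin : ∀ ε > 0, JoinedIn {x | x ∈ DD ∧ cs - ε < f x} M Q := by
    intro ε hε
    obtain ⟨c, hc, hlt⟩ := exists_lt_of_lt_csSup hne (show cs - ε < sSup S by rw [← hcs]; linarith)
    exact JoinedIn.mono hc fun x hx => ⟨hx.1, hlt.trans hx.2⟩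
  have hnot : cs ∉ S := by
    rintro ⟨γ, hγ⟩
    obtain ⟨s, -, hs⟩ := isCompact_univ.exists_isMinOn Set.univ_nonempty
      (hfc.comp γ.continuous).continuousOn
    have h1 : (cs + f (γ s)) / 2 ∈ S := by
      refine ⟨γ, fun u => ⟨(hγ u).1, ?_⟩⟩
      have h2 := hs (Set.mem_univ u)
      simp only [Function.comp, Set.mem_ofPred_eq] at h2
      have := (hγ s).2
      linarith
    have := le_csSup hbdd h1
    have := (hγ s).2
    linarith
  by_contra hcon
  push Not at hcon
  rcases hcM.eq_or_lt with hEq | hLt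
  · obtain ⟨ε, hε, h⟩ := sep_lemma hfc (c := cs) (Y := {M}) (M := M) (Q := Q) isClosed_singleton
      (by rintro _ rfl; exact ⟨hMD, hcM⟩)
      (by
        rintro _ rfl
        filter_upwards [hMmax] with y hy hyD hyc
        by_contra hyM
        have := hy hyD hyM
        linarith) rfl (by rintro rfl; exact lt_irrefl _ hMQ) hQD (by linarith)
    exact h (hjoin ε hε)
  · set V : Set E2 := {y | JoinedIn {x | x ∈ DD ∧ cs < f x} M y} with hV
    have hVsub : closure V ⊆ {x | x ∈ DD ∧ cs ≤ f x} := by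
      refine closure_minimal ?_ (Metric.isClosed_closedBall.inter (isClosed_le continuous_const hfc))
      intro y hy
      have := JoinedIn.target_mem hy
      exact ⟨this.1, this.2.le⟩
    have hQV : Q ∉ closure V := by
      intro hq
      obtain ⟨N, hN, h1, -⟩ := locG_gt convex_DD hfc (show cs < f Q by linarith)
      obtain ⟨v, hvN, hv⟩ := mem_closure_iff_nhds.1 hq N hN
      have hvm := JoinedIn.target_mem hv
      exact hnot (JoinedIn.trans hv (h1 v hvN Q (mem_of_mem_nhds hN) hvm.1 hQD hvm.2 (by linarith)))
    suffices hopen : ∀ x ∈ closure V, ∀ᶠ y in nhds x, y ∈ DD → cs ≤ f y → y ∈ closure V by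
      obtain ⟨ε, hε, h⟩ := sep_lemma hfc (c := cs) (Y := closure V) (M := M) (Q := Q) isClosed_closure
        hVsub hopen (subset_closure (JoinedIn.refl ⟨hMD, hLt⟩)) hQV hQD (by linarith)
      exact h (hjoin ε hε)
    intro x hx
    have hx2 := hVsub hx
    suffices hgood : LocGood f cs x from closure_step hgood hx
    rcases hx2.2.lt_or_eq with h1 | h1
    · exact locG_gt convex_DD hfc h1
    have hx1 : ‖x‖ ≤ 1 := by simpa [DD] using hx2.1
    rcases hx1.lt_or_eq with h2 | h2
    · have hxb : x ∈ Metric.ball (0 : E2) 1 := by simpa using h2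
      by_cases h3 : fderiv ℝ f x = 0
      · have h4 := hcon x ⟨hxb, h3⟩ (by linarith) (by linarith)
        by_cases h5 : IsLocalMax f x
        · exfalso
          obtain ⟨v, hvN, hv⟩ := mem_closure_iff_nhds.1 hx _ h5
          have hvm := JoinedIn.target_mem hv
          have h6 : f v ≤ f x := hvN
          have := hvm.2
          linarith
        · have h6 := h4 h5
          rw [h1]
          refine locGood_min_int hxb ?_
          have h7 : ∀ᶠ y in nhds x, y ∉ critPts f \ {x} :=
            (hfin.subset Set.sdiff_subset).isClosed.isOpen_compl.mem_nhds (by simp)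
          have h8 : ∀ᶠ y in nhds x, y ∈ Metric.ball (0 : E2) 1 := Metric.isOpen_ball.mem_nhds hxb
          have h9 : ∀ᶠ y in nhds x, ∀ᶠ z in nhds y, f x ≤ f z := eventually_eventually_nhds.2 h6
          filter_upwards [h7, h8, h9, h6] with y h7 h8 h9 h10 hyx
          refine lt_of_le_of_ne h10 fun he => h7 ⟨⟨h8, ?_⟩, hyx⟩
          apply IsLocalMin.fderiv_eq_zero
          rw [he] at h9
          exact h9
      · rw [h1]; exact locGood_interior hf hxb h3
    · rw [h1]; exact hbd x h2 (by linarith) (by linarith)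

lemma neg_max {f : E2 → ℝ} (hf : ContDiff ℝ (⊤ : ℕ∞) f) {p : E2} (hp : ‖p‖ = 1)
    (hr : fderiv ℝ f p p < 0) :
    (∃ p', ‖p'‖ = 1 ∧ f p < f p' ∧ JoinedIn {x | x ∈ DD ∧ f p ≤ f x} p p') ∨
    (∃ q ∈ Metric.ball (0 : E2) 1, IsLocalMax f q ∧
      (∀ p', ‖p'‖ = 1 → ¬ JoinedIn {x | x ∈ DD ∧ f p < f x} q p') ∧
      JoinedIn {x | x ∈ DD ∧ f p ≤ f x} q p) := by
  have hfc := hf.continuous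
  have hder : HasDerivAt (fun s : ℝ => f ((1 - s) • p)) (fderiv ℝ f p (-p)) 0 := by
    have h1 : HasDerivAt (fun s : ℝ => (1 - s) • p) (-p) 0 := by
      have := ((hasDerivAt_id (0:ℝ)).const_sub 1).smul_const p
      simpa using this
    have h2 : HasFDerivAt f (fderiv ℝ f p) ((1 - (0:ℝ)) • p) := by
      simpa using (hf.differentiable (by simp) p).hasFDerivAt
    exact h2.comp_hasDerivAt 0 h1
  have hpos : 0 < fderiv ℝ f p (-p) := by simpa using hr
  have hev : ∀ᶠ s in nhdsWithin (0:ℝ) (Set.Ioi 0), f p < f ((1 - s) • p) := by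
    have h1 := (hasDerivAt_iff_tendsto_slope.1 hder).mono_left
      (nhdsWithin_mono (0:ℝ) (s := Set.Ioi 0) (fun x hx => ne_of_gt hx))
    filter_upwards [h1.eventually (lt_mem_nhds hpos), self_mem_nhdsWithin] with s hs hs0
    rw [slope_def_field] at hs
    have h3 : (0:ℝ) < s - 0 := by simpa using hs0
    have h2 := (div_pos_iff_of_pos_right h3).1 hs
    simpa using h2
  obtain ⟨u, hu, hsub⟩ := mem_nhdsGT_iff_exists_Ioo_subset.1 (Filter.inter_mem hev (Ioo_mem_nhdsGT one_pos))
  set s0 := u / 2 with hs0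
  have hu0 : 0 < u := hu
  have hs0p : 0 < s0 := by positivity
  have hseg : ∀ s, 0 < s → s ≤ s0 → f p < f ((1 - s) • p) ∧ s < 1 := by
    intro s h1 h2
    have := hsub ⟨h1, by linarith⟩
    exact ⟨this.1, this.2.2⟩
  have hDs : ∀ s, 0 ≤ s → s ≤ s0 → (1 - s) • p ∈ DD := by
    intro s h1 h2
    have h3 := (hseg s0 hs0p le_rfl).2
    rw [mem_closedBall_zero_iff, norm_smul, hp, mul_one, Real.norm_eq_abs, abs_le]
    constructor <;> linarith
  set y0 := (1 - s0) • p with hy0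
  have hJ : JoinedIn {x | x ∈ DD ∧ f p ≤ f x} p y0 := by
    have hpath : IsPathConnected ((fun s : ℝ => (1 - s) • p) '' Set.Icc 0 s0) :=
      ((convex_Icc (0:ℝ) s0).isPathConnected ⟨0, by simp [hs0p.le]⟩).image (by fun_prop)
    refine (hpath.joinedIn p ⟨0, by simp [hs0p.le], by simp⟩ y0 ⟨s0, by simp [hs0p.le], rfl⟩).mono ?_
    rintro _ ⟨s, hs, rfl⟩
    refine ⟨hDs s hs.1 hs.2, ?_⟩
    rcases hs.1.eq_or_lt with h | h
    · simp [← h]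
    · exact (hseg s h hs.2).1.le
  have hy0m : y0 ∈ {x | x ∈ DD ∧ f p < f x} := ⟨hDs s0 hs0p.le le_rfl, (hseg s0 hs0p le_rfl).1⟩
  have hweak : {x | x ∈ DD ∧ f p < f x} ⊆ {x | x ∈ DD ∧ f p ≤ f x} := fun x hx => ⟨hx.1, hx.2.le⟩
  set U : Set E2 := {y | JoinedIn {x | x ∈ DD ∧ f p < f x} y0 y} with hU
  by_cases hS : ∃ p', ‖p'‖ = 1 ∧ p' ∈ U
  · obtain ⟨p', h1, h2⟩ := hS
    exact Or.inl ⟨p', h1, (JoinedIn.target_mem h2).2, hJ.trans (JoinedIn.mono h2 hweak)⟩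
  · push Not at hS
    right
    have hUD : closure U ⊆ DD := closure_minimal (fun y hy => (JoinedIn.target_mem hy).1)
      Metric.isClosed_closedBall
    have hcomp : IsCompact (closure U) := compact_DD.of_isClosed_subset isClosed_closure hUD
    have hy0U : y0 ∈ U := JoinedIn.refl hy0m
    obtain ⟨q, hq, hmax⟩ := hcomp.exists_isMaxOn ⟨y0, subset_closure hy0U⟩ hfc.continuousOn
    have hqf : f p < f q := hy0m.2.trans_le (hmax (subset_closure hy0U))
    have hqU : q ∈ U := by
      obtain ⟨N, hN, h1, -⟩ := locG_gt convex_DD hfc hqf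
      obtain ⟨v, hvN, hv⟩ := mem_closure_iff_nhds.1 hq N hN
      have hvm := JoinedIn.target_mem hv
      exact JoinedIn.trans hv (h1 v hvN q (mem_of_mem_nhds hN) hvm.1 (hUD hq) hvm.2 hqf)
    have hqb : q ∈ Metric.ball (0 : E2) 1 := by
      have h1 : ‖q‖ ≤ 1 := by simpa [DD] using hUD hq
      have h2 : ‖q‖ ≠ 1 := fun h => hS q h hqU
      simpa using lt_of_le_of_ne h1 h2
    refine ⟨q, hqb, ?_, ?_, ?_⟩
    · obtain ⟨N, hN, h1, -⟩ := locG_gt convex_DD hfc hqf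
      filter_upwards [hN, mem_DD_of_near hqb, hfc.continuousAt.eventually (lt_mem_nhds hqf)] with y hy hyD hyf
      refine hmax (subset_closure ?_)
      exact JoinedIn.trans hqU (h1 q (mem_of_mem_nhds hN) y hy (hUD hq) hyD hqf hyf)
    · intro p' hp' hj
      exact hS p' hp' (JoinedIn.trans hqU hj)
    · exact (hJ.trans (JoinedIn.mono hqU hweak)).symm

lemma neg_min {f : E2 → ℝ} (hf : ContDiff ℝ (⊤ : ℕ∞) f) {p : E2} (hp : ‖p‖ = 1)
    (hr : 0 < fderiv ℝ f p p) :
    (∃ p', ‖p'‖ = 1 ∧ f p' < f p ∧ JoinedIn {x | x ∈ DD ∧ f x ≤ f p} p p') ∨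
    (∃ q ∈ Metric.ball (0 : E2) 1, IsLocalMin f q ∧
      (∀ p', ‖p'‖ = 1 → ¬ JoinedIn {x | x ∈ DD ∧ f x < f p} q p') ∧
      JoinedIn {x | x ∈ DD ∧ f x ≤ f p} q p) := by
  have h := neg_max (f := fun x => - f x) hf.neg hp (by rw [fderiv_fun_neg]; simpa using hr)
  simp only [neg_lt_neg_iff, neg_le_neg_iff] at h
  refine h.imp id ?_
  rintro ⟨q, h1, h2, h3⟩
  refine ⟨q, h1, ?_, h3⟩
  have := h2.neg
  simpa using this

namespace Lad
variable {g : ℝ → ℝ} {K : ℕ} {th : ℕ → ℝ}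

lemma max_strict (L : Lad g K th) {k : ℕ} (hk : k < K) :
    ∀ᶠ t in nhds (th (2 * k + 1)), t ≠ th (2 * k + 1) → g t < g (th (2 * k + 1)) := by
  have h1 := L.mono (2 * k) (by omega)
  have h2 := L.mono (2 * k + 1) (by omega)
  filter_upwards [Ioo_mem_nhds h1 h2] with t ht hne
  rcases lt_or_gt_of_ne hne with h | h
  · exact L.monoOn hk.le ⟨ht.1.le, h.le⟩ (Set.right_mem_Icc.2 h1.le) h
  · exact L.antiOn hk (Set.left_mem_Icc.2 h2.le) ⟨h.le, ht.2.le⟩ h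

lemma min_strict (L : Lad g K th) {k : ℕ} (hk : k < K) :
    ∀ᶠ t in nhds (th (2 * k + 2)), t ≠ th (2 * k + 2) → g (th (2 * k + 2)) < g t := by
  have h1 := L.mono (2 * k + 1) (by omega)
  have h2 := L.mono (2 * k + 2) (by omega)
  filter_upwards [Ioo_mem_nhds h1 h2] with t ht hne
  rcases lt_or_gt_of_ne hne with h | h
  · exact L.antiOn hk ⟨ht.1.le, h.le⟩ (Set.right_mem_Icc.2 h1.le) h
  · have := L.monoOn (k := k + 1) (by omega)
    rw [show 2 * (k + 1) = 2 * k + 2 by ring] at this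
    exact this (Set.left_mem_Icc.2 h2.le) ⟨h.le, ht.2.le⟩ h

lemma node_of_crit (L : Lad g K th) {t : ℝ} (ht : t ∈ Set.Ico (th 0) (th 0 + 2 * Real.pi))
    (h0 : deriv g t = 0) : ∃ i ≤ 2 * K + 1, t = th i := by
  rcases le_or_gt t (th (2 * K + 1)) with h1 | h1
  · rcases L.exists_seg ht.1 h1 with ⟨k, hk, h2⟩ | ⟨k, hk, h2⟩
    · rcases h2.1.eq_or_lt with h3 | h3
      · exact ⟨2 * k, by omega, h3.symm⟩
      rcases h2.2.eq_or_lt with h4 | h4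
      · exact ⟨2 * k + 1, by omega, h4⟩
      · exact absurd h0 (L.up k hk t ⟨h3, h4⟩).ne'
    · exact absurd h0 (L.down k hk t h2).ne
  · exact absurd h0 (L.down_last t ⟨h1, ht.2⟩).ne

lemma level_node (L : Lad g K th) {i k : ℕ} (hi : i ≤ 2 * K + 1) (hk : k < K)
    (h1 : g (th (2 * k + 2)) ≤ g (th i)) (h2 : g (th i) < g (th (2 * k + 1))) : i = 2 * k + 2 := by
  rcases Nat.even_or_odd' i with ⟨j, rfl | rfl⟩
  · rcases lt_trichotomy j (k + 1) with h | h | h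
    · have e1 := L.even_le (j := j) (k := k) (by omega) (by omega)
      have e2 := L.even_lt hk
      linarith
    · omega
    · have e1 := L.even_le (j := k + 2) (k := j) (by omega) (by omega)
      have e2 := L.lev_next k (by omega)
      rw [show 2 * (k + 2) = 2 * k + 4 by ring] at e1
      linarith
  · rcases Nat.lt_or_ge j k with h | h
    · have := L.pair_lt h hk
      linarith
    · have := L.odd_le h (by omega)
      linarith
end Lad

/-- the classification of the critical point attached to a bad pair -/
def BadPt (f : E2 → ℝ) (M m : E2) (q : E2) : Prop :=
  (IsLocalMax f q ∧ (∀ p', ‖p'‖ = 1 → ¬ JoinedIn {x | x ∈ DD ∧ f M < f x} q p') ∧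
      JoinedIn {x | x ∈ DD ∧ f M ≤ f x} q M) ∨
  (IsLocalMin f q ∧ (∀ p', ‖p'‖ = 1 → ¬ JoinedIn {x | x ∈ DD ∧ f x < f m} q p') ∧
      JoinedIn {x | x ∈ DD ∧ f x ≤ f m} q m) ∨
  (f m ≤ f q ∧ f q ≤ f M ∧ ¬ IsLocalMax f q ∧ ¬ IsLocalMin f q)

lemma not_max_min {f : E2 → ℝ} (hfin : (critPts f).Finite) {q : E2} (hq : q ∈ critPts f)
    (h1 : IsLocalMax f q) (h2 : IsLocalMin f q) : False := by
  have h7 : ∀ᶠ y in nhds q, y ∉ critPts f \ {q} :=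
    (hfin.subset Set.sdiff_subset).isClosed.isOpen_compl.mem_nhds (by simp)
  have h8 : ∀ᶠ y in nhds q, y ∈ Metric.ball (0 : E2) 1 := Metric.isOpen_ball.mem_nhds hq.1
  have h9 : ∀ᶠ y in nhds q, ∀ᶠ z in nhds y, f z = f q :=
    eventually_eventually_nhds.2 (by filter_upwards [h1, h2] with z a b using le_antisymm a b)
  have h10 : ∀ᶠ y in nhds q, y = q := by
    filter_upwards [h7, h8, h9] with y h7 h8 h9
    by_contra hne
    refine h7 ⟨⟨h8, ?_⟩, hne⟩
    apply IsLocalMin.fderiv_eq_zero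
    filter_upwards [h9] with z hz
    rw [hz, h9.self_of_nhds]
  have h11 : (nhdsWithin q {q}ᶜ).NeBot := inferInstance
  have h12 : ∀ᶠ y in nhdsWithin q {q}ᶜ, False := by
    filter_upwards [nhdsWithin_le_nhds h10, self_mem_nhdsWithin] with y a b using b a
  exact h11.ne (Filter.empty_mem_iff_bot.1 h12)

lemma badPt_ne {f : E2 → ℝ} (hfin : (critPts f).Finite) {M m M' m' q : E2} (hq : q ∈ critPts f)
    (hM' : ‖M'‖ = 1) (hm : ‖m‖ = 1)
    (h1 : f m < f M) (h2 : f M < f m') (h3 : f m' < f M')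
    (hb : BadPt f M m q) (hb' : BadPt f M' m' q) : False := by
  rcases hb with ⟨a1, a2, a3⟩ | ⟨a1, a2, a3⟩ | ⟨a1, a2, a3, a4⟩ <;>
  rcases hb' with ⟨b1, b2, b3⟩ | ⟨b1, b2, b3⟩ | ⟨b1, b2, b3, b4⟩
  · exact a2 M' hM' (b3.mono fun x hx => ⟨hx.1, by linarith [hx.2]⟩)
  · exact not_max_min hfin hq a1 b1
  · exact b3 a1
  · exact not_max_min hfin hq b1 a1
  · exact b2 m hm (a3.mono fun x hx => ⟨hx.1, by linarith [hx.2]⟩)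
  · exact b4 a1
  · exact a3 b1
  · exact a4 b1
  · linarith

lemma bad_exists {g : ℝ → ℝ} {K : ℕ} {th : ℕ → ℝ} (L : Lad g K th) {f : E2 → ℝ}
    (hf : ContDiff ℝ (⊤ : ℕ∞) f) (hfg : ∀ t, f (sphPt t) = g t) (hfin : (critPts f).Finite)
    {k : ℕ} (hk : k < K)
    (hsign : (0 < fderiv ℝ f (sphPt (th (2 * k + 1))) (sphPt (th (2 * k + 1))) ∧
        fderiv ℝ f (sphPt (th (2 * k + 2))) (sphPt (th (2 * k + 2))) < 0) ∨
      (fderiv ℝ f (sphPt (th (2 * k + 1))) (sphPt (th (2 * k + 1))) < 0 ∧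
        0 < fderiv ℝ f (sphPt (th (2 * k + 2))) (sphPt (th (2 * k + 2))))) :
    ∃ q ∈ critPts f, BadPt f (sphPt (th (2 * k + 1))) (sphPt (th (2 * k + 2))) q := by
  have h0M := L.le_of_le (i := 0) (j := 2 * k + 1) (by omega) (by omega)
  have hMm := L.mono (2 * k + 1) (by omega)
  have hmt := L.le_of_le (i := 2 * k + 2) (j := 2 * K + 1) (by omega) (by omega)
  have hlp := L.lev_pair k hk
  have hlast := L.last
  have ha : StrictAntiOn g (Set.Icc (th (2 * k + 1)) (th (2 * k + 2))) := L.antiOn hk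
  have hlM : th (2 * k + 1) ∈ Set.Icc (th (2 * k + 1)) (th (2 * k + 2)) := Set.left_mem_Icc.2 hMm.le
  have hlm : th (2 * k + 2) ∈ Set.Icc (th (2 * k + 1)) (th (2 * k + 2)) := Set.right_mem_Icc.2 hMm.le
  have hge : ∀ t, th (2 * k + 1) ≤ t → t ≤ th (2 * K + 1) → g (th (2 * k + 2)) ≤ g t := by
    intro t h1 h2
    rcases le_or_gt t (th (2 * k + 2)) with h3 | h3
    · exact ha.antitoneOn ⟨h1, h3⟩ hlm h3
    · have := L.ge_even (k := k + 1) (t := t) (by omega) (by rw [show 2 * (k + 1) = 2 * k + 2 by ring]; exact h3.le) h2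
      rwa [show 2 * (k + 1) = 2 * k + 2 by ring] at this
  rcases hsign with ⟨hsM, hsm⟩ | ⟨hsM, hsm⟩
  · -- positive pair
    have hex := saddle_exists (f := f) hf hfin (M := sphPt (th (2 * k + 1)))
      (Q := sphPt (th (2 * K + 1))) (lm := g (th (2 * k + 2))) (sphPt_mem _) (sphPt_mem _)
      (strict_max_bdry hf hfg (L.max_strict hk) hsM)
    have fin : ∀ q, q ∈ critPts f ∧ g (th (2 * k + 2)) ≤ f q ∧ f q ≤ f (sphPt (th (2 * k + 1))) ∧
        ¬ IsLocalMax f q ∧ ¬ IsLocalMin f q → q ∈ critPts f ∧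
        BadPt f (sphPt (th (2 * k + 1))) (sphPt (th (2 * k + 2))) q := by
      rintro q ⟨hq, h⟩
      refine ⟨hq, Or.inr (Or.inr ?_)⟩
      rw [hfg (th (2 * k + 2))]; exact h
    refine (hex ?_ ?_ ?_).imp fin
    · rw [hfg, hfg]
      have h1 := L.odd_lt hk
      have h2 := L.odd_le (j := k + 1) (k := K) (by omega) le_rfl
      rw [show 2 * (k + 1) + 1 = 2 * k + 3 by ring] at h2
      linarith
    · intro c hc
      have hpath : IsPathConnected (sphPt '' Set.Icc (th (2 * k + 1)) (th (2 * K + 1))) :=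
        ((convex_Icc _ _).isPathConnected ⟨_, Set.left_mem_Icc.2 (hMm.le.trans hmt)⟩).image sphPt_cont
      refine (hpath.joinedIn _ ⟨_, Set.left_mem_Icc.2 (hMm.le.trans hmt), rfl⟩ _
        ⟨_, Set.right_mem_Icc.2 (hMm.le.trans hmt), rfl⟩).mono ?_
      rintro _ ⟨t, ht, rfl⟩
      refine ⟨sphPt_mem t, ?_⟩
      rw [hfg]
      exact hc.trans_le (hge t ht.1 ht.2)
    · intro x hx h1 h2
      obtain ⟨t, ht, rfl⟩ := exists_angle (th 0) hx
      by_cases h3 : deriv g t = 0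
      · obtain ⟨i, hi, rfl⟩ := L.node_of_crit ht h3
        rw [hfg] at h1
        rw [hfg, hfg] at h2
        obtain rfl := L.level_node hi hk h1 h2
        exact locGood_min_bdry (norm_sphPt _) (strict_min_bdry hf hfg (L.min_strict hk) hsm)
      · exact locGood_bdry hf hfg h3
  · -- negative pair
    rcases neg_max hf (norm_sphPt _) hsM with ⟨p, hp, hpf, hpj⟩ | ⟨q, hq, h1, h2⟩
    swap
    · exact ⟨q, ⟨hq, h1.fderiv_eq_zero⟩, Or.inl ⟨h1, h2⟩⟩
    rcases neg_min hf (norm_sphPt _) hsm with ⟨p', hp', hpf', hpj'⟩ | ⟨q, hq, h1, h2⟩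
    swap
    · exact ⟨q, ⟨hq, h1.fderiv_eq_zero⟩, Or.inr (Or.inl ⟨h1, h2⟩)⟩
    exfalso
    obtain ⟨c, hc, rfl⟩ := exists_angle (th 0) hp
    obtain ⟨d, hd, rfl⟩ := exists_angle (th 0) hp'
    rw [hfg, hfg] at hpf hpf'
    have hmc : th (2 * k + 2) < c := by
      by_contra h
      push Not at h
      rcases le_or_gt c (th (2 * k + 1)) with h1 | h1
      · have := L.le_odd hk.le hc.1 h1
        linarith
      · have := ha.antitoneOn hlM ⟨h1.le, h⟩ h1.le
        linarith
    have hd2 : d < th (2 * k + 1) ∨ th (2 * K + 1) < d := by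
      by_contra h
      push Not at h
      have := hge d h.1 h.2
      linarith
    obtain ⟨d', hd', h3, h4⟩ : ∃ d', sphPt d' = sphPt d ∧ c < d' ∧ d' < th (2 * k + 1) + 2 * Real.pi := by
      rcases hd2 with h | h
      · exact ⟨d + 2 * Real.pi, sphPt_periodic d, by linarith [hc.2, hd.1], by linarith⟩
      · refine ⟨d, rfl, ?_, by linarith [hd.2]⟩
        rcases le_or_gt c (th (2 * K + 1)) with h5 | h5
        · linarith
        · by_contra h6
          push Not at h6
          have := L.antiOn_last.antitoneOn ⟨h.le, hd.2.le⟩ ⟨h5.le, hc.2.le⟩ h6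
          linarith
    rw [← hd'] at hpj'
    obtain ⟨α, hα⟩ := hpj
    obtain ⟨β, hβ⟩ := hpj'
    obtain ⟨s, t, hst⟩ := cross_disk hMm hmc h3 h4 α β
      (fun s => by simpa [DD] using (hα s).1) (fun s => by simpa [DD] using (hβ s).1)
    have e1 := (hα s).2
    have e2 := (hβ t).2
    rw [hst] at e1
    rw [hfg] at e1 e2
    linarith

open Classical in
theorem lower_bound {g : ℝ → ℝ} {K : ℕ} {th : ℕ → ℝ} (L : Lad g K th) {f : E2 → ℝ}
    (hf : ContDiff ℝ (⊤ : ℕ∞) f) (hfg : ∀ t, f (sphPt t) = g t) (B : Finset ℕ)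
    (hB : ∀ k ∈ B, k < K)
    (hsign : ∀ k ∈ B, (0 < fderiv ℝ f (sphPt (th (2 * k + 1))) (sphPt (th (2 * k + 1))) ∧
        fderiv ℝ f (sphPt (th (2 * k + 2))) (sphPt (th (2 * k + 2))) < 0) ∨
      (fderiv ℝ f (sphPt (th (2 * k + 1))) (sphPt (th (2 * k + 1))) < 0 ∧
        0 < fderiv ℝ f (sphPt (th (2 * k + 2))) (sphPt (th (2 * k + 2))))) :
    (B.card : ℕ∞) ≤ (critPts f).encard := by
  by_cases hfin : (critPts f).Finite
  swap
  · rw [Set.Infinite.encard_eq hfin]; exact le_top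
  have hex : ∀ k, ∃ q, k ∈ B → q ∈ critPts f ∧
      BadPt f (sphPt (th (2 * k + 1))) (sphPt (th (2 * k + 2))) q := by
    intro k
    by_cases hk : k ∈ B
    · obtain ⟨q, h1, h2⟩ := bad_exists L hf hfg hfin (hB k hk) (hsign k hk)
      exact ⟨q, fun _ => ⟨h1, h2⟩⟩
    · exact ⟨0, fun h => absurd h hk⟩
  choose q hq using hex
  have key : ∀ j ∈ B, ∀ k ∈ B, j < k → q j ≠ q k := by
    intro j hj k hk hjk he
    have h1 := hq j hj
    have h2 := hq k hk
    rw [← he] at h2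
    refine badPt_ne hfin h1.1 (norm_sphPt _) (norm_sphPt _) ?_ ?_ ?_ h1.2 h2.2
    · rw [hfg, hfg]; exact L.lev_pair j (hB j hj)
    · rw [hfg, hfg]; exact L.pair_lt hjk (hB k hk)
    · rw [hfg, hfg]; exact L.lev_pair k (hB k hk)
  have hinj : Set.InjOn q (B : Set ℕ) := by
    intro j hj k hk he
    rcases lt_trichotomy j k with h | h | h
    · exact absurd he (key j hj k hk h)
    · exact h
    · exact absurd he.symm (key k hk j hj h)
  rw [← Set.encard_coe_eq_coe_finsetCard]
  exact Set.encard_le_encard_of_injOn (fun k hk => (hq k hk).1) hinj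

lemma sphPt_eq_iff {a b : ℝ} (h : sphPt a = sphPt b) : ∃ k : ℤ, a = b + k * (2 * Real.pi) := by
  have h1 := congrArg toC h
  rw [toC_sphPt, toC_sphPt] at h1
  obtain ⟨k, hk⟩ := Complex.exp_eq_exp_iff_exists_int.1 h1
  refine ⟨k, ?_⟩
  have := congrArg Complex.im hk
  simpa using this

lemma toC_smul (r : ℝ) (x : E2) : toC (r • x) = r * toC x := by
  apply Complex.ext <;> simp [toC]

lemma angA_smul (θ : ℝ) {r : ℝ} (hr : 0 < r) (x : E2) : angA θ (r • x) = angA θ x := by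
  unfold angA
  rw [toC_smul, mul_assoc, Complex.arg_real_mul _ hr]

lemma toC_smooth : ContDiff ℝ (⊤ : ℕ∞) toC := by
  have : toC = fun x : E2 => ((x 0 : ℝ) : ℂ) + (x 1 : ℝ) * Complex.I := by
    funext x; apply Complex.ext <;> simp [toC]
  rw [this]
  have h : ContDiff ℝ (⊤ : ℕ∞) (fun x : ℝ => (x : ℂ)) := Complex.ofRealCLM.contDiff
  have h0 : ContDiff ℝ (⊤ : ℕ∞) (fun x : E2 => x 0) := by fun_prop
  have h1 : ContDiff ℝ (⊤ : ℕ∞) (fun x : E2 => x 1) := by fun_prop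
  exact (h.comp h0).add ((h.comp h1).mul contDiff_const)

lemma angA_smooth (θ : ℝ) {r : ℝ} (hr : 0 < r) :
    ContDiffAt ℝ (⊤ : ℕ∞) (angA θ) (r • sphPt θ) := by
  have h1 : ContDiffAt ℝ (⊤ : ℕ∞) (fun y : E2 => toC y * Complex.exp (-(θ * Complex.I))) (r • sphPt θ) :=
    (toC_smooth.mul contDiff_const).contDiffAt
  have hval : toC (r • sphPt θ) * Complex.exp (-(θ * Complex.I)) = r := by
    rw [toC_smul, toC_sphPt, mul_assoc, ← Complex.exp_add]; simp
  have h2 : ContDiffAt ℝ (⊤ : ℕ∞) Complex.log (toC (r • sphPt θ) * Complex.exp (-(θ * Complex.I))) := by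
    rw [hval]
    exact (Complex.contDiffAt_log (Complex.ofReal_mem_slitPlane.2 hr)).restrict_scalars ℝ
  have h3 := ContDiffAt.comp (r • sphPt θ) h2 h1
  have h4 := (contDiffAt_const (c := θ)).add
    (ContDiffAt.comp (r • sphPt θ) (Complex.imCLM.contDiff.contDiffAt) h3)
  have e : angA θ = fun x => θ + (Complex.imCLM ∘ Complex.log ∘ fun y : E2 =>
      toC y * Complex.exp (-(θ * Complex.I))) x := by
    funext x
    simp only [angA, Function.comp, Complex.imCLM_apply, Complex.log_im]
  rw [e]
  exact h4

lemma polar_ext (H : ℝ → ℝ → ℝ) (hper : ∀ r, Function.Periodic (H r) (2 * Real.pi))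
    (hsm : ∀ r > 0, ∀ t, ContDiffAt ℝ (⊤ : ℕ∞) (Function.uncurry H) (r, t))
    (E0 : E2 → ℝ) {ε : ℝ} (hε : 0 < ε) (hE : ∀ x ∈ Metric.ball (0 : E2) ε, ContDiffAt ℝ (⊤ : ℕ∞) E0 x)
    (hEH : ∀ r t, 0 ≤ r → r < ε → E0 (r • sphPt t) = H r t) :
    ∃ f : E2 → ℝ, ContDiff ℝ (⊤ : ℕ∞) f ∧ (∀ r t, 0 ≤ r → f (r • sphPt t) = H r t) ∧
      (∀ x ∈ Metric.ball (0 : E2) ε, f x = E0 x) := by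
  have hHeq : ∀ r a b, sphPt a = sphPt b → H r a = H r b := by
    intro r a b h
    obtain ⟨k, rfl⟩ := sphPt_eq_iff h
    exact (hper r).int_mul k b
  have hang : ∀ θ (x : E2), x ≠ 0 → ‖x‖ • sphPt (angA θ x) = x := by
    intro θ x hx
    have hn : 0 < ‖x‖ := norm_pos_iff.2 hx
    have h1 : ‖‖x‖⁻¹ • x‖ = 1 := by rw [norm_smul, norm_inv, norm_norm]; field_simp
    have h2 := sphPt_angA θ h1
    rw [angA_smul θ (inv_pos.2 hn)] at h2
    rw [h2, smul_smul, mul_inv_cancel₀ hn.ne', one_smul]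
  have hpos : ∀ r t, 0 < r → H ‖r • sphPt t‖ (angA 0 (r • sphPt t)) = H r t := by
    intro r t hr
    have h1 : ‖r • sphPt t‖ = r := by rw [norm_smul, norm_sphPt, mul_one, Real.norm_eq_abs, abs_of_pos hr]
    rw [h1, angA_smul 0 hr]
    exact hHeq _ _ _ (sphPt_angA 0 (norm_sphPt t))
  set f : E2 → ℝ := fun x => if x = 0 then E0 0 else H ‖x‖ (angA 0 x) with hf
  have hfp : ∀ r t, 0 < r → f (r • sphPt t) = H r t := by
    intro r t hr
    have hne : r • sphPt t ≠ 0 := by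
      rw [← norm_pos_iff, norm_smul, norm_sphPt, mul_one]; simpa using hr.ne'
    simp only [hf, hne, if_false]
    exact hpos r t hr
  have hf0 : ∀ r t, 0 ≤ r → f (r • sphPt t) = H r t := by
    intro r t hr
    rcases hr.eq_or_lt with rfl | h
    · have := hEH 0 t le_rfl hε
      rw [zero_smul] at this ⊢
      simp only [hf, if_true]; exact this
    · exact hfp r t h
  have hfE : ∀ x ∈ Metric.ball (0 : E2) ε, f x = E0 x := by
    intro x hx
    by_cases hx0 : x = 0
    · simp [hf, hx0]
    · have hxn : ‖x‖ < ε := by simpa using hx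
      rw [← hang 0 x hx0, hf0 _ _ (norm_nonneg x), hEH _ _ (norm_nonneg x) hxn]
  refine ⟨f, ?_, hf0, hfE⟩
  rw [contDiff_iff_contDiffAt]
  intro x
  by_cases hx : x = 0
  · have hxb : x ∈ Metric.ball (0 : E2) ε := by rw [hx]; exact Metric.mem_ball_self hε
    refine (hE x hxb).congr_of_eventuallyEq ?_
    filter_upwards [Metric.isOpen_ball.mem_nhds hxb] with y hy using hfE y hy
  · set θ := angA 0 x with hθ
    have hxx := hang 0 x hx
    have hn : 0 < ‖x‖ := norm_pos_iff.2 hx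
    have h1 : ContDiffAt ℝ (⊤ : ℕ∞) (fun y : E2 => (‖y‖, angA θ y)) x := by
      refine ContDiffAt.prodMk (contDiffAt_norm ℝ hx) ?_
      have := angA_smooth θ hn
      rwa [hxx] at this
    have h2 := ContDiffAt.comp x (g := Function.uncurry H) (hsm ‖x‖ hn (angA θ x)) h1
    refine h2.congr_of_eventuallyEq ?_
    filter_upwards [isOpen_compl_singleton.mem_nhds hx] with y hy
    have h3 := hang θ y hy
    conv_lhs => rw [← h3]
    rw [hf0 _ _ (norm_nonneg y)]
    rfl

lemma interp_aux (y w : ℕ → ℝ) (n : ℕ) (hy : ∀ i, i < n → y i < y (i + 1))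
    (hw : ∀ i, i < n → w i < w (i + 1)) :
    ∃ W : ℝ → ℝ, ContDiff ℝ (⊤ : ℕ∞) W ∧ Monotone W ∧ (∀ i, i ≤ n → W (y i) = w i) ∧
      ∀ x, y n ≤ x → W x = w n := by
  induction n with
  | zero =>
    refine ⟨fun _ => w 0, contDiff_const, monotone_const, ?_, ?_⟩
    · intro i hi; obtain rfl : i = 0 := by omega
      rfl
    · intros; rfl
  | succ n ih =>
    obtain ⟨W, h1, h2, h3, h4⟩ := ih (fun i hi => hy i (by omega)) (fun i hi => hw i (by omega))
    have hyn := hy n (by omega)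
    have hwn := hw n (by omega)
    have hle : ∀ i, i ≤ n → y i ≤ y n := by
      intro i hi
      induction n, hi using Nat.le_induction with
      | base => exact le_rfl
      | succ m hm ihm =>
        clear ihm h3 h4
        have : ∀ j, j ≤ m + 1 → i ≤ j → y i ≤ y j := by
          intro j hj hij
          induction j, hij using Nat.le_induction with
          | base => exact le_rfl
          | succ p hp ihp => exact (ihp (by omega)).trans (hy p (by omega)).le
        exact this (m + 1) le_rfl (by omega)
    refine ⟨fun x => W x + (w (n + 1) - w n) * Real.smoothTransition ((x - y n) / (y (n + 1) - y n)),
      ?_, ?_, ?_, ?_⟩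
    · refine h1.add (contDiff_const.mul (Real.smoothTransition.contDiff.comp ?_))
      exact (contDiff_id.sub contDiff_const).div_const _
    · intro a b hab
      have e1 := h2 hab
      have e2 : (a - y n) / (y (n + 1) - y n) ≤ (b - y n) / (y (n + 1) - y n) := by
        apply div_le_div_of_nonneg_right <;> linarith
      have e3 := Real.smoothTransition.monotone e2
      have := mul_le_mul_of_nonneg_left e3 (sub_nonneg.2 hwn.le)
      show W a + _ ≤ W b + _
      linarith
    · intro i hi
      rcases Nat.lt_or_ge n i with h | h
      · obtain rfl : i = n + 1 := by omega
        show W _ + _ = _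
        rw [h4 _ hyn.le, div_self (by linarith), Real.smoothTransition.one]; ring
      · show W _ + _ = _
        rw [h3 i h, Real.smoothTransition.zero_of_nonpos]
        · ring
        · apply div_nonpos_of_nonpos_of_nonneg
          · linarith [hle i h]
          · linarith
    · intro x hx
      show W _ + _ = _
      rw [h4 _ (hyn.le.trans hx), Real.smoothTransition.one_of_one_le]
      · ring
      · rw [le_div_iff₀ (by linarith)]; linarith

lemma interp (y w : ℕ → ℝ) (n : ℕ) (hy : ∀ i, i < n → y i < y (i + 1))
    (hw : ∀ i, i < n → w i < w (i + 1)) :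
    ∃ W : ℝ → ℝ, ContDiff ℝ (⊤ : ℕ∞) W ∧ (∀ x, 0 < deriv W x) ∧ (∀ i, i ≤ n → W (y i) = w i) := by
  have hε : ∃ ε : ℝ, 0 < ε ∧ ∀ i, i < n → w i - ε * y i < w (i + 1) - ε * y (i + 1) := by
    have h1 : ∀ᶠ ε : ℝ in nhdsWithin 0 (Set.Ioi 0), ∀ i ∈ Finset.range n,
        w i - ε * y i < w (i + 1) - ε * y (i + 1) := by
      rw [Filter.eventually_all_finset]
      intro i hi
      apply Filter.Eventually.filter_mono nhdsWithin_le_nhds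
      have c1 : Continuous fun ε : ℝ => w i - ε * y i := by fun_prop
      have c2 : Continuous fun ε : ℝ => w (i + 1) - ε * y (i + 1) := by fun_prop
      refine (c1.tendsto 0).eventually_lt (c2.tendsto 0) ?_
      simpa using hw i (Finset.mem_range.1 hi)
    obtain ⟨ε, a, b⟩ := (h1.and self_mem_nhdsWithin).exists
    exact ⟨ε, b, fun i hi => a i (Finset.mem_range.2 hi)⟩
  obtain ⟨ε, he, hlt⟩ := hε
  obtain ⟨W, h1, h2, h3, -⟩ := interp_aux y (fun i => w i - ε * y i) n hy hlt
  refine ⟨fun x => W x + ε * x, h1.add (contDiff_const.mul contDiff_id), ?_, ?_⟩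
  · intro x
    have hd := ((h1.differentiable (by simp) x).hasDerivAt).add ((hasDerivAt_id x).const_mul ε)
    rw [HasDerivAt.deriv (f := fun x => W x + ε * x) hd]
    have := h2.deriv_nonneg (x := x)
    linarith
  · intro i hi
    show W _ + _ = _
    rw [h3 i hi]; ring

lemma Lad.levels {g : ℝ → ℝ} {K : ℕ} {th : ℕ → ℝ} (L : Lad g K th) (hK : 0 < K) (sM sm : ℕ → Prop) :
    ∃ w : ℕ → ℝ, (∀ i, i < 2 * K + 1 → w i < w (i + 1)) ∧ g (th 0) < w 0 ∧
      w (2 * K + 1) < g (th (2 * K + 1)) ∧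
      ∀ k, k < K → (¬ sm k → w (2 * k + 1) < g (th (2 * k + 1)) ∧ w (2 * k + 2) < g (th (2 * k + 2))) ∧
        (sm k → ¬ sM k → g (th (2 * k + 1)) < w (2 * k + 1) ∧ g (th (2 * k + 2)) < w (2 * k + 2)) ∧
        (sm k → sM k → w (2 * k + 1) < g (th (2 * k + 1)) ∧ g (th (2 * k + 2)) < w (2 * k + 2)) := by
  have hC : ∀ k, ∃ c : ℝ, k ≤ K → (k = 0 → g (th 0) < c) ∧ (∀ j, j + 1 = k → g (th (2 * j + 1)) < c) ∧
      (k < K → c < g (th (2 * k + 2))) ∧ (k = K → c < g (th (2 * K + 1))) := by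
    intro k
    by_cases hk : k ≤ K
    swap
    · exact ⟨0, fun h => absurd h hk⟩
    rcases Nat.eq_zero_or_pos k with rfl | hk0
    · obtain ⟨c, h1, h2⟩ := exists_between (L.lev_zero hK)
      exact ⟨c, fun _ => ⟨fun _ => h1, fun j hj => by omega, fun _ => by simpa using h2, fun h => by omega⟩⟩
    · obtain ⟨j, rfl⟩ : ∃ j, k = j + 1 := ⟨k - 1, by omega⟩
      rcases hk.eq_or_lt with h | h
      · obtain ⟨c, h1, h2⟩ := exists_between (L.lev_last j h)
        refine ⟨c, fun _ => ⟨fun h => by omega, fun i hi => ?_, fun _ => by omega, fun _ => h2⟩⟩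
        obtain rfl : i = j := by omega
        exact h1
      · obtain ⟨c, h1, h2⟩ := exists_between (L.lev_next j h)
        refine ⟨c, fun _ => ⟨fun h => by omega, fun i hi => ?_, fun _ => ?_, fun _ => by omega⟩⟩
        · obtain rfl : i = j := by omega
          exact h1
        · rwa [show 2 * (j + 1) + 2 = 2 * j + 4 by ring]
  choose C hC using hC
  have hab : ∀ k, ∃ a b : ℝ, k < K → C k < a ∧ a < b ∧ b < C (k + 1) ∧
      (¬ sm k → a < g (th (2 * k + 1)) ∧ b < g (th (2 * k + 2))) ∧
        (sm k → ¬ sM k → g (th (2 * k + 1)) < a ∧ g (th (2 * k + 2)) < b) ∧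
        (sm k → sM k → a < g (th (2 * k + 1)) ∧ g (th (2 * k + 2)) < b) := by
    intro k
    by_cases hk : k < K
    swap
    · exact ⟨0, 0, fun h => absurd h hk⟩
    have h1 := (hC k hk.le).2.2.1 hk
    have h2 := L.lev_pair k hk
    have h3 := (hC (k + 1) hk).2.1 k rfl
    by_cases hm : sm k
    · by_cases hM : sM k
      · obtain ⟨b, b1, b2⟩ := exists_between h2
        obtain ⟨a, a1, a2⟩ := exists_between b1
        exact ⟨a, b, fun _ => ⟨by linarith, a2, by linarith, fun h => absurd hm h, fun _ h => absurd hM h,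
          fun _ _ => ⟨by linarith, by linarith⟩⟩⟩
      · obtain ⟨b, b1, b2⟩ := exists_between h3
        obtain ⟨a, a1, a2⟩ := exists_between b1
        exact ⟨a, b, fun _ => ⟨by linarith, a2, by linarith, fun h => absurd hm h,
          fun _ _ => ⟨by linarith, by linarith⟩, fun _ h => absurd h hM⟩⟩
    · obtain ⟨b, b1, b2⟩ := exists_between h1
      obtain ⟨a, a1, a2⟩ := exists_between b1
      exact ⟨a, b, fun _ => ⟨by linarith, a2, by linarith, fun _ => ⟨by linarith, by linarith⟩,
        fun h => absurd h hm, fun h => absurd h hm⟩⟩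
  choose a b hab using hab
  obtain ⟨w0, hw0, hw0'⟩ := exists_between ((hC 0 hK.le).1 rfl)
  obtain ⟨wl, hwl, hwl'⟩ := exists_between ((hC K le_rfl).2.2.2 rfl)
  set w : ℕ → ℝ := fun i => if i = 0 then w0 else if i = 2 * K + 1 then wl else
    if i % 2 = 1 then a (i / 2) else b (i / 2 - 1) with hw
  have e0 : w 0 = w0 := by simp [hw]
  have el : w (2 * K + 1) = wl := by simp [hw]
  have ea : ∀ k, k < K → w (2 * k + 1) = a k := by
    intro k hk
    simp only [hw]
    rw [if_neg (by omega), if_neg (by omega), if_pos (by omega)]; congr 1; omega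
  have eb : ∀ k, k < K → w (2 * k + 2) = b k := by
    intro k hk
    simp only [hw]
    rw [if_neg (by omega), if_neg (by omega), if_neg (by omega)]; congr 1; omega
  refine ⟨w, ?_, by rw [e0]; exact hw0, by rw [el]; exact hwl', ?_⟩
  · intro i hi
    rcases Nat.eq_zero_or_pos i with rfl | hi0
    · rw [e0]
      have := ea 0 hK
      simp only [Nat.mul_zero] at this
      rw [this]
      linarith [(hab 0 hK).1]
    · rcases Nat.even_or_odd' i with ⟨k, rfl | rfl⟩
      · obtain ⟨j, rfl⟩ : ∃ j, k = j + 1 := ⟨k - 1, by omega⟩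
        have e1 := eb j (by omega)
        rw [show 2 * (j + 1) = 2 * j + 2 by ring, e1]
        have h2 := (hab j (by omega)).2.2.1
        by_cases h : j + 1 = K
        · rw [show 2 * j + 2 + 1 = 2 * K + 1 by omega, el]
          rw [h] at h2; linarith
        · rw [show 2 * j + 2 + 1 = 2 * (j + 1) + 1 by ring, ea (j + 1) (by omega)]
          linarith [(hab (j + 1) (by omega)).1]
      · rw [show 2 * k + 1 + 1 = 2 * k + 2 by ring, ea k (by omega), eb k (by omega)]
        exact (hab k (by omega)).2.1
  · intro k hk
    rw [ea k hk, eb k hk]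
    exact (hab k hk).2.2.2

def ee (mid ch s t : ℝ) : ℝ := s * Real.sin (t - mid) / (1 - s * ch * Real.cos (t - mid))

lemma den_pos {ch s c : ℝ} (hch : |ch| < 1) (hs : |s| ≤ 1) (hc : |c| ≤ 1) : 0 < 1 - s * ch * c := by
  have h1 : |s * ch * c| < 1 := by
    rw [abs_mul, abs_mul]
    have h2 : |s| * |ch| < 1 := by
      calc |s| * |ch| ≤ 1 * |ch| := mul_le_mul_of_nonneg_right hs (abs_nonneg _)
        _ < 1 := by linarith
    calc |s| * |ch| * |c| ≤ |s| * |ch| * 1 := mul_le_mul_of_nonneg_left hc (by positivity)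
      _ < 1 := by linarith
  linarith [(abs_lt.1 h1).2]

lemma den_pos' {ch s : ℝ} (hch : |ch| < 1) (hs : |s| ≤ 1) (u : ℝ) : 0 < 1 - s * ch * Real.cos u :=
  den_pos hch hs (Real.abs_cos_le_one u)

lemma ee_deriv_t {mid ch s t : ℝ} (hd : 1 - s * ch * Real.cos (t - mid) ≠ 0) :
    HasDerivAt (fun t => ee mid ch s t)
      (s * (Real.cos (t - mid) - s * ch) / (1 - s * ch * Real.cos (t - mid)) ^ 2) t := by
  have h0 : HasDerivAt (fun t : ℝ => t - mid) 1 t := (hasDerivAt_id t).sub_const mid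
  have h1 := (h0.sin).const_mul s
  have h2 := ((h0.cos).const_mul (s * ch)).const_sub 1
  have h3 := h1.div h2 hd
  refine h3.congr_deriv ?_
  congr 1
  have := Real.sin_sq_add_cos_sq (t - mid)
  linear_combination s * s * ch * this * (-1)

lemma ee_deriv_s {mid ch s t : ℝ} (hd : 1 - s * ch * Real.cos (t - mid) ≠ 0) :
    HasDerivAt (fun s => ee mid ch s t)
      (Real.sin (t - mid) / (1 - s * ch * Real.cos (t - mid)) ^ 2) s := by
  have h1 := (hasDerivAt_id s).mul_const (Real.sin (t - mid))
  have h2 := (((hasDerivAt_id s).mul_const ch).mul_const (Real.cos (t - mid))).const_sub 1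
  have h3 := h1.div h2 hd
  refine h3.congr_deriv ?_
  congr 1
  simp only [id]
  ring

lemma ee_smooth {mid ch s t : ℝ} (hd : 1 - s * ch * Real.cos (t - mid) ≠ 0) :
    ContDiffAt ℝ (⊤ : ℕ∞) (fun p : ℝ × ℝ => ee mid ch p.1 p.2) (s, t) := by
  unfold ee
  refine ContDiffAt.div ?_ ?_ hd
  · refine contDiffAt_fst.mul (Real.contDiff_sin.contDiffAt.comp _ (contDiffAt_snd.sub contDiffAt_const))
  · exact contDiffAt_const.sub ((contDiffAt_fst.mul contDiffAt_const).mul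
      (Real.contDiff_cos.contDiffAt.comp _ (contDiffAt_snd.sub contDiffAt_const)))

lemma ee_per (mid ch s : ℝ) : Function.Periodic (ee mid ch s) (2 * Real.pi) := by
  intro t
  unfold ee
  rw [show t + 2 * Real.pi - mid = t - mid + 2 * Real.pi by ring, Real.sin_add_two_pi, Real.cos_add_two_pi]

lemma GG_deriv {W : ℝ → ℝ} (hW : ContDiff ℝ (⊤ : ℕ∞) W) {mid ch : ℝ} (hch : |ch| < 1) (t : ℝ) :
    HasDerivAt (fun t => W (ee mid ch 1 t))
      (deriv W (ee mid ch 1 t) * ((Real.cos (t - mid) - ch) / (1 - ch * Real.cos (t - mid)) ^ 2)) t := by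
  have hd : 1 - 1 * ch * Real.cos (t - mid) ≠ 0 := (den_pos' hch (by simp) _).ne'
  have h1 := ee_deriv_t hd
  have h2 := (hW.differentiable (by simp) (ee mid ch 1 t)).hasDerivAt
  have h3 := h2.comp t h1
  simp only [one_mul] at h3
  exact h3

lemma GG_smooth {W : ℝ → ℝ} (hW : ContDiff ℝ (⊤ : ℕ∞) W) {mid ch : ℝ} (hch : |ch| < 1) :
    ContDiff ℝ (⊤ : ℕ∞) (fun t => W (ee mid ch 1 t)) := by
  rw [contDiff_iff_contDiffAt]
  intro t
  have hd : 1 - 1 * ch * Real.cos (t - mid) ≠ 0 := (den_pos' hch (by simp) _).ne'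
  exact hW.contDiffAt.comp t (ContDiffAt.comp t (ee_smooth hd)
    (contDiffAt_const.prodMk contDiffAt_id))

lemma Lad.exists_W {g : ℝ → ℝ} {K : ℕ} {th : ℕ → ℝ} (L : Lad g K th) (hK : 0 < K) (sM sm : ℕ → Prop) :
    ∃ (mid ch : ℝ) (W : ℝ → ℝ), |ch| < 1 ∧ ContDiff ℝ (⊤ : ℕ∞) W ∧ (∀ x, 0 < deriv W x) ∧
      (∀ t ∈ Set.Ioo (th 0) (th (2 * K + 1)), 0 < deriv (fun t => W (ee mid ch 1 t)) t) ∧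
      (∀ t ∈ Set.Ioo (th (2 * K + 1)) (th 0 + 2 * Real.pi), deriv (fun t => W (ee mid ch 1 t)) t < 0) ∧
      (∀ t, Real.cos (t - mid) = ch → 0 < (g t - W (ee mid ch 1 t)) * Real.sin (t - mid)) ∧
      g (th 0) < W (ee mid ch 1 (th 0)) ∧ W (ee mid ch 1 (th (2 * K + 1))) < g (th (2 * K + 1)) ∧
      ∀ k, k < K → (¬ sm k → W (ee mid ch 1 (th (2 * k + 1))) < g (th (2 * k + 1)) ∧
          W (ee mid ch 1 (th (2 * k + 2))) < g (th (2 * k + 2))) ∧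
        (sm k → ¬ sM k → g (th (2 * k + 1)) < W (ee mid ch 1 (th (2 * k + 1))) ∧
          g (th (2 * k + 2)) < W (ee mid ch 1 (th (2 * k + 2)))) ∧
        (sm k → sM k → W (ee mid ch 1 (th (2 * k + 1))) < g (th (2 * k + 1)) ∧
          g (th (2 * k + 2)) < W (ee mid ch 1 (th (2 * k + 2)))) := by
  obtain ⟨w, w1, w2, w3, w4⟩ := L.levels hK sM sm
  set t0 := th 0 with ht0
  set t1 := th (2 * K + 1) with ht1
  have h01 : t0 < t1 := L.lt_of_lt (by omega) (by omega)
  have hl := L.last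
  rw [← ht0, ← ht1] at hl
  set mid := (t0 + t1) / 2 with hmid
  set h := (t1 - t0) / 2 with hh
  have hpos : 0 < h := by linarith
  have hpi : h < Real.pi := by linarith
  have hsin : 0 < Real.sin h := Real.sin_pos_of_pos_of_lt_pi hpos hpi
  have hch : |Real.cos h| < 1 := by
    rw [← sq_lt_one_iff_abs_lt_one]
    nlinarith [Real.sin_sq_add_cos_sq h]
  have c_in : ∀ t ∈ Set.Ioo t0 t1, Real.cos h < Real.cos (t - mid) := by
    intro t ht
    rw [← Real.cos_abs (t - mid)]
    apply Real.cos_lt_cos_of_nonneg_of_le_pi (abs_nonneg _) hpi.le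
    rw [abs_lt]; constructor <;> linarith [ht.1, ht.2]
  have c_out : ∀ t ∈ Set.Ioo t1 (t0 + 2 * Real.pi), Real.cos (t - mid) < Real.cos h := by
    intro t ht
    rcases le_total (t - mid) Real.pi with h1 | h1
    · apply Real.cos_lt_cos_of_nonneg_of_le_pi hpos.le h1
      linarith [ht.1]
    · rw [← Real.cos_two_pi_sub]
      apply Real.cos_lt_cos_of_nonneg_of_le_pi hpos.le (by linarith)
      linarith [ht.2]
  have dpos : ∀ t, 0 < (1 - Real.cos h * Real.cos (t - mid)) ^ 2 := by
    intro t
    have := den_pos' hch (s := 1) (by simp) (t - mid)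
    rw [one_mul] at this
    positivity
  have hmono : StrictMonoOn (fun t => ee mid (Real.cos h) 1 t) (Set.Icc t0 t1) := by
    have hdd : ∀ t, HasDerivAt (fun t => ee mid (Real.cos h) 1 t)
        (1 * (Real.cos (t - mid) - 1 * Real.cos h) / (1 - 1 * Real.cos h * Real.cos (t - mid)) ^ 2) t :=
      fun t => ee_deriv_t (den_pos' hch (by simp) _).ne'
    apply strictMonoOn_of_deriv_pos (convex_Icc _ _)
    · exact fun t _ => (hdd t).continuousAt.continuousWithinAt
    · intro t ht
      rw [interior_Icc] at ht
      rw [(hdd t).deriv]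
      have := c_in t ht
      have := dpos t
      simp only [one_mul]
      apply div_pos <;> linarith
  have hmem : ∀ i, i ≤ 2 * K + 1 → th i ∈ Set.Icc t0 t1 := fun i hi =>
    ⟨L.le_of_le (by omega) (by omega), L.le_of_le (by omega) (by omega)⟩
  obtain ⟨W, W1, W2, W3⟩ := interp (fun i => ee mid (Real.cos h) 1 (th i)) w (2 * K + 1)
    (fun i hi => hmono (hmem i (by omega)) (hmem (i + 1) (by omega)) (L.mono i hi)) w1
  have v0 : g t0 < W (ee mid (Real.cos h) 1 t0) := by
    have := W3 0 (by omega)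
    rw [← ht0] at this
    rw [this]; exact w2
  have v1 : W (ee mid (Real.cos h) 1 t1) < g t1 := by
    have := W3 (2 * K + 1) (by omega)
    rw [← ht1] at this
    rw [this]; exact w3
  have hperG : Function.Periodic (fun t => W (ee mid (Real.cos h) 1 t)) (2 * Real.pi) := by
    intro t
    show W _ = W _
    rw [ee_per]
  refine ⟨mid, Real.cos h, W, hch, W1, W2, ?_, ?_, ?_, v0, v1, ?_⟩
  · intro t ht
    rw [(GG_deriv W1 hch t).deriv]
    have := c_in t ht
    exact mul_pos (W2 _) (div_pos (by linarith) (dpos t))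
  · intro t ht
    rw [(GG_deriv W1 hch t).deriv]
    have := c_out t ht
    exact mul_neg_of_pos_of_neg (W2 _) (div_neg_of_neg_of_pos (by linarith) (dpos t))
  · intro t ht
    obtain ⟨k, hk | hk⟩ := Real.cos_eq_cos_iff.1 ht
    · have e : t = t1 + (-k : ℤ) * (2 * Real.pi) := by push_cast; linarith
      have e1 := L.per.int_mul (-k) t1
      have e2 := hperG.int_mul (-k) t1
      have e3 : Real.sin (t - mid) = Real.sin h := by
        rw [hk, add_comm, show 2 * (k : ℝ) * Real.pi = k * (2 * Real.pi) by ring,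
          Real.sin_add_int_mul_two_pi]
      rw [← e] at e1 e2
      rw [e3, e1, e2]
      exact mul_pos (by linarith) hsin
    · have e : t = t0 + (k : ℤ) * (2 * Real.pi) := by linarith
      have e1 := L.per.int_mul k t0
      have e2 := hperG.int_mul k t0
      have e3 : Real.sin (t - mid) = - Real.sin h := by
        have : t - mid = -h + k * (2 * Real.pi) := by linarith
        rw [this, Real.sin_add_int_mul_two_pi, Real.sin_neg]
      rw [← e] at e1 e2
      rw [e3, e1, e2]
      exact mul_pos_of_neg_of_neg (by linarith) (by linarith)
  · intro k hk
    have h1 := W3 (2 * k + 1) (by omega)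
    have h2 := W3 (2 * k + 2) (by omega)
    rw [h1, h2]
    exact w4 k hk

def bump (d M t : ℝ) : ℝ :=
  Real.smoothTransition ((Real.cos (t - M) - Real.cos (2 * d)) / (Real.cos d - Real.cos (2 * d)))

lemma bump_smooth (d M : ℝ) : ContDiff ℝ (⊤ : ℕ∞) (bump d M) := by
  unfold bump
  refine Real.smoothTransition.contDiff.comp (ContDiff.div_const (ContDiff.sub ?_ contDiff_const) _)
  exact Real.contDiff_cos.comp (contDiff_id.sub contDiff_const)

lemma bump_per (d M : ℝ) : Function.Periodic (bump d M) (2 * Real.pi) := by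
  intro t
  unfold bump
  rw [show t + 2 * Real.pi - M = t - M + 2 * Real.pi by ring, Real.cos_add_two_pi]

lemma bump_nonneg (d M t : ℝ) : 0 ≤ bump d M t := Real.smoothTransition.nonneg _

lemma bump_le_one (d M t : ℝ) : bump d M t ≤ 1 := Real.smoothTransition.le_one _

lemma bump_cos {d : ℝ} (hd : 0 < d) (hd2 : 2 * d < Real.pi) : 0 < Real.cos d - Real.cos (2 * d) :=
  sub_pos.2 (Real.cos_lt_cos_of_nonneg_of_le_pi hd.le hd2.le (by linarith))

lemma bump_one {d M t : ℝ} (hd : 0 < d) (hd2 : 2 * d < Real.pi) (ht : |t - M| ≤ d) : bump d M t = 1 := by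
  apply Real.smoothTransition.one_of_one_le
  rw [le_div_iff₀ (bump_cos hd hd2), one_mul]
  have : Real.cos d ≤ Real.cos (t - M) := by
    rw [← Real.cos_abs (t - M)]
    exact Real.cos_le_cos_of_nonneg_of_le_pi (abs_nonneg _) (by linarith) ht
  linarith

lemma bump_supp {d M t : ℝ} (hd : 0 < d) (hd2 : 2 * d < Real.pi) (h1 : -(2 * Real.pi - 2 * d) < t - M)
    (h2 : t - M < 2 * Real.pi - 2 * d) (h : bump d M t ≠ 0) : |t - M| < 2 * d := by
  by_contra hc
  push Not at hc
  apply h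
  apply Real.smoothTransition.zero_of_nonpos
  apply div_nonpos_of_nonpos_of_nonneg _ (bump_cos hd hd2).le
  have h3 : |t - M| < 2 * Real.pi - 2 * d := abs_lt.2 ⟨h1, h2⟩
  rw [← Real.cos_abs (t - M), sub_nonpos]
  rcases le_total (|t - M|) Real.pi with h4 | h4
  · exact Real.cos_le_cos_of_nonneg_of_le_pi (by linarith) h4 hc
  · rw [← Real.cos_two_pi_sub]
    exact Real.cos_le_cos_of_nonneg_of_le_pi (by linarith) (by linarith) (by linarith)

lemma bump_deriv (d M t : ℝ) : HasDerivAt (bump d M)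
    (deriv Real.smoothTransition ((Real.cos (t - M) - Real.cos (2 * d)) / (Real.cos d - Real.cos (2 * d))) *
      (-Real.sin (t - M) / (Real.cos d - Real.cos (2 * d)))) t := by
  have h0 : HasDerivAt (fun t : ℝ => t - M) 1 t := (hasDerivAt_id t).sub_const M
  have h1 := ((h0.cos).sub_const (Real.cos (2 * d))).div_const (Real.cos d - Real.cos (2 * d))
  have h2 := ((Real.smoothTransition.contDiff (n := 1)).differentiable (by simp)
    ((Real.cos (t - M) - Real.cos (2 * d)) / (Real.cos d - Real.cos (2 * d)))).hasDerivAt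
  have h3 := h2.comp t h1
  rw [mul_one] at h3
  exact h3

lemma bump_deriv_nonneg {d M t : ℝ} (hd : 0 < d) (hd2 : 2 * d < Real.pi) (h1 : -(2 * d) ≤ t - M)
    (h2 : t - M ≤ 0) : 0 ≤ deriv (bump d M) t := by
  rw [(bump_deriv d M t).deriv]
  refine mul_nonneg (Real.smoothTransition.monotone.deriv_nonneg) (div_nonneg ?_ (bump_cos hd hd2).le)
  have := Real.sin_nonpos_of_nonpos_of_neg_pi_le h2 (by linarith)
  linarith

lemma bump_deriv_nonpos {d M t : ℝ} (hd : 0 < d) (hd2 : 2 * d < Real.pi) (h1 : 0 ≤ t - M)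
    (h2 : t - M ≤ 2 * d) : deriv (bump d M) t ≤ 0 := by
  rw [(bump_deriv d M t).deriv]
  refine mul_nonpos_of_nonneg_of_nonpos (Real.smoothTransition.monotone.deriv_nonneg)
    (div_nonpos_of_nonpos_of_nonneg ?_ (bump_cos hd hd2).le)
  have := Real.sin_nonneg_of_nonneg_of_le_pi h1 (by linarith)
  linarith

lemma deriv_zero_of_min {q : ℝ → ℝ} (h0 : ∀ t, 0 ≤ q t) {t : ℝ} (ht : q t = 0) : deriv q t = 0 := by
  apply IsLocalMin.deriv_eq_zero
  exact Filter.Eventually.of_forall (fun x => by rw [ht]; exact h0 x)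

lemma deriv_zero_of_max {q : ℝ → ℝ} (h0 : ∀ t, q t ≤ 1) {t : ℝ} (ht : q t = 1) : deriv q t = 0 := by
  apply IsLocalMax.deriv_eq_zero
  exact Filter.Eventually.of_forall (fun x => by rw [ht]; exact h0 x)

/-- choose lambda -/
lemma small_lam {a b : ℝ → ℝ} (ha : Continuous a) (hb : Continuous b) (l r : ℝ)
    (hpos : ∀ t ∈ Set.Icc l r, 0 < b t) :
    ∀ᶠ N : ℕ in Filter.atTop, ∀ t ∈ Set.Icc l r, 2 / ((N : ℝ) + 1) * a t < b t := by
  have h1 : ∀ᶠ c : ℝ in nhds 0, ∀ t ∈ Set.Icc l r, c * a t < b t := by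
    apply isCompact_Icc.eventually_forall_of_forall_eventually
    intro t ht
    have c1 : Continuous fun p : ℝ × ℝ => p.1 * a p.2 := by fun_prop
    have c2 : Continuous fun p : ℝ × ℝ => b p.2 := by fun_prop
    refine (c1.tendsto (0, t)).eventually_lt (c2.tendsto (0, t)) ?_
    simpa using hpos t ht
  have h2 : Filter.Tendsto (fun N : ℕ => 2 / ((N : ℝ) + 1)) Filter.atTop (nhds 0) := by
    have := (tendsto_one_div_add_atTop_nhds_zero_nat (𝕜 := ℝ)).const_mul 2
    simpa [div_eq_mul_inv] using this
  exact h2.eventually h1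

lemma small_int {p : ℝ → Prop} {M : ℝ} (h : ∀ᶠ t in nhds M, p t) :
    ∀ᶠ d : ℝ in nhdsWithin 0 (Set.Ioi 0), ∀ t ∈ Set.Icc (M - 2 * d) (M + 2 * d), p t := by
  obtain ⟨ε, he, hε⟩ := Metric.eventually_nhds_iff.1 h
  filter_upwards [Ioo_mem_nhdsGT (show (0 : ℝ) < ε / 2 by linarith)] with d hd t ht
  apply hε
  rw [Real.dist_eq, abs_lt]
  constructor <;> linarith [ht.1, ht.2, hd.1, hd.2]

lemma Lad.exists_bump {g : ℝ → ℝ} {K : ℕ} {th : ℕ → ℝ} (L : Lad g K th) {G : ℝ → ℝ}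
    (hG : ContDiff ℝ (⊤ : ℕ∞) G) (B : Finset ℕ) (hB : ∀ k ∈ B, k < K)
    (hlt : ∀ k ∈ B, G (th (2 * k + 1)) < g (th (2 * k + 1))) :
    ∃ (d : ℝ) (q : ℝ → ℝ) (N : ℕ), 0 < d ∧ ContDiff ℝ (⊤ : ℕ∞) q ∧ Function.Periodic q (2 * Real.pi) ∧
      (∀ t, 0 ≤ q t) ∧ (∀ t, q t ≤ 1) ∧
      (∀ t ∈ Set.Ico (th 0) (th 0 + 2 * Real.pi), q t ≠ 0 → ∃ k ∈ B, |t - th (2 * k + 1)| < 2 * d) ∧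
      ∀ k ∈ B, th (2 * k) < th (2 * k + 1) - 2 * d ∧ th (2 * k + 1) + 2 * d < th (2 * k + 2) ∧
        (∀ t, |t - th (2 * k + 1)| ≤ d → q t = 1) ∧
        (∀ t ∈ Set.Icc (th (2 * k + 1) - 2 * d) (th (2 * k + 1)), 0 ≤ deriv q t) ∧
        (∀ t ∈ Set.Icc (th (2 * k + 1)) (th (2 * k + 1) + 2 * d), deriv q t ≤ 0) ∧
        (∀ t ∈ Set.Icc (th (2 * k + 1) - 2 * d) (th (2 * k + 1) + 2 * d), G t < g t) ∧
        (∀ t ∈ Set.Icc (th (2 * k + 1) - 2 * d) (th (2 * k + 1) - d),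
          2 / ((N : ℝ) + 1) * deriv G t < deriv g t) ∧
        (∀ t ∈ Set.Icc (th (2 * k + 1) - d) (th (2 * k + 1) + d),
          2 / ((N : ℝ) + 1) * |deriv (deriv G) t| < - deriv (deriv g) t) := by
  have cg := L.smooth.continuous
  have cg1 := (deriv_smooth L.smooth).continuous
  have cg2 := (deriv_smooth (deriv_smooth L.smooth)).continuous
  have cG := hG.continuous
  have cG1 := (deriv_smooth hG).continuous
  have cG2 := (deriv_smooth (deriv_smooth hG)).continuous
  have hd : ∀ᶠ d : ℝ in nhdsWithin 0 (Set.Ioi 0), ∀ k ∈ B,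
      (∀ t ∈ Set.Icc (th (2 * k + 1) - 2 * d) (th (2 * k + 1) + 2 * d),
        (G t < g t ∧ deriv (deriv g) t < 0) ∧ (th (2 * k) < t ∧ t < th (2 * k + 2))) := by
    rw [Filter.eventually_all_finset]
    intro k hk
    have hkK := hB k hk
    apply small_int
    refine ((cG.tendsto _).eventually_lt (cg.tendsto _) (hlt k hk)).and ?_ |>.and ?_
    · exact (cg2.tendsto _).eventually_lt tendsto_const_nhds (L.snd_odd k hkK.le)
    · exact Ioo_mem_nhds (L.mono (2 * k) (by omega)) (L.mono (2 * k + 1) (by omega))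
  obtain ⟨d, hd, hd0⟩ := (hd.and self_mem_nhdsWithin).exists
  have hd0 : 0 < d := hd0
  have hlo : ∀ k ∈ B, th (2 * k) < th (2 * k + 1) - 2 * d := fun k hk =>
    (hd k hk _ ⟨le_rfl, by linarith⟩).2.1
  have hhi : ∀ k ∈ B, th (2 * k + 1) + 2 * d < th (2 * k + 2) := fun k hk =>
    (hd k hk _ ⟨by linarith, le_rfl⟩).2.2
  have hNN : ∀ᶠ N : ℕ in Filter.atTop, ∀ k ∈ B,
      (∀ t ∈ Set.Icc (th (2 * k + 1) - 2 * d) (th (2 * k + 1) - d),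
          2 / ((N : ℝ) + 1) * deriv G t < deriv g t) ∧
        (∀ t ∈ Set.Icc (th (2 * k + 1) - d) (th (2 * k + 1) + d),
          2 / ((N : ℝ) + 1) * |deriv (deriv G) t| < - deriv (deriv g) t) := by
    rw [Filter.eventually_all_finset]
    intro k hk
    refine (small_lam cG1 cg1 _ _ ?_).and (small_lam cG2.abs cg2.neg _ _ ?_)
    · intro t ht
      exact L.up k (hB k hk).le t ⟨by linarith [hlo k hk, ht.1], by linarith [ht.2]⟩
    · intro t ht
      have := (hd k hk t ⟨by linarith [ht.1], by linarith [ht.2]⟩).1.2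
      exact neg_pos.2 this
  obtain ⟨N, hN⟩ := hNN.exists
  have hgap : ∀ k ∈ B, th 0 < th (2 * k + 1) - 2 * d ∧ th (2 * k + 1) + 2 * d < th 0 + 2 * Real.pi := by
    intro k hk
    have hkK := hB k hk
    have h1 : th 0 ≤ th (2 * k) := L.le_of_le (by omega) (by omega)
    have h2 : th (2 * k + 2) ≤ th (2 * K + 1) := L.le_of_le (by omega) (by omega)
    exact ⟨by linarith [hlo k hk], by linarith [hhi k hk, L.last]⟩
  have hd2 : ∀ k ∈ B, 2 * d < Real.pi := fun k hk => by
    have := hgap k hk; linarith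
  -- separation
  have hsep : ∀ j ∈ B, ∀ k ∈ B, j ≠ k → ∀ t, |t - th (2 * j + 1)| < 2 * d → ¬ |t - th (2 * k + 1)| ≤ 2 * d := by
    have key : ∀ j ∈ B, ∀ k ∈ B, j < k → ∀ t, |t - th (2 * j + 1)| ≤ 2 * d → |t - th (2 * k + 1)| ≤ 2 * d → False := by
      intro j hj k hk hjk t h1 h2
      rw [abs_le] at h1 h2
      have h3 : th (2 * j + 2) ≤ th (2 * k) := L.le_of_le (by omega) (by have := hB k hk; omega)
      linarith [hhi j hj, hlo k hk, h1.2, h2.1]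
    intro j hj k hk hjk t h1 h2
    rcases lt_or_gt_of_ne hjk with h | h
    · exact key j hj k hk h t h1.le h2
    · exact key k hk j hj h t h2 h1.le
  have hsupp : ∀ k ∈ B, ∀ t ∈ Set.Ico (th 0) (th 0 + 2 * Real.pi), bump d (th (2 * k + 1)) t ≠ 0 →
      |t - th (2 * k + 1)| < 2 * d := by
    intro k hk t ht h
    have := hgap k hk
    exact bump_supp hd0 (hd2 k hk) (by linarith [ht.1]) (by linarith [ht.2]) h
  set q : ℝ → ℝ := fun t => ∑ k ∈ B, bump d (th (2 * k + 1)) t with hq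
  have qper : Function.Periodic q (2 * Real.pi) := by
    intro t
    simp only [hq]
    exact Finset.sum_congr rfl (fun k _ => bump_per d _ t)
  have q0 : ∀ t, 0 ≤ q t := fun t => Finset.sum_nonneg (fun k _ => bump_nonneg _ _ _)
  have hzero : ∀ k ∈ B, ∀ t, |t - th (2 * k + 1)| ≤ 2 * d → ∀ j ∈ B, j ≠ k → bump d (th (2 * j + 1)) t = 0 := by
    intro k hk t ht j hj hjk
    by_contra hne
    have := hgap k hk
    rw [abs_le] at ht
    have h1 := hsupp j hj t ⟨by linarith [ht.1], by linarith [ht.2]⟩ hne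
    exact hsep j hj k hk hjk t h1 (abs_le.2 ht)
  have qeq : ∀ k ∈ B, ∀ t, |t - th (2 * k + 1)| ≤ 2 * d → q t = bump d (th (2 * k + 1)) t := by
    intro k hk t ht
    exact Finset.sum_eq_single k (fun j hj hjk => hzero k hk t ht j hj hjk) (fun h => absurd hk h)
  have qder : ∀ k ∈ B, ∀ t, |t - th (2 * k + 1)| ≤ 2 * d → deriv q t = deriv (bump d (th (2 * k + 1))) t := by
    intro k hk t ht
    have h1 : HasDerivAt q (∑ j ∈ B, deriv (bump d (th (2 * j + 1))) t) t := by
      apply HasDerivAt.fun_sum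
      intro j _
      exact ((bump_smooth d _).differentiable (by simp) t).hasDerivAt
    rw [h1.deriv]
    exact Finset.sum_eq_single k (fun j hj hjk => deriv_zero_of_min (bump_nonneg d _) (hzero k hk t ht j hj hjk))
      (fun h => absurd hk h)
  have qsupp : ∀ t ∈ Set.Ico (th 0) (th 0 + 2 * Real.pi), q t ≠ 0 → ∃ k ∈ B, |t - th (2 * k + 1)| < 2 * d := by
    intro t ht h
    obtain ⟨k, hk, hne⟩ := Finset.exists_ne_zero_of_sum_ne_zero h
    exact ⟨k, hk, hsupp k hk t ht hne⟩
  refine ⟨d, q, N, hd0, ?_, qper, q0, ?_, qsupp, ?_⟩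
  · exact ContDiff.sum (fun k _ => bump_smooth d _)
  · intro t
    obtain ⟨s, hs, e⟩ := qper.exists_mem_Ico (by positivity) t (th 0)
    rw [e]
    by_cases h : q s = 0
    · rw [h]; exact zero_le_one
    · obtain ⟨k, hk, hlt⟩ := qsupp s hs h
      rw [qeq k hk s hlt.le]
      exact bump_le_one _ _ _
  · intro k hk
    refine ⟨hlo k hk, hhi k hk, ?_, ?_, ?_, fun t ht => (hd k hk t ht).1.1, (hN k hk).1, (hN k hk).2⟩
    · intro t ht
      rw [qeq k hk t (by linarith)]
      exact bump_one hd0 (hd2 k hk) ht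
    · intro t ht
      rw [qder k hk t (abs_le.2 ⟨by linarith [ht.1], by linarith [ht.2]⟩)]
      exact bump_deriv_nonneg hd0 (hd2 k hk) (by linarith [ht.1]) (by linarith [ht.2])
    · intro t ht
      rw [qder k hk t (abs_le.2 ⟨by linarith [ht.1], by linarith [ht.2]⟩)]
      exact bump_deriv_nonpos hd0 (hd2 k hk) (by linarith [ht.1]) (by linarith [ht.2])

def TT (r : ℝ) : ℝ := expNegInvGlue (r - 1 / 4) / expNegInvGlue (3 / 4)

lemma glue_deriv {x : ℝ} (hx : 0 < x) :
    HasDerivAt expNegInvGlue (Real.exp (-x⁻¹) * (x ^ 2)⁻¹) x := by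
  have h1 : HasDerivAt (fun x : ℝ => Real.exp (-x⁻¹)) (Real.exp (-x⁻¹) * (x ^ 2)⁻¹) x := by
    have := ((hasDerivAt_inv hx.ne').neg).exp
    simpa using this
  refine h1.congr_of_eventuallyEq ?_
  filter_upwards [lt_mem_nhds hx] with y hy
  simp [expNegInvGlue, not_le.2 hy]

lemma glue34 : 0 < expNegInvGlue (3 / 4) := expNegInvGlue.pos_of_pos (by norm_num)

lemma TT_smooth : ContDiff ℝ (⊤ : ℕ∞) TT := by
  unfold TT
  exact (expNegInvGlue.contDiff.comp (contDiff_id.sub contDiff_const)).div_const _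

lemma TT_nonneg (r : ℝ) : 0 ≤ TT r := div_nonneg (expNegInvGlue.nonneg _) glue34.le

lemma TT_zero {r : ℝ} (h : r ≤ 1 / 4) : TT r = 0 := by
  unfold TT; rw [expNegInvGlue.zero_of_nonpos (by linarith), zero_div]

lemma TT_one : TT 1 = 1 := by
  unfold TT
  rw [show (1 : ℝ) - 1 / 4 = 3 / 4 by norm_num]
  exact div_self glue34.ne'

lemma TT_pos {r : ℝ} (h : 1 / 4 < r) : 0 < TT r := div_pos (expNegInvGlue.pos_of_pos (by linarith)) glue34

lemma TT_deriv_pos {r : ℝ} (h : 1 / 4 < r) : 0 < deriv TT r := by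
  have hx : 0 < r - 1 / 4 := by linarith
  have h1 := (glue_deriv hx).comp r ((hasDerivAt_id r).sub_const (1 / 4))
  have h2 := h1.div_const (expNegInvGlue (3 / 4))
  rw [HasDerivAt.deriv (f := TT) h2]
  have := glue34
  positivity

lemma TT_mono : StrictMonoOn TT (Set.Ici (1 / 4)) := by
  apply strictMonoOn_of_deriv_pos (convex_Ici _) TT_smooth.continuous.continuousOn
  intro x hx
  rw [interior_Ici] at hx
  exact TT_deriv_pos hx

def SS (ω r : ℝ) : ℝ := Real.smoothTransition ((r - 1 / 8) / (1 / 8 + ω))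

def sg (ω r : ℝ) : ℝ := 1 - (1 - r) * (1 - SS ω r)

lemma SS_smooth (ω : ℝ) : ContDiff ℝ (⊤ : ℕ∞) (SS ω) := by
  unfold SS
  exact Real.smoothTransition.contDiff.comp ((contDiff_id.sub contDiff_const).div_const _)

lemma sg_smooth (ω : ℝ) : ContDiff ℝ (⊤ : ℕ∞) (sg ω) := by
  unfold sg
  exact contDiff_const.sub ((contDiff_const.sub contDiff_id).mul (contDiff_const.sub (SS_smooth ω)))

lemma sg_small {ω r : ℝ} (hω : 0 < ω) (h : r ≤ 1 / 8) : sg ω r = r := by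
  unfold sg SS
  rw [Real.smoothTransition.zero_of_nonpos]
  · ring
  · apply div_nonpos_of_nonpos_of_nonneg <;> linarith

lemma sg_large {ω r : ℝ} (hω : 0 < ω) (h : 1 / 4 + ω ≤ r) : sg ω r = 1 := by
  unfold sg SS
  rw [Real.smoothTransition.one_of_one_le]
  · ring
  · rw [le_div_iff₀ (by linarith)]; linarith

lemma sg_abs {ω r : ℝ} (hω : 0 < ω) (hω2 : ω < 1 / 2) (hr : 0 ≤ r) : |sg ω r| ≤ 1 := by
  rcases le_total (1 / 4 + ω) r with h | h
  · rw [sg_large hω h]; simp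
  · have h1 : 0 ≤ SS ω r := Real.smoothTransition.nonneg _
    have h2 : SS ω r ≤ 1 := Real.smoothTransition.le_one _
    unfold sg
    rw [abs_le]; constructor <;> nlinarith

lemma sg_deriv (ω r : ℝ) : HasDerivAt (sg ω) ((1 - SS ω r) + (1 - r) * deriv (SS ω) r) r := by
  have h1 := ((SS_smooth ω).differentiable (by simp) r).hasDerivAt
  have h2 := (((hasDerivAt_id r).const_sub 1).mul (h1.const_sub 1)).const_sub 1
  refine h2.congr_deriv ?_
  simp only [id]; ring

lemma SS_deriv_nonneg {ω : ℝ} (hω : 0 < ω) (r : ℝ) : 0 ≤ deriv (SS ω) r := by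
  have : Monotone (SS ω) := by
    intro a b hab
    apply Real.smoothTransition.monotone
    apply div_le_div_of_nonneg_right <;> linarith
  exact this.deriv_nonneg

lemma sg_deriv_nonneg {ω r : ℝ} (hω : 0 < ω) (hr : r ≤ 1) : 0 ≤ deriv (sg ω) r := by
  rw [(sg_deriv ω r).deriv]
  have h2 : SS ω r ≤ 1 := Real.smoothTransition.le_one _
  have h3 := SS_deriv_nonneg hω r
  have : 0 ≤ (1 - r) * deriv (SS ω) r := mul_nonneg (by linarith) h3
  linarith

lemma sg_deriv_pos {ω r : ℝ} (hω : 0 < ω) (hr : r ≤ 1) (h : r < 1 / 4 + ω) : 0 < deriv (sg ω) r := by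
  rw [(sg_deriv ω r).deriv]
  have h2 : SS ω r < 1 := by
    apply Real.smoothTransition.lt_one_of_lt_one
    rw [div_lt_one (by linarith)]; linarith
  have h3 := SS_deriv_nonneg hω r
  have : 0 ≤ (1 - r) * deriv (SS ω) r := mul_nonneg (by linarith) h3
  linarith

lemma sg_cont : ContinuousAt (fun p : ℝ × ℝ => (sg p.1 p.2, TT p.2)) (0, 1 / 4) := by
  have h1 : ContinuousAt (fun p : ℝ × ℝ => TT p.2) (0, 1 / 4) :=
    (TT_smooth.continuous.comp continuous_snd).continuousAt
  refine ContinuousAt.prodMk ?_ h1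
  unfold sg SS
  have h2 : ContinuousAt (fun p : ℝ × ℝ => (p.2 - 1 / 8) / (1 / 8 + p.1)) (0, 1 / 4) := by
    refine ContinuousAt.div (by fun_prop) (by fun_prop) (by norm_num)
  have h3 : ContinuousAt (fun p : ℝ × ℝ => Real.smoothTransition ((p.2 - 1 / 8) / (1 / 8 + p.1))) (0, 1 / 4) :=
    Real.smoothTransition.continuous.continuousAt.comp h2
  have h4 : ContinuousAt (fun p : ℝ × ℝ => (1 - p.2)) (0, 1 / 4) := by fun_prop
  exact continuousAt_const.sub (h4.mul (continuousAt_const.sub h3))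

lemma sg_val : (fun p : ℝ × ℝ => (sg p.1 p.2, TT p.2)) (0, 1 / 4) = (1, 0) := by
  have h1 : TT (1 / 4) = 0 := TT_zero le_rfl
  have h2 : SS 0 (1 / 4) = 1 := by
    unfold SS; apply Real.smoothTransition.one_of_one_le; norm_num
  simp only [h1, sg, h2]; norm_num

section
variable (q : ℝ → ℝ) (N : ℕ)

def PP (τ t : ℝ) : ℝ := τ + q t * (2 / ((N : ℝ) + 1)) * (τ - τ ^ (N + 2))

def PPτ (τ t : ℝ) : ℝ := 1 + q t * (2 / ((N : ℝ) + 1)) * (1 - ((N : ℝ) + 2) * τ ^ (N + 1))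

def PPt (τ t : ℝ) : ℝ := deriv q t * (2 / ((N : ℝ) + 1)) * (τ - τ ^ (N + 2))

lemma PP_deriv_τ (τ t : ℝ) : HasDerivAt (fun τ => PP q N τ t) (PPτ q N τ t) τ := by
  have h1 := (hasDerivAt_id τ).add (((hasDerivAt_id τ).sub (hasDerivAt_pow (N + 2) τ)).const_mul
    (q t * (2 / ((N : ℝ) + 1))))
  refine h1.congr_deriv ?_
  simp only [PPτ]; push_cast; norm_num

lemma PP_deriv_t (hq : Differentiable ℝ q) (τ t : ℝ) : HasDerivAt (PP q N τ) (PPt q N τ t) t := by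
  exact (((hq t).hasDerivAt.mul_const (2 / ((N : ℝ) + 1))).mul_const (τ - τ ^ (N + 2))).const_add τ

end

section
variable (g W q : ℝ → ℝ) (N : ℕ) (mid ch : ℝ)

def eT (s t : ℝ) : ℝ := s * (Real.cos (t - mid) - s * ch) / (1 - s * ch * Real.cos (t - mid)) ^ 2

def eS (s t : ℝ) : ℝ := Real.sin (t - mid) / (1 - s * ch * Real.cos (t - mid)) ^ 2

def HtF (s τ t : ℝ) : ℝ := PP q N τ t * deriv g t + (1 - PP q N τ t) * (deriv W (ee mid ch s t) * eT mid ch s t) +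
  PPt q N τ t * (g t - W (ee mid ch s t))

def AF (s τ t : ℝ) : ℝ := PPτ q N τ t * (g t - W (ee mid ch s t))

def BF (s τ t : ℝ) : ℝ := (1 - PP q N τ t) * (deriv W (ee mid ch s t) * eS mid ch s t)

def HH (ω r t : ℝ) : ℝ := PP q N (TT r) t * g t + (1 - PP q N (TT r) t) * W (ee mid ch (sg ω r) t)

variable {g W q N mid ch}

lemma HH_deriv_r (hW : Differentiable ℝ W) {ω r t : ℝ}
    (hd : 1 - sg ω r * ch * Real.cos (t - mid) ≠ 0) :
    HasDerivAt (fun r => HH g W q N mid ch ω r t)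
      (deriv TT r * AF g W q N mid ch (sg ω r) (TT r) t + deriv (sg ω) r * BF W q N mid ch (sg ω r) (TT r) t) r := by
  have hT : HasDerivAt TT (deriv TT r) r := (TT_smooth.differentiable (by simp) r).hasDerivAt
  have hs : HasDerivAt (sg ω) (deriv (sg ω) r) r := ((sg_smooth ω).differentiable (by simp) r).hasDerivAt
  have hP : HasDerivAt (fun r => PP q N (TT r) t) (PPτ q N (TT r) t * deriv TT r) r :=
    HasDerivAt.comp r (PP_deriv_τ q N (TT r) t) hT
  have he : HasDerivAt (fun r => ee mid ch (sg ω r) t) (eS mid ch (sg ω r) t * deriv (sg ω) r) r :=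
    HasDerivAt.comp r (ee_deriv_s hd) hs
  have hw : HasDerivAt (fun r => W (ee mid ch (sg ω r) t)) (deriv W (ee mid ch (sg ω r) t) *
      (eS mid ch (sg ω r) t * deriv (sg ω) r)) r :=
    HasDerivAt.comp r (hW _).hasDerivAt he
  have h := (hP.mul_const (g t)).add ((hP.const_sub 1).mul hw)
  refine h.congr_deriv ?_
  simp only [AF, BF]; ring

lemma HH_deriv_t (hg : Differentiable ℝ g) (hq : Differentiable ℝ q) (hW : Differentiable ℝ W) {ω r t : ℝ}
    (hd : 1 - sg ω r * ch * Real.cos (t - mid) ≠ 0) :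
    HasDerivAt (HH g W q N mid ch ω r) (HtF g W q N mid ch (sg ω r) (TT r) t) t := by
  have hP := PP_deriv_t q N hq (TT r) t
  have he : HasDerivAt (ee mid ch (sg ω r)) (eT mid ch (sg ω r) t) t := ee_deriv_t hd
  have hw : HasDerivAt (fun t => W (ee mid ch (sg ω r) t)) (deriv W (ee mid ch (sg ω r) t) *
      (eT mid ch (sg ω r) t)) t :=
    HasDerivAt.comp t (hW _).hasDerivAt he
  have h := (hP.mul (hg t).hasDerivAt).add ((hP.const_sub 1).mul hw)
  refine h.congr_deriv ?_
  simp only [HtF]; ring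

lemma caseB (hg : ContDiff ℝ (⊤ : ℕ∞) g) (hW : ContDiff ℝ (⊤ : ℕ∞) W) (hq : ContDiff ℝ (⊤ : ℕ∞) q)
    (hch : |ch| < 1) (hWp : ∀ x, 0 < deriv W x) (q0 : ∀ t, 0 ≤ q t)
    (hB : ∀ t, Real.cos (t - mid) = ch → 0 < (g t - W (ee mid ch 1 t)) * Real.sin (t - mid)) (t : ℝ) :
    ∀ᶠ z : ((ℝ × ℝ) × ℝ) in nhds ((1, 0), t), HtF g W q N mid ch z.1.1 z.1.2 z.2 ≠ 0 ∨
      0 < AF g W q N mid ch z.1.1 z.1.2 z.2 * BF W q N mid ch z.1.1 z.1.2 z.2 := by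
  have cg := hg.continuous
  have cg1 := (deriv_smooth hg).continuous
  have cW := hW.continuous
  have cW1 := (deriv_smooth hW).continuous
  have cq := hq.continuous
  have cq1 := (deriv_smooth hq).continuous
  have hd := den_pos' hch (s := 1) (by simp) (t - mid)
  have hden : ContinuousAt (fun z : (ℝ × ℝ) × ℝ => 1 - z.1.1 * ch * Real.cos (z.2 - mid)) ((1, 0), t) := by
    fun_prop
  have hee : ContinuousAt (fun z : (ℝ × ℝ) × ℝ => ee mid ch z.1.1 z.2) ((1, 0), t) := by
    unfold ee
    exact ContinuousAt.div (by fun_prop) hden hd.ne'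
  have heT : ContinuousAt (fun z : (ℝ × ℝ) × ℝ => eT mid ch z.1.1 z.2) ((1, 0), t) := by
    unfold eT
    exact ContinuousAt.div (by fun_prop) (hden.pow 2) (pow_pos hd 2).ne'
  have heS : ContinuousAt (fun z : (ℝ × ℝ) × ℝ => eS mid ch z.1.1 z.2) ((1, 0), t) := by
    unfold eS
    exact ContinuousAt.div (by fun_prop) (hden.pow 2) (pow_pos hd 2).ne'
  have hWe : ContinuousAt (fun z : (ℝ × ℝ) × ℝ => W (ee mid ch z.1.1 z.2)) ((1, 0), t) :=
    ContinuousAt.comp (g := W) cW.continuousAt hee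
  have hWe1 : ContinuousAt (fun z : (ℝ × ℝ) × ℝ => deriv W (ee mid ch z.1.1 z.2)) ((1, 0), t) :=
    ContinuousAt.comp (g := deriv W) cW1.continuousAt hee
  have hg1 : ContinuousAt (fun z : (ℝ × ℝ) × ℝ => g z.2) ((1, 0), t) := by fun_prop
  have hg2 : ContinuousAt (fun z : (ℝ × ℝ) × ℝ => deriv g z.2) ((1, 0), t) := by fun_prop
  have hP : ContinuousAt (fun z : (ℝ × ℝ) × ℝ => PP q N z.1.2 z.2) ((1, 0), t) := by
    unfold PP; fun_prop
  have hP1 : ContinuousAt (fun z : (ℝ × ℝ) × ℝ => PPτ q N z.1.2 z.2) ((1, 0), t) := by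
    unfold PPτ; fun_prop
  have hP2 : ContinuousAt (fun z : (ℝ × ℝ) × ℝ => PPt q N z.1.2 z.2) ((1, 0), t) := by
    unfold PPt; fun_prop
  have hH : ContinuousAt (fun z : (ℝ × ℝ) × ℝ => HtF g W q N mid ch z.1.1 z.1.2 z.2) ((1, 0), t) :=
    ((hP.mul hg2).add ((continuousAt_const.sub hP).mul (hWe1.mul heT))).add (hP2.mul (hg1.sub hWe))
  have hAB : ContinuousAt (fun z : (ℝ × ℝ) × ℝ => AF g W q N mid ch z.1.1 z.1.2 z.2 *
      BF W q N mid ch z.1.1 z.1.2 z.2) ((1, 0), t) :=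
    (hP1.mul (hg1.sub hWe)).mul ((continuousAt_const.sub hP).mul (hWe1.mul heS))
  have p0 : PP q N 0 t = 0 := by simp [PP]
  have p1 : PPt q N 0 t = 0 := by simp [PPt]
  have p2 : 0 < PPτ q N 0 t := by
    have := q0 t
    simp only [PPτ, zero_pow (Nat.succ_ne_zero N), mul_zero, sub_zero, mul_one]
    positivity
  by_cases hne : HtF g W q N mid ch 1 0 t = 0
  · have hpos : 0 < AF g W q N mid ch 1 0 t * BF W q N mid ch 1 0 t := by
      unfold HtF at hne
      rw [p0, p1] at hne
      have h1 : eT mid ch 1 t = 0 := by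
        have : deriv W (ee mid ch 1 t) * eT mid ch 1 t = 0 := by linarith
        exact (mul_eq_zero.1 this).resolve_left (hWp _).ne'
      have h2 : Real.cos (t - mid) = ch := by
        unfold eT at h1
        rcases div_eq_zero_iff.1 h1 with h | h
        · linarith
        · exact absurd h (pow_pos hd 2).ne'
      have h3 := hB t h2
      have h4 := hWp (ee mid ch 1 t)
      have h5 : AF g W q N mid ch 1 0 t * BF W q N mid ch 1 0 t =
          PPτ q N 0 t * deriv W (ee mid ch 1 t) * ((g t - W (ee mid ch 1 t)) * Real.sin (t - mid)) /
            (1 - 1 * ch * Real.cos (t - mid)) ^ 2 := by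
        unfold AF BF eS
        rw [p0]; ring
      rw [h5]
      exact div_pos (mul_pos (mul_pos p2 h4) h3) (pow_pos hd 2)
    filter_upwards [hAB.eventually (lt_mem_nhds hpos)] with z hz
    exact Or.inr hz
  · filter_upwards [hH.eventually_ne hne] with z hz
    exact Or.inl hz

lemma exists_omega (hg : ContDiff ℝ (⊤ : ℕ∞) g) (hW : ContDiff ℝ (⊤ : ℕ∞) W) (hq : ContDiff ℝ (⊤ : ℕ∞) q)
    (hch : |ch| < 1) (hWp : ∀ x, 0 < deriv W x) (q0 : ∀ t, 0 ≤ q t)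
    (hB : ∀ t, Real.cos (t - mid) = ch → 0 < (g t - W (ee mid ch 1 t)) * Real.sin (t - mid)) (t0 t1 : ℝ) :
    ∃ ω : ℝ, 0 < ω ∧ ω < 1 / 2 ∧ ∀ r, 1 / 4 ≤ r → r ≤ 1 / 4 + ω → ∀ t ∈ Set.Icc t0 t1,
      HtF g W q N mid ch (sg ω r) (TT r) t ≠ 0 ∨
      0 < AF g W q N mid ch (sg ω r) (TT r) t * BF W q N mid ch (sg ω r) (TT r) t := by
  have h1 : ∀ᶠ p : ℝ × ℝ in nhds (1, 0), ∀ t ∈ Set.Icc t0 t1, HtF g W q N mid ch p.1 p.2 t ≠ 0 ∨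
      0 < AF g W q N mid ch p.1 p.2 t * BF W q N mid ch p.1 p.2 t := by
    apply isCompact_Icc.eventually_forall_of_forall_eventually
    intro t _
    exact caseB hg hW hq hch hWp q0 hB t
  have h2 : Filter.Tendsto (fun p : ℝ × ℝ => (sg p.1 p.2, TT p.2)) (nhds (0, 1 / 4)) (nhds (1, 0)) := by
    convert sg_cont.tendsto using 2
    exact sg_val.symm
  obtain ⟨δ, hδ, h3⟩ := Metric.eventually_nhds_iff.1 (h2.eventually h1)
  refine ⟨min (δ / 2) (1 / 4), by positivity, lt_of_le_of_lt (min_le_right _ _) (by norm_num), ?_⟩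
  intro r hr hr2 t ht
  have hm := min_le_left (δ / 2) (1 / 4)
  have hm0 : 0 < min (δ / 2) (1 / 4 : ℝ) := by positivity
  refine h3 (y := (min (δ / 2) (1 / 4), r)) ?_ t ht
  rw [Prod.dist_eq, max_lt_iff, Real.dist_eq, Real.dist_eq, sub_zero]
  exact ⟨by rw [abs_of_pos hm0]; linarith, by rw [abs_lt]; constructor <;> linarith⟩

end

lemma radial_deriv {f : E2 → ℝ} (hf : ContDiff ℝ (⊤ : ℕ∞) f) (r : ℝ) (v : E2) :
    HasDerivAt (fun r : ℝ => f (r • v)) (fderiv ℝ f (r • v) v) r := by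
  have h1 : HasDerivAt (fun r : ℝ => r • v) v r := by
    simpa using (hasDerivAt_id r).smul_const v
  exact (hf.differentiable (by simp) (r • v)).hasFDerivAt.comp_hasDerivAt r h1

lemma ang_deriv {f : E2 → ℝ} (hf : ContDiff ℝ (⊤ : ℕ∞) f) (r t : ℝ) :
    HasDerivAt (fun t : ℝ => f (r • sphPt t)) (fderiv ℝ f (r • sphPt t) (r • Jr (sphPt t))) t := by
  have h1 : HasDerivAt (fun t : ℝ => r • sphPt t) (r • Jr (sphPt t)) t := (sphPt_deriv t).const_smul r
  exact (hf.differentiable (by simp) (r • sphPt t)).hasFDerivAt.comp_hasDerivAt t h1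

def E0F (W : ℝ → ℝ) (mid ch : ℝ) (x : E2) : ℝ :=
  W ((x 1 * Real.cos mid - x 0 * Real.sin mid) / (1 - (x 0 * Real.cos mid + x 1 * Real.sin mid) * ch))

lemma abs_coord_le (x : E2) (i : Fin 2) : |x i| ≤ ‖x‖ := by
  have := EuclideanSpace.norm_eq x
  rw [this]
  apply Real.le_sqrt_of_sq_le
  rw [sq_abs]
  have h : x i ^ 2 = ‖x i‖ ^ 2 := by simp
  rw [h]
  exact Finset.single_le_sum (f := fun i => ‖x i‖ ^ 2) (fun j _ => by positivity) (Finset.mem_univ i)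

lemma E0F_polar (W : ℝ → ℝ) (mid ch r t : ℝ) : E0F W mid ch (r • sphPt t) = W (ee mid ch r t) := by
  have h0 : (r • sphPt t) 0 = r * Real.cos t := by simp
  have h1 : (r • sphPt t) 1 = r * Real.sin t := by simp
  unfold E0F ee
  rw [h0, h1, Real.sin_sub, Real.cos_sub]
  congr 2 <;> ring

lemma E0F_smooth {W : ℝ → ℝ} (hW : ContDiff ℝ (⊤ : ℕ∞) W) {mid ch : ℝ} (hch : |ch| < 1) (x : E2)
    (hx : x ∈ Metric.ball (0 : E2) (1 / 8)) : ContDiffAt ℝ (⊤ : ℕ∞) (E0F W mid ch) x := by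
  have hx' : ‖x‖ < 1 / 8 := by simpa using hx
  have h0 : |x 0| < 1 / 8 := lt_of_le_of_lt (abs_coord_le x 0) hx'
  have h1 : |x 1| < 1 / 8 := lt_of_le_of_lt (abs_coord_le x 1) hx'
  have hden : 1 - (x 0 * Real.cos mid + x 1 * Real.sin mid) * ch ≠ 0 := by
    have ha : |x 0 * Real.cos mid + x 1 * Real.sin mid| ≤ 1 := by
      calc _ ≤ |x 0 * Real.cos mid| + |x 1 * Real.sin mid| := abs_add_le _ _
        _ = |x 0| * |Real.cos mid| + |x 1| * |Real.sin mid| := by rw [abs_mul, abs_mul]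
        _ ≤ |x 0| * 1 + |x 1| * 1 := by
          gcongr
          · exact Real.abs_cos_le_one _
          · exact Real.abs_sin_le_one _
        _ ≤ 1 := by linarith
    have := den_pos hch ha (c := 1) (by simp)
    rw [mul_one] at this
    exact this.ne'
  have c0 : ContDiffAt ℝ (⊤ : ℕ∞) (fun x : E2 => x 0) x := by fun_prop
  have c1 : ContDiffAt ℝ (⊤ : ℕ∞) (fun x : E2 => x 1) x := by fun_prop
  unfold E0F
  refine hW.contDiffAt.comp x (ContDiffAt.div ?_ ?_ hden)
  · exact (c1.mul contDiffAt_const).sub (c0.mul contDiffAt_const)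
  · exact contDiffAt_const.sub (((c0.mul contDiffAt_const).add (c1.mul contDiffAt_const)).mul contDiffAt_const)

lemma HH_smooth {g W q : ℝ → ℝ} {N : ℕ} {mid ch : ℝ} (hg : ContDiff ℝ (⊤ : ℕ∞) g)
    (hW : ContDiff ℝ (⊤ : ℕ∞) W) (hq : ContDiff ℝ (⊤ : ℕ∞) q) {ω r t : ℝ}
    (hd : 1 - sg ω r * ch * Real.cos (t - mid) ≠ 0) :
    ContDiffAt ℝ (⊤ : ℕ∞) (Function.uncurry (HH g W q N mid ch ω)) (r, t) := by
  have hT : ContDiffAt ℝ (⊤ : ℕ∞) (fun p : ℝ × ℝ => TT p.1) (r, t) := (TT_smooth.comp contDiff_fst).contDiffAt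
  have hs : ContDiffAt ℝ (⊤ : ℕ∞) (fun p : ℝ × ℝ => sg ω p.1) (r, t) := ((sg_smooth ω).comp contDiff_fst).contDiffAt
  have hg' : ContDiffAt ℝ (⊤ : ℕ∞) (fun p : ℝ × ℝ => g p.2) (r, t) := (hg.comp contDiff_snd).contDiffAt
  have hq' : ContDiffAt ℝ (⊤ : ℕ∞) (fun p : ℝ × ℝ => q p.2) (r, t) := (hq.comp contDiff_snd).contDiffAt
  have hP : ContDiffAt ℝ (⊤ : ℕ∞) (fun p : ℝ × ℝ => PP q N (TT p.1) p.2) (r, t) :=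
    hT.add ((hq'.mul contDiffAt_const).mul (hT.sub (hT.pow _)))
  have he : ContDiffAt ℝ (⊤ : ℕ∞) (fun p : ℝ × ℝ => ee mid ch (sg ω p.1) p.2) (r, t) :=
    ContDiffAt.comp (r, t) (g := fun p : ℝ × ℝ => ee mid ch p.1 p.2) (ee_smooth hd) (hs.prodMk contDiffAt_snd)
  have hw : ContDiffAt ℝ (⊤ : ℕ∞) (fun p : ℝ × ℝ => W (ee mid ch (sg ω p.1) p.2)) (r, t) :=
    ContDiffAt.comp (r, t) (g := W) hW.contDiffAt he
  exact (hP.mul hg').add ((contDiffAt_const.sub hP).mul hw)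

lemma build {g W q : ℝ → ℝ} {N : ℕ} {mid ch : ℝ} (hg : ContDiff ℝ (⊤ : ℕ∞) g)
    (hgp : Function.Periodic g (2 * Real.pi))
    (hW : ContDiff ℝ (⊤ : ℕ∞) W) (hq : ContDiff ℝ (⊤ : ℕ∞) q) (hqp : Function.Periodic q (2 * Real.pi))
    (hch : |ch| < 1) (hWp : ∀ x, 0 < deriv W x) (q0 : ∀ t, 0 ≤ q t)
    (hB : ∀ t, Real.cos (t - mid) = ch → 0 < (g t - W (ee mid ch 1 t)) * Real.sin (t - mid)) (t0 : ℝ) :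
    ∃ (f : E2 → ℝ) (c : ℝ), 0 < c ∧ ContDiff ℝ (⊤ : ℕ∞) f ∧ (∀ t, f (sphPt t) = g t) ∧
      (∀ t, fderiv ℝ f (sphPt t) (sphPt t) = c * ((1 - 2 * q t) * (g t - W (ee mid ch 1 t)))) ∧
      ∀ x ∈ critPts f, ∃ r t, 1 / 4 < r ∧ t ∈ Set.Ico t0 (t0 + 2 * Real.pi) ∧ x = r • sphPt t ∧
        0 < TT r ∧ TT r < 1 ∧ PPτ q N (TT r) t * (g t - W (ee mid ch 1 t)) = 0 ∧
        PP q N (TT r) t * deriv g t + (1 - PP q N (TT r) t) * deriv (fun t => W (ee mid ch 1 t)) t +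
          PPt q N (TT r) t * (g t - W (ee mid ch 1 t)) = 0 := by
  obtain ⟨ω, hω, hω2, hωB⟩ := exists_omega (N := N) hg hW hq hch hWp q0 hB t0 (t0 + 2 * Real.pi)
  have hden : ∀ r, 0 ≤ r → ∀ t, 1 - sg ω r * ch * Real.cos (t - mid) ≠ 0 := fun r hr t =>
    (den_pos' hch (sg_abs hω hω2 hr) _).ne'
  have hper : ∀ r, Function.Periodic (HH g W q N mid ch ω r) (2 * Real.pi) := by
    intro r t
    have h1 : PP q N (TT r) (t + 2 * Real.pi) = PP q N (TT r) t := by unfold PP; rw [hqp]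
    unfold HH
    rw [h1, hgp, ee_per]
  have hEH : ∀ r t, 0 ≤ r → r < 1 / 8 → E0F W mid ch (r • sphPt t) = HH g W q N mid ch ω r t := by
    intro r t hr hr2
    rw [E0F_polar]
    unfold HH PP
    rw [TT_zero (by linarith), sg_small hω hr2.le]
    simp
  obtain ⟨f, hf, hfH, hfE⟩ := polar_ext (HH g W q N mid ch ω) hper
    (fun r hr t => HH_smooth hg hW hq (hden r hr.le t)) (E0F W mid ch) (ε := 1 / 8) (by norm_num)
    (fun x hx => E0F_smooth hW hch x hx) hEH
  have dg := hg.differentiable (by simp)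
  have dq := hq.differentiable (by simp)
  have dW := hW.differentiable (by simp)
  have hr : ∀ r t, 0 < r → fderiv ℝ f (r • sphPt t) (sphPt t) =
      deriv TT r * AF g W q N mid ch (sg ω r) (TT r) t + deriv (sg ω) r * BF W q N mid ch (sg ω r) (TT r) t := by
    intro r t hr
    have h1 := radial_deriv hf r (sphPt t)
    have h2 := HH_deriv_r (g := g) (q := q) (N := N) dW (hden r hr.le t)
    refine (h1.congr_of_eventuallyEq ?_).unique h2
    filter_upwards [lt_mem_nhds hr] with s hs
    exact (hfH s t hs.le).symm
  have ht : ∀ r t, 0 < r → fderiv ℝ f (r • sphPt t) (r • Jr (sphPt t)) = HtF g W q N mid ch (sg ω r) (TT r) t := by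
    intro r t hr
    have h1 := ang_deriv hf r t
    have h2 := HH_deriv_t (N := N) dg dq dW (hden r hr.le t)
    have e : (fun t => f (r • sphPt t)) = HH g W q N mid ch ω r := funext fun s => hfH r s hr.le
    rw [e] at h1
    exact h1.unique h2
  refine ⟨f, deriv TT 1, TT_deriv_pos (by norm_num), hf, ?_, ?_, ?_⟩
  · intro t
    have := hfH 1 t zero_le_one
    rw [one_smul] at this
    rw [this]
    unfold HH PP
    rw [TT_one]; simp
  · intro t
    have := hr 1 t one_pos
    rw [one_smul] at this
    rw [this, TT_one, sg_large hω (by linarith)]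
    have p1 : PP q N 1 t = 1 := by simp [PP]
    have hN : (N : ℝ) + 1 ≠ 0 := by positivity
    have p2 : PPτ q N 1 t = 1 - 2 * q t := by
      unfold PPτ; rw [one_pow]; field_simp; ring
    unfold AF BF
    rw [p1, p2]; ring
  · rintro x ⟨hx, hx0⟩
    have hxn : ‖x‖ < 1 := by simpa using hx
    by_cases hz : x = 0
    · exfalso
      subst hz
      set v := sphPt (mid + Real.pi / 2) with hv
      have h1 := radial_deriv hf 0 v
      rw [zero_smul, hx0] at h1
      have h2 : HasDerivAt (fun r => W r) (deriv W 0) 0 := (dW 0).hasDerivAt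
      have h3 : HasDerivWithinAt (fun r : ℝ => f (r • v)) (deriv W 0) (Set.Ici 0) 0 := by
        refine h2.hasDerivWithinAt.congr_of_eventuallyEq ?_ ?_
        · filter_upwards [self_mem_nhdsWithin, nhdsWithin_le_nhds (gt_mem_nhds (show (0 : ℝ) < 1 / 8 by norm_num))] with r hr1 hr2
          rw [hfH r _ hr1, ← hEH r _ hr1 hr2, E0F_polar]
          congr 1
          unfold ee
          rw [show mid + Real.pi / 2 - mid = Real.pi / 2 by ring]
          simp
        · show f ((0 : ℝ) • v) = W 0
          rw [hfH 0 _ le_rfl, ← hEH 0 _ le_rfl (by norm_num), E0F_polar]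
          simp [ee]
      have h4 := (uniqueDiffWithinAt_Ici (0 : ℝ)).eq_deriv _ h3 h1.hasDerivWithinAt
      have := hWp 0
      rw [h4] at this
      simp at this
    · have hpos : 0 < ‖x‖ := norm_pos_iff.2 hz
      have h1 : ‖‖x‖⁻¹ • x‖ = 1 := by rw [norm_smul, norm_inv, norm_norm]; field_simp
      obtain ⟨t, htI, hxt⟩ := exists_angle t0 h1
      have hxe : x = ‖x‖ • sphPt t := by
        rw [← hxt, smul_smul, mul_inv_cancel₀ hpos.ne', one_smul]
      generalize hrr : ‖x‖ = r at *
      have a1 := hr r t hpos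
      have a2 := ht r t hpos
      rw [← hxe, hx0] at a1 a2
      simp only [zero_apply] at a1 a2
      rcases le_or_gt r (1 / 4) with hr4 | hr4
      · exfalso
        have hT0 := TT_zero hr4
        have hT1 : deriv TT r = 0 := deriv_zero_of_min TT_nonneg hT0
        have hs1 := sg_deriv_pos hω hxn.le (by linarith : r < 1 / 4 + ω)
        rw [hT0, hT1] at a1
        rw [hT0] at a2
        have p0 : PP q N 0 t = 0 := by simp [PP]
        have p1 : PPt q N 0 t = 0 := by simp [PPt]
        unfold HtF at a2
        unfold BF at a1
        rw [p0, p1] at a2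
        rw [p0] at a1
        have hw := hWp (ee mid ch (sg ω r) t)
        have b1 : eT mid ch (sg ω r) t = 0 := by
          have : deriv W (ee mid ch (sg ω r) t) * eT mid ch (sg ω r) t = 0 := by linarith
          exact (mul_eq_zero.1 this).resolve_left hw.ne'
        have b2 : eS mid ch (sg ω r) t = 0 := by
          have : deriv (sg ω) r * (deriv W (ee mid ch (sg ω r) t) * eS mid ch (sg ω r) t) = 0 := by linarith
          rcases mul_eq_zero.1 this with h | h
          · exact absurd h hs1.ne'
          · exact (mul_eq_zero.1 h).resolve_left hw.ne'
        have hd2 := pow_ne_zero 2 (hden r hpos.le t)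
        unfold eS at b2
        unfold eT at b1
        have c2 := (div_eq_zero_iff.1 b2).resolve_right hd2
        have c1 := (div_eq_zero_iff.1 b1).resolve_right hd2
        have hsg : 0 < sg ω r := by
          have k1 : 0 ≤ SS ω r := Real.smoothTransition.nonneg _
          have k2 : SS ω r ≤ 1 := Real.smoothTransition.le_one _
          unfold sg; nlinarith
        have c3 : Real.cos (t - mid) = sg ω r * ch := by
          have := (mul_eq_zero.1 c1).resolve_left hsg.ne'
          linarith
        have c4 := Real.sin_sq_add_cos_sq (t - mid)
        have hle := sg_abs hω hω2 hpos.le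
        have : |sg ω r * ch| < 1 := by
          rw [abs_mul]
          calc |sg ω r| * |ch| ≤ 1 * |ch| := mul_le_mul_of_nonneg_right hle (abs_nonneg _)
            _ < 1 := by linarith
        rw [c2, c3] at c4
        have := (sq_lt_one_iff_abs_lt_one _).2 this
        linarith
      · have hT' := TT_deriv_pos hr4
        rcases le_or_gt r (1 / 4 + ω) with hr5 | hr5
        · exfalso
          rcases hωB r hr4.le hr5 t ⟨htI.1, htI.2.le⟩ with h | h
          · exact h a2.symm
          · have hs0 := sg_deriv_nonneg hω hxn.le
            rcases pos_and_pos_or_neg_and_neg_of_mul_pos h with ⟨u1, u2⟩ | ⟨u1, u2⟩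
            · have := mul_pos hT' u1
              have := mul_nonneg hs0 u2.le
              linarith
            · have := mul_neg_of_pos_of_neg hT' u1
              have := mul_nonpos_of_nonneg_of_nonpos hs0 u2.le
              linarith
        · have hs1 := sg_large hω hr5.le
          have hs2 : deriv (sg ω) r = 0 := by
            have : sg ω =ᶠ[nhds r] fun _ => 1 := by
              filter_upwards [lt_mem_nhds hr5] with s hs
              exact sg_large hω hs.le
            rw [this.deriv_eq]; simp
          rw [hs1, hs2] at a1
          rw [hs1] at a2
          refine ⟨r, t, hr4, htI, hxe, TT_pos hr4, ?_, ?_, ?_⟩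
          · rw [← TT_one]
            exact TT_mono hr4.le (by norm_num) hxn
          · have : deriv TT r * AF g W q N mid ch 1 (TT r) t = 0 := by linarith
            exact (mul_eq_zero.1 this).resolve_left hT'.ne'
          · rw [(GG_deriv hW hch t).deriv]
            unfold HtF eT at a2
            simp only [one_mul] at a2
            exact a2.symm

lemma bern (τ : ℝ) (h0 : 0 ≤ τ) (h1 : τ ≤ 1) (m : ℕ) :
    τ ^ (m + 1) + ((m : ℝ) + 1) * τ ^ m * (1 - τ) ≤ 1 := by
  induction m with
  | zero => simp
  | succ m ih =>
    have e : τ ^ (m + 1 + 1) + (((m + 1 : ℕ) : ℝ) + 1) * τ ^ (m + 1) * (1 - τ) =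
        τ * (τ ^ (m + 1) + ((m : ℝ) + 1) * τ ^ m * (1 - τ)) + τ ^ (m + 1) * (1 - τ) := by
      push_cast; ring
    rw [e]
    have a1 := mul_le_mul_of_nonneg_left ih h0
    have a2 : τ ^ (m + 1) * (1 - τ) ≤ 1 * (1 - τ) :=
      mul_le_mul_of_nonneg_right (pow_le_one₀ h0 h1) (by linarith)
    linarith

lemma PP_bounds {q : ℝ → ℝ} {N : ℕ} {τ t : ℝ} (h0 : 0 < τ) (h1 : τ < 1) (q0 : 0 ≤ q t) (q1 : q t ≤ 1)
    (hz : PPτ q N τ t = 0) : 1 ≤ PP q N τ t ∧ PP q N τ t ≤ 1 + 2 / ((N : ℝ) + 1) := by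
  have hl : 0 < 2 / ((N : ℝ) + 1) := by positivity
  have hb := bern τ h0.le h1.le (N + 1)
  unfold PPτ at hz
  unfold PP
  push_cast at hb
  generalize 2 / ((N : ℝ) + 1) = l at *
  have hql : 0 ≤ q t * l := mul_nonneg q0 hl.le
  have hql1 : q t * l ≤ l := by nlinarith
  constructor
  · have := mul_nonneg hql (sub_nonneg.2 hb)
    nlinarith
  · have hp : 0 < τ ^ (N + 2) := by positivity
    have : q t * l * (τ - τ ^ (N + 2)) ≤ q t * l * 1 := mul_le_mul_of_nonneg_left (by linarith) hql
    linarith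

lemma Lad.node_lt {g : ℝ → ℝ} {K : ℕ} {th : ℕ → ℝ} (L : Lad g K th) {i k : ℕ} (hi : i ≤ 2 * K + 1) (hk : k < K)
    (h1 : th (2 * k) < th i) (h2 : th i < th (2 * k + 2)) : i = 2 * k + 1 := by
  by_contra hne
  rcases Nat.lt_or_ge i (2 * k + 1) with h | h
  · have := L.le_of_le (i := i) (j := 2 * k) (by omega) (by omega)
    linarith
  · have := L.le_of_le (i := 2 * k + 2) (j := i) (by omega) (by omega)
    linarith

lemma upper_bound {g : ℝ → ℝ} {K : ℕ} {th : ℕ → ℝ} (L : Lad g K th) (hK : 0 < K) (sM sm : ℕ → Prop) :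
    ∃ f : E2 → ℝ, ContDiff ℝ (⊤ : ℕ∞) f ∧ (∀ t, f (sphPt t) = g t) ∧
      fderiv ℝ f (sphPt (th 0)) (sphPt (th 0)) < 0 ∧
      0 < fderiv ℝ f (sphPt (th (2 * K + 1))) (sphPt (th (2 * K + 1))) ∧
      (∀ k, k < K → (sM k → 0 < fderiv ℝ f (sphPt (th (2 * k + 1))) (sphPt (th (2 * k + 1)))) ∧
        (¬ sM k → fderiv ℝ f (sphPt (th (2 * k + 1))) (sphPt (th (2 * k + 1))) < 0) ∧
        (sm k → fderiv ℝ f (sphPt (th (2 * k + 2))) (sphPt (th (2 * k + 2))) < 0) ∧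
        (¬ sm k → 0 < fderiv ℝ f (sphPt (th (2 * k + 2))) (sphPt (th (2 * k + 2))))) ∧
      (critPts f).encard ≤ {k : ℕ | k < K ∧ (sM k ↔ sm k)}.encard := by
  classical
  obtain ⟨mid, ch, W, hch, hW, hWp, hG1, hG2, hBB, hv0, hv1, hpair⟩ := L.exists_W hK sM sm
  have hGs := GG_smooth (mid := mid) hW hch
  set G : ℝ → ℝ := fun t => W (ee mid ch 1 t) with hGdef
  have hGe : ∀ t, W (ee mid ch 1 t) = G t := fun t => rfl
  simp only [hGe] at hBB hv0 hv1 hpair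
  set B : Finset ℕ := (Finset.range K).filter (fun k => ¬ sM k ∧ ¬ sm k) with hBdef
  have memB : ∀ k, k ∈ B ↔ k < K ∧ ¬ sM k ∧ ¬ sm k := by intro k; simp [hBdef]
  obtain ⟨d, q, N, hd, hq, hqp, q0, q1, qsupp, hk⟩ := L.exists_bump hGs B (fun k h => ((memB k).1 h).1)
    (fun k h => ((hpair k ((memB k).1 h).1).1 ((memB k).1 h).2.2).1)
  obtain ⟨f, c, hc, hf, hfg, hrad, hcrit⟩ := build (N := N) L.smooth L.per hW hq hqp hch hWp q0 hBB (th 0)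
  simp only [hGe] at hrad hcrit
  have hnodeI : ∀ i, i ≤ 2 * K + 1 → th i ∈ Set.Ico (th 0) (th 0 + 2 * Real.pi) := fun i hi =>
    ⟨L.le_of_le (by omega) (by omega), lt_of_le_of_lt (L.le_of_le (j := 2 * K + 1) (by omega) (by omega)) L.last⟩
  have hqz : ∀ i, i ≤ 2 * K + 1 → (∀ k ∈ B, i ≠ 2 * k + 1) → q (th i) = 0 := by
    intro i hi hne
    by_contra h
    obtain ⟨k, hkB, hlt⟩ := qsupp _ (hnodeI i hi) h
    rw [abs_lt] at hlt
    have := hk k hkB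
    exact hne k hkB (L.node_lt hi ((memB k).1 hkB).1 (by linarith [this.1]) (by linarith [this.2.1]))
  have hradz : ∀ i, i ≤ 2 * K + 1 → (∀ k ∈ B, i ≠ 2 * k + 1) →
      fderiv ℝ f (sphPt (th i)) (sphPt (th i)) = c * (g (th i) - G (th i)) := by
    intro i hi hne
    rw [hrad, hqz i hi hne]; ring
  have dG : Differentiable ℝ G := hGs.differentiable (by simp)
  have dg := L.smooth.differentiable (by simp)
  have hGmono : StrictMonoOn G (Set.Icc (th 0) (th (2 * K + 1))) := by
    apply strictMonoOn_of_deriv_pos (convex_Icc _ _) dG.continuous.continuousOn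
    intro t ht
    rw [interior_Icc] at ht
    exact hG1 t ht
  have hin : ∀ k, k < K → th 0 < th (2 * k + 1) ∧ th (2 * k + 1) < th (2 * k + 2) ∧
      th (2 * k + 2) < th (2 * K + 1) := fun k hk =>
    ⟨L.lt_of_lt (by omega) (by omega), L.lt_of_lt (by omega) (by omega), L.lt_of_lt (by omega) (by omega)⟩
  -- the classification
  set R : ℕ → ℝ → Prop := fun k t => (k ∈ B ∧ |t - th (2 * k + 1)| ≤ d) ∨
    (k < K ∧ sM k ∧ sm k ∧ t ∈ Set.Ioo (th (2 * k + 1)) (th (2 * k + 2)) ∧ q t = 0) with hR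
  have hclass : ∀ τ t, 0 < τ → τ < 1 → t ∈ Set.Ico (th 0) (th 0 + 2 * Real.pi) →
      PPτ q N τ t * (g t - G t) = 0 →
      PP q N τ t * deriv g t + (1 - PP q N τ t) * deriv G t + PPt q N τ t * (g t - G t) = 0 →
      ∃ k, R k t := by
    intro τ t hτ0 hτ1 ht e1 e2
    by_cases hqt : q t = 0
    · have p1 : PPτ q N τ t = 1 := by simp [PPτ, hqt]
      have p2 : PP q N τ t = τ := by simp [PP, hqt]
      have p3 : PPt q N τ t = 0 := by simp [PPt, deriv_zero_of_min q0 hqt]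
      rw [p1] at e1
      rw [p2, p3] at e2
      have hgG : g t = G t := by linarith
      have hne0 : t ≠ th 0 := by rintro rfl; linarith
      have hne1 : t ≠ th (2 * K + 1) := by rintro rfl; linarith
      have hlt0 : th 0 < t := lt_of_le_of_ne ht.1 hne0.symm
      rcases lt_or_gt_of_ne hne1 with hlt | hlt
      · have hGp := hG1 t ⟨hlt0, hlt⟩
        have hgn : deriv g t < 0 := by
          by_contra h
          push Not at h
          have a1 := mul_nonneg hτ0.le h
          have a2 := mul_pos (sub_pos.2 hτ1) hGp
          linarith
        obtain ⟨k, hkK, htk⟩ : ∃ k, k < K ∧ t ∈ Set.Ioo (th (2 * k + 1)) (th (2 * k + 2)) := by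
          have hmm : ∃ i, i < 2 * K + 1 ∧ th i ≤ t ∧ t < th (i + 1) := by
            have hex : ∃ i, t < th (i + 1) ∧ i < 2 * K + 1 := ⟨2 * K, hlt, by omega⟩
            obtain ⟨h1, h2⟩ := Nat.find_spec hex
            refine ⟨Nat.find hex, h2, ?_, h1⟩
            rcases Nat.eq_zero_or_pos (Nat.find hex) with h | h
            · rw [h]; exact hlt0.le
            · by_contra hcon
              push Not at hcon
              refine Nat.find_min hex (m := Nat.find hex - 1) (by omega) ⟨?_, by omega⟩
              rwa [Nat.sub_add_cancel h]
          obtain ⟨i, hi, h1, h2⟩ := hmm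
          have hni : th i ≠ t := by
            rintro rfl
            have := L.crit i (by omega)
            linarith
          have h1' := lt_of_le_of_ne h1 hni
          rcases Nat.even_or_odd' i with ⟨k, rfl | rfl⟩
          · have := L.up k (by omega) t ⟨h1', h2⟩
            linarith
          · exact ⟨k, by omega, h1', h2⟩
        have hb := hin k hkK
        have ha : g (th (2 * k + 2)) < g t ∧ g t < g (th (2 * k + 1)) := by
          have anti : StrictAntiOn g (Set.Icc (th (2 * k + 1)) (th (2 * k + 2))) := by
            apply strictAntiOn_of_deriv_neg (convex_Icc _ _) dg.continuous.continuousOn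
            intro s hs
            rw [interior_Icc] at hs
            exact L.down k hkK s hs
          exact ⟨anti ⟨htk.1.le, htk.2.le⟩ ⟨hb.2.1.le, le_rfl⟩ htk.2, anti ⟨le_rfl, hb.2.1.le⟩ ⟨htk.1.le, htk.2.le⟩ htk.1⟩
        have hm1 : G (th (2 * k + 1)) < G t := hGmono ⟨hb.1.le, (hb.2.1.trans hb.2.2).le⟩ ⟨hlt0.le, hlt.le⟩ htk.1
        have hm2 : G t < G (th (2 * k + 2)) := hGmono ⟨hlt0.le, hlt.le⟩ ⟨(hb.1.trans hb.2.1).le, hb.2.2.le⟩ htk.2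
        obtain ⟨c1, c2, c3⟩ := hpair k hkK
        refine ⟨k, Or.inr ?_⟩
        by_cases hsm : sm k
        · by_cases hsM : sM k
          · exact ⟨hkK, hsM, hsm, htk, hqt⟩
          · have := (c2 hsm hsM).1
            linarith
        · have := (c1 hsm).2
          linarith
      · exfalso
        have a1 := hG2 t ⟨hlt, ht.2⟩
        have a2 := L.down_last t ⟨hlt, ht.2⟩
        have a3 := mul_neg_of_pos_of_neg hτ0 a2
        have a4 := mul_neg_of_pos_of_neg (sub_pos.2 hτ1) a1
        linarith
    · obtain ⟨k, hkB, hkt⟩ := qsupp t ht hqt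
      refine ⟨k, Or.inl ⟨hkB, ?_⟩⟩
      obtain ⟨b1, b2, b3, b4, b5, b6, b7, b8⟩ := hk k hkB
      have hkK := ((memB k).1 hkB).1
      have hb := hin k hkK
      have hmem : t ∈ Set.Icc (th (2 * k + 1) - 2 * d) (th (2 * k + 1) + 2 * d) := by
        rw [abs_lt] at hkt; constructor <;> linarith
      have hgG := b6 t hmem
      have hPz : PPτ q N τ t = 0 := (mul_eq_zero.1 e1).resolve_right (by linarith)
      obtain ⟨P1, P2⟩ := PP_bounds hτ0 hτ1 (q0 t) (q1 t) hPz
      have h2k : th 0 ≤ th (2 * k) := L.le_of_le (by omega) (by omega)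
      have hGp : 0 < deriv G t := hG1 t ⟨by linarith [hmem.1], by linarith [hmem.2]⟩
      have hl : 0 < 2 / ((N : ℝ) + 1) := by positivity
      have hττ : 0 ≤ τ - τ ^ (N + 2) := by
        have : τ ^ (N + 2) ≤ τ ^ 1 := pow_le_pow_of_le_one hτ0.le hτ1.le (by omega)
        rw [pow_one] at this; linarith
      by_contra hcon
      rw [abs_le, not_and_or] at hcon
      push Not at hcon
      rcases hcon with h | h
      · have a1 := b7 t ⟨hmem.1, by linarith⟩
        have a2 := b4 t ⟨hmem.1, by linarith⟩
        have a3 : 0 ≤ PPt q N τ t * (g t - G t) := by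
          unfold PPt
          exact mul_nonneg (mul_nonneg (mul_nonneg a2 hl.le) hττ) (by linarith)
        have a4 : 0 < deriv g t := lt_trans (mul_pos hl hGp) a1
        have a5 := mul_le_mul_of_nonneg_right P1 a4.le
        have a6 := mul_le_mul_of_nonneg_right P2 hGp.le
        linarith
      · have a2 := b5 t ⟨by linarith, hmem.2⟩
        have a3 : PPt q N τ t * (g t - G t) ≤ 0 := by
          unfold PPt
          exact mul_nonpos_of_nonpos_of_nonneg (mul_nonpos_of_nonpos_of_nonneg
            (mul_nonpos_of_nonpos_of_nonneg a2 hl.le) hττ) (by linarith)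
        have a4 : deriv g t < 0 := L.down k hkK t ⟨by linarith, by linarith [hmem.2]⟩
        have a5 := mul_le_mul_of_nonpos_right P1 a4.le
        have a6 := mul_le_mul_of_nonneg_right P1 hGp.le
        linarith
  have huniq : ∀ k τ t τ' t', 0 < τ → τ < 1 → 0 < τ' → τ' < 1 → R k t → R k t' →
      PPτ q N τ t * (g t - G t) = 0 →
      PP q N τ t * deriv g t + (1 - PP q N τ t) * deriv G t + PPt q N τ t * (g t - G t) = 0 →
      PPτ q N τ' t' * (g t' - G t') = 0 →
      PP q N τ' t' * deriv g t' + (1 - PP q N τ' t') * deriv G t' + PPt q N τ' t' * (g t' - G t') = 0 →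
      τ = τ' ∧ t = t' := by
    intro k τ t τ' t' hτ0 hτ1 hτ0' hτ1' hRt hRt' e1 e2 e1' e2'
    rcases hRt with ⟨hkB, hkt⟩ | ⟨hkK, hsM, hsm, htk, hqt⟩
    · rcases hRt' with ⟨_, hkt'⟩ | ⟨_, hsM, _⟩
      swap
      · exact absurd hsM ((memB k).1 hkB).2.1
      obtain ⟨b1, b2, b3, b4, b5, b6, b7, b8⟩ := hk k hkB
      have key : ∀ τ t, 0 < τ → |t - th (2 * k + 1)| ≤ d → PPτ q N τ t * (g t - G t) = 0 →
        PP q N τ t * deriv g t + (1 - PP q N τ t) * deriv G t + PPt q N τ t * (g t - G t) = 0 →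
        ((N : ℝ) + 2) * τ ^ (N + 1) * (2 / ((N : ℝ) + 1)) = 1 + 2 / ((N : ℝ) + 1) ∧
        PPτ q N τ t = 0 ∧
        PP q N τ t = τ + 2 / ((N : ℝ) + 1) * (τ - τ ^ (N + 2)) ∧
        PP q N τ t * deriv g t + (1 - PP q N τ t) * deriv G t = 0 ∧
        t ∈ Set.Icc (th (2 * k + 1) - d) (th (2 * k + 1) + d) := by
        intro τ t h0 ht e1 e2
        have hq1 := b3 t ht
        rw [abs_le] at ht
        have hgG := b6 t ⟨by linarith [ht.1], by linarith [ht.2]⟩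
        have hPz : PPτ q N τ t = 0 := (mul_eq_zero.1 e1).resolve_right (by linarith)
        have hp3 : PPt q N τ t = 0 := by simp [PPt, deriv_zero_of_max q1 hq1]
        refine ⟨?_, hPz, by simp [PP, hq1], ?_, ⟨by linarith [ht.1], by linarith [ht.2]⟩⟩
        · unfold PPτ at hPz
          rw [hq1] at hPz
          linarith
        · rw [hp3] at e2; linarith
      obtain ⟨k1, z1, k2, k3, k4⟩ := key τ t hτ0 hkt e1 e2
      obtain ⟨k1', z1', k2', k3', k4'⟩ := key τ' t' hτ0' hkt' e1' e2'
      have hl : 0 < 2 / ((N : ℝ) + 1) := by positivity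
      have hττ : τ = τ' := by
        have hN2 : 0 < (N : ℝ) + 2 := by positivity
        have h1 : τ ^ (N + 1) = τ' ^ (N + 1) := by
          have h2 := k1.trans k1'.symm
          have h3 := mul_right_cancel₀ hl.ne' h2
          exact mul_left_cancel₀ hN2.ne' h3
        exact (pow_left_inj₀ hτ0.le hτ0'.le (Nat.succ_ne_zero N)).1 h1
      refine ⟨hττ, ?_⟩
      subst hττ
      obtain ⟨P1, P2⟩ := PP_bounds hτ0 hτ1 (q0 t) (q1 t) z1
      rw [k2'] at k3'
      rw [k2] at k3 P1 P2
      generalize τ + 2 / ((N : ℝ) + 1) * (τ - τ ^ (N + 2)) = P at *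
      have hanti : StrictAntiOn (fun t => P * deriv g t + (1 - P) * deriv G t)
          (Set.Icc (th (2 * k + 1) - d) (th (2 * k + 1) + d)) := by
        have hdd : ∀ s, HasDerivAt (fun t => P * deriv g t + (1 - P) * deriv G t)
            (P * deriv (deriv g) s + (1 - P) * deriv (deriv G) s) s := fun s =>
          ((((deriv_smooth L.smooth).differentiable (by simp) s).hasDerivAt).const_mul P).add
            ((((deriv_smooth hGs).differentiable (by simp) s).hasDerivAt).const_mul (1 - P))
        apply strictAntiOn_of_deriv_neg (convex_Icc _ _)
        · exact fun s _ => (hdd s).continuousAt.continuousWithinAt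
        · intro s hs
          rw [interior_Icc] at hs
          rw [(hdd s).deriv]
          have a1 := b8 s ⟨hs.1.le, hs.2.le⟩
          have a2 : (1 - P) * deriv (deriv G) s ≤ 2 / ((N : ℝ) + 1) * |deriv (deriv G) s| := by
            calc (1 - P) * deriv (deriv G) s ≤ |(1 - P) * deriv (deriv G) s| := le_abs_self _
              _ = (P - 1) * |deriv (deriv G) s| := by
                rw [abs_mul, abs_of_nonpos (by linarith : 1 - P ≤ 0)]; ring
              _ ≤ _ := mul_le_mul_of_nonneg_right (by linarith) (abs_nonneg _)
          have a3 : deriv (deriv g) s < 0 := by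
            have : 0 ≤ 2 / ((N : ℝ) + 1) * |deriv (deriv G) s| := by positivity
            linarith
          have a4 := mul_le_mul_of_nonpos_right P1 a3.le
          linarith
      exact hanti.injOn k4 k4' (k3.trans k3'.symm)
    · rcases hRt' with ⟨hkB, hkt'⟩ | ⟨_, _, _, htk', hqt'⟩
      · exact absurd hsM ((memB k).1 hkB).2.1
      have hb := hin k hkK
      have key : ∀ τ t, q t = 0 → PPτ q N τ t * (g t - G t) = 0 →
        PP q N τ t * deriv g t + (1 - PP q N τ t) * deriv G t + PPt q N τ t * (g t - G t) = 0 →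
        g t = G t ∧ τ * deriv g t + (1 - τ) * deriv G t = 0 := by
        intro τ t hqt e1 e2
        have p1 : PPτ q N τ t = 1 := by simp [PPτ, hqt]
        have p2 : PP q N τ t = τ := by simp [PP, hqt]
        have p3 : PPt q N τ t = 0 := by simp [PPt, deriv_zero_of_min q0 hqt]
        rw [p1] at e1
        rw [p2, p3] at e2
        exact ⟨by linarith, by linarith⟩
      obtain ⟨k1, k2⟩ := key τ t hqt e1 e2
      obtain ⟨k1', k2'⟩ := key τ' t' hqt' e1' e2'
      have anti : StrictAntiOn g (Set.Icc (th (2 * k + 1)) (th (2 * k + 2))) := by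
        apply strictAntiOn_of_deriv_neg (convex_Icc _ _) dg.continuous.continuousOn
        intro s hs
        rw [interior_Icc] at hs
        exact L.down k hkK s hs
      have hsub : ∀ s ∈ Set.Ioo (th (2 * k + 1)) (th (2 * k + 2)), s ∈ Set.Icc (th 0) (th (2 * K + 1)) :=
        fun s hs => ⟨by linarith [hs.1], by linarith [hs.2]⟩
      have hord : ∀ s ∈ Set.Ioo (th (2 * k + 1)) (th (2 * k + 2)), ∀ s' ∈ Set.Ioo (th (2 * k + 1)) (th (2 * k + 2)),
          g s = G s → g s' = G s' → ¬ s < s' := by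
        intro s hs s' hs' u1 u2 hlt
        have v1 := hGmono (hsub s hs) (hsub s' hs') hlt
        have v2 := anti ⟨hs.1.le, hs.2.le⟩ ⟨hs'.1.le, hs'.2.le⟩ hlt
        linarith
      have htt : t = t' := le_antisymm (not_lt.1 (hord t' htk' t htk k1' k1)) (not_lt.1 (hord t htk t' htk' k1 k1'))
      refine ⟨?_, htt⟩
      subst htt
      have a1 := L.down k hkK t htk
      have a2 : 0 < deriv G t := hG1 t ⟨by linarith [htk.1], by linarith [htk.2]⟩
      have a3 : (τ - τ') * (deriv g t - deriv G t) = 0 := by linear_combination k2 - k2'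
      have := (mul_eq_zero.1 a3).resolve_right (by linarith)
      linarith
  refine ⟨f, hf, hfg, ?_, ?_, ?_, ?_⟩
  · rw [hradz 0 (by omega) (fun k _ => by omega)]
    exact mul_neg_of_pos_of_neg hc (by linarith)
  · rw [hradz (2 * K + 1) (by omega) (fun k hk => by have := ((memB k).1 hk).1; omega)]
    exact mul_pos hc (by linarith)
  · intro k hkK
    obtain ⟨c1, c2, c3⟩ := hpair k hkK
    have hm := hradz (2 * k + 2) (by omega) (fun j _ => by omega)
    rw [hm]
    have hM : k ∉ B → fderiv ℝ f (sphPt (th (2 * k + 1))) (sphPt (th (2 * k + 1))) =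
        c * (g (th (2 * k + 1)) - G (th (2 * k + 1))) := by
      intro hnB
      refine hradz (2 * k + 1) (by omega) (fun j hj h => hnB ?_)
      obtain rfl : k = j := by omega
      exact hj
    refine ⟨fun h => ?_, fun h => ?_, fun h => ?_, fun h => ?_⟩
    · rw [hM (fun hb => ((memB k).1 hb).2.1 h)]
      apply mul_pos hc
      by_cases hs : sm k
      · linarith [(c3 hs h).1]
      · linarith [(c1 hs).1]
    · by_cases hs : sm k
      · rw [hM (fun hb => ((memB k).1 hb).2.2 hs)]
        exact mul_neg_of_pos_of_neg hc (by linarith [(c2 hs h).1])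
      · have hkB : k ∈ B := (memB k).2 ⟨hkK, h, hs⟩
        rw [hrad, (hk k hkB).2.2.1 _ (by simpa using hd.le)]
        have := (c1 hs).1
        apply mul_neg_of_pos_of_neg hc
        linarith
    · apply mul_neg_of_pos_of_neg hc
      by_cases hs : sM k
      · linarith [(c3 h hs).2]
      · linarith [(c2 h hs).2]
    · apply mul_pos hc
      linarith [(c1 h).2]
  · have hch2 : ∀ x : E2, ∃ k : ℕ, x ∈ critPts f → ∃ r t, 1 / 4 < r ∧ x = r • sphPt t ∧
        0 < TT r ∧ TT r < 1 ∧ R k t ∧ PPτ q N (TT r) t * (g t - G t) = 0 ∧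
        PP q N (TT r) t * deriv g t + (1 - PP q N (TT r) t) * deriv G t + PPt q N (TT r) t * (g t - G t) = 0 := by
      intro x
      by_cases hx : x ∈ critPts f
      · obtain ⟨r, t, h1, h2, h3, h4, h5, h6, h7⟩ := hcrit x hx
        obtain ⟨k, hRk⟩ := hclass (TT r) t h4 h5 h2 h6 h7
        exact ⟨k, fun _ => ⟨r, t, h1, h3, h4, h5, hRk, h6, h7⟩⟩
      · exact ⟨0, fun h => absurd h hx⟩
    choose idx hidx using hch2
    refine Set.encard_le_encard_of_injOn (f := idx) ?_ ?_
    · intro x hx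
      obtain ⟨r, t, h1, h3, h4, h5, hRk, h6, h7⟩ := hidx x hx
      rcases hRk with ⟨hkB, _⟩ | ⟨hkK, hsM, hsm, _⟩
      · have := (memB _).1 hkB
        exact ⟨this.1, iff_of_false this.2.1 this.2.2⟩
      · exact ⟨hkK, iff_of_true hsM hsm⟩
    · intro x hx y hy hxy
      obtain ⟨r, t, h1, h3, h4, h5, hRk, h6, h7⟩ := hidx x hx
      obtain ⟨r', t', h1', h3', h4', h5', hRk', h6', h7'⟩ := hidx y hy
      rw [← hxy] at hRk'
      obtain ⟨u1, u2⟩ := huniq _ _ _ _ _ h4 h5 h4' h5' hRk hRk' h6 h7 h6' h7'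
      have u3 : r = r' := TT_mono.injOn h1.le h1'.le u1
      rw [h3, h3', u2, u3]


def nuN {n : ℕ} (a : Ribbon n) (i : ℕ) : ℤ := if h : i < n then a.ν ⟨i, h⟩ else 1

lemma inner_grad (f : E2 → ℝ) (p : E2) : ⟪gradient f p, p⟫ = fderiv ℝ f p p := by
  simp [gradient]

lemma nu_card {n K : ℕ} (hn : n = 2 * K + 2) (a : Ribbon n) :
    ((Finset.Icc 1 (n / 2 - 1)).filter (fun k : ℕ =>
      a.ν ⟨(2 * k - 1) % n, Nat.mod_lt _ (by omega)⟩ =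
        a.ν ⟨(2 * k) % n, Nat.mod_lt _ (by omega)⟩)).card =
    ((Finset.range K).filter (fun k => nuN a (2 * k + 1) = nuN a (2 * k + 2))).card := by
  have key : ∀ k, k < K → ((a.ν ⟨(2 * (k + 1) - 1) % n, Nat.mod_lt _ (by omega)⟩ =
        a.ν ⟨(2 * (k + 1)) % n, Nat.mod_lt _ (by omega)⟩) ↔
        nuN a (2 * k + 1) = nuN a (2 * k + 2)) := by
    intro k hk
    have h1 : 2 * k + 1 < n := by omega
    have h2 : 2 * k + 2 < n := by omega
    have e1 : (2 * (k + 1) - 1) % n = 2 * k + 1 := by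
      rw [show 2 * (k + 1) - 1 = 2 * k + 1 by omega]; exact Nat.mod_eq_of_lt h1
    have e2 : (2 * (k + 1)) % n = 2 * k + 2 := by
      rw [show 2 * (k + 1) = 2 * k + 2 by omega]; exact Nat.mod_eq_of_lt h2
    simp only [nuN, h1, h2, dif_pos]
    rw [show (⟨(2 * (k + 1) - 1) % n, Nat.mod_lt _ (by omega)⟩ : Fin n) = ⟨2 * k + 1, h1⟩ from
      Fin.ext e1, show (⟨(2 * (k + 1)) % n, Nat.mod_lt _ (by omega)⟩ : Fin n) = ⟨2 * k + 2, h2⟩ from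
      Fin.ext e2]
  symm
  apply Finset.card_bij (fun k _ => k + 1)
  · intro k hk
    rw [Finset.mem_filter, Finset.mem_range] at hk
    rw [Finset.mem_filter, Finset.mem_Icc]
    exact ⟨by omega, (key k hk.1).2 hk.2⟩
  · intro x _ y _ h
    exact Nat.succ_injective h
  · intro k hk
    rw [Finset.mem_filter, Finset.mem_Icc] at hk
    obtain ⟨j, rfl⟩ : ∃ j, k = j + 1 := ⟨k - 1, by omega⟩
    have hj : j < K := by omega
    refine ⟨j, ?_, rfl⟩
    rw [Finset.mem_filter, Finset.mem_range]
    exact ⟨hj, (key j hj).1 hk.2⟩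

lemma nuN_sign {n : ℕ} (a : Ribbon n) (i : ℕ) : nuN a i = 1 ∨ nuN a i = -1 := by
  unfold nuN
  split_ifs with h
  · exact a.nu_sign _
  · exact Or.inl rfl

lemma gamma_le {n K : ℕ} (hn : n = 2 * K + 2) (hK : 0 < K) (a : Ribbon n)
    (L : Lad a.g K (thN a)) (h0 : nuN a 0 = 1) (h1 : nuN a (2 * K + 1) = 1) :
    gammaR a ≤ (((Finset.range K).filter
      (fun k => nuN a (2 * k + 1) = nuN a (2 * k + 2))).card : ℕ∞) := by
  obtain ⟨f, hf, hfg, r0, r1, hr, hc⟩ := upper_bound L hK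
    (fun k => nuN a (2 * k + 1) = 1) (fun k => nuN a (2 * k + 2) = 1)
  have hset : {k | k < K ∧ (nuN a (2 * k + 1) = 1 ↔ nuN a (2 * k + 2) = 1)} =
      (((Finset.range K).filter
      (fun k => nuN a (2 * k + 1) = nuN a (2 * k + 2)) : Finset ℕ) : Set ℕ) := by
    ext k
    simp only [Finset.coe_filter, Finset.mem_range, Set.mem_ofPred_eq]
    refine and_congr_right fun _ => ?_
    rcases nuN_sign a (2 * k + 1) with h | h <;> rcases nuN_sign a (2 * k + 2) with h' | h' <;>
      simp [h, h']
  rw [hset, Set.encard_coe_eq_coe_finsetCard] at hc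
  have hev : ∀ k, k ≤ K →
      (nuN a (2 * k) : ℝ) * fderiv ℝ f (sphPt (thN a (2 * k))) (sphPt (thN a (2 * k))) < 0 := by
    intro k hk
    rcases Nat.eq_zero_or_pos k with rfl | hp
    · simpa [h0] using r0
    · obtain ⟨j, rfl⟩ : ∃ j, k = j + 1 := ⟨k - 1, by omega⟩
      have := (hr j (by omega)).2.2
      rw [show 2 * (j + 1) = 2 * j + 2 by ring]
      rcases nuN_sign a (2 * j + 2) with h | h
      · rw [h]; simpa using this.1 h
      · have h2 := this.2 (by rw [h]; norm_num)
        rw [h]; push_cast; linarith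
  have hod : ∀ k, k ≤ K → 0 <
      (nuN a (2 * k + 1) : ℝ) * fderiv ℝ f (sphPt (thN a (2 * k + 1))) (sphPt (thN a (2 * k + 1))) := by
    intro k hk
    rcases hk.eq_or_lt with rfl | hp
    · simpa [h1] using r1
    · have := hr k hp
      rcases nuN_sign a (2 * k + 1) with h | h
      · rw [h]; simpa using this.1 h
      · have h2 := this.2.1 (by rw [h]; norm_num)
        rw [h]; push_cast; linarith
  refine le_trans (sInf_le ⟨f, ⟨hf, hfg, ?_, ?_⟩, rfl⟩) hc
  · intro x hx h
    rw [mem_sphere_zero_iff_norm] at hx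
    obtain ⟨t, ht, rfl⟩ := exists_angle (thN a 0) hx
    have h2 := tang_deriv hf hfg t
    rw [h, zero_apply] at h2
    obtain ⟨i, hi, rfl⟩ := L.node_of_crit ht h2.symm
    rcases Nat.even_or_odd' i with ⟨k, rfl | rfl⟩
    · have := hev k (by omega)
      rw [h] at this; simp at this
    · have := hod k (by omega)
      rw [h] at this; simp at this
  · intro ⟨i, hi⟩
    have e1 : a.θ ⟨i, hi⟩ = thN a i := by simp [thN, hi]
    have e2 : a.ν ⟨i, hi⟩ = nuN a i := by simp [nuN, hi]
    rw [inner_grad, e1, e2]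
    rcases Nat.even_or_odd' i with ⟨k, rfl | rfl⟩
    · have hk : k ≤ K := by omega
      exact ⟨fun h => absurd h (L.snd_even k hk).not_gt, fun _ => hev k hk⟩
    · have hk : k ≤ K := by omega
      exact ⟨fun _ => hod k hk, fun h => absurd h (L.snd_odd k hk).not_gt⟩

lemma le_gamma {n K : ℕ} (hn : n = 2 * K + 2) (a : Ribbon n)
    (L : Lad a.g K (thN a)) :
    (((Finset.range K).filter
      (fun k => nuN a (2 * k + 1) = nuN a (2 * k + 2))).card : ℕ∞) ≤ gammaR a := by
  refine le_sInf ?_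
  rintro _ ⟨f, ⟨hf, hfg, -, hs⟩, rfl⟩
  refine lower_bound L hf hfg _ (fun k hk => ?_) (fun k hk => ?_)
  · rw [Finset.mem_filter, Finset.mem_range] at hk; exact hk.1
  · rw [Finset.mem_filter, Finset.mem_range] at hk
    obtain ⟨hk, he⟩ := hk
    have i1 : 2 * k + 1 < n := by omega
    have i2 : 2 * k + 2 < n := by omega
    have a1 := (hs ⟨2 * k + 1, i1⟩).1
    have a2 := (hs ⟨2 * k + 2, i2⟩).2
    rw [inner_grad, show a.θ ⟨2 * k + 1, i1⟩ = thN a (2 * k + 1) by simp [thN, i1],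
      show a.ν ⟨2 * k + 1, i1⟩ = nuN a (2 * k + 1) by simp [nuN, i1]] at a1
    rw [inner_grad, show a.θ ⟨2 * k + 2, i2⟩ = thN a (2 * k + 2) by simp [thN, i2],
      show a.ν ⟨2 * k + 2, i2⟩ = nuN a (2 * k + 2) by simp [nuN, i2]] at a2
    have b1 := a1 (L.snd_odd k hk.le)
    have b2 := a2 (L.snd_even (k + 1) hk)
    rw [← he] at b2
    rcases nuN_sign a (2 * k + 1) with h | h <;> rw [h] at b1 b2 <;> push_cast at b1 b2
    · left; constructor <;> linarith
    · right; constructor <;> linarith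

/-- Let `a` be a ladder with `n ≥ 4` nodes (its levels, listed in increasing order, realize
the zig-zag permutation `(1, 3, 2, 5, 4, …, n−2, n)`), whose value-minimal node `p 1` and
value-maximal node `p n` are positive. Then `γ(a)` equals the number of indices
`k ∈ {1, …, n/2 − 1}` with `ν (p (2k)) = ν (p (2k+1))` (1-indexed). -/
theorem stmt_19 (n : ℕ) (hn : 4 ≤ n) (a : Ribbon n)
    (hladder : StrictMono (fun j : Fin n => a.g (a.θ (zigFin n j))))
    (hmin : a.ν ⟨0, by omega⟩ = 1) (hmax : a.ν ⟨n - 1, by omega⟩ = 1) :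
    gammaR a = ((((Finset.Icc 1 (n / 2 - 1)).filter (fun k : ℕ =>
      a.ν ⟨(2 * k - 1) % n, Nat.mod_lt _ (by omega)⟩ =
        a.ν ⟨(2 * k) % n, Nat.mod_lt _ (by omega)⟩)).card : ℕ) : ℕ∞) := by
  obtain ⟨m, hm⟩ := a.n_even
  obtain ⟨K, rfl⟩ : ∃ K, m = K + 1 := ⟨m - 1, by omega⟩
  have hn2 : n = 2 * K + 2 := by omega
  have hK : 0 < K := by omega
  have L := ribbon_lad hn2 hK a hladder
  rw [nu_card hn2 a]
  refine le_antisymm (gamma_le hn2 hK a L ?_ ?_) (le_gamma hn2 a L)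
  · simpa [nuN, show 0 < n by omega] using hmin
  · have h1 : 2 * K + 1 < n := by omega
    rw [nuN, dif_pos h1, ← hmax]
    congr 1
    exact Fin.ext (by simp; omega)
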